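/- arXiv:math-ph/0302049 — 5 statements merged into one kernel-verified Lean document; each statement's English description precedes it below -/
import Mathlib

section
/- Density formula: let Λ(W) be a regular model set arising from a cut-and-project scheme with lattice L̃ ⊂ ℝ^d × ℝ^m (π₁|_{L̃} injective, π₂(L̃) dense), where W ⊂ ℝ^m is compact with W equal to the closure of its interior and ∂W of Lebesgue measure zero. Then for every a ∈ ℝ^d and u ∈ ℝ^m, (1/vol(B_r(0))) · #(Λ(W+u) ∩ B_r(a)) → vol(W)/|det(L̃)| as r → ∞, and the convergence is uniform in a and u. -/
open MeasureTheory Metric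

open scoped ENNReal in
/-- Unfolding: the mean number of lattice points in translates of `S`. -/
theorem aux_unfold {E : Type*} [NormedAddCommGroup E] [NormedSpace ℝ E] [FiniteDimensional ℝ E]
    [MeasurableSpace E] [BorelSpace E] (μ : Measure E) [μ.IsAddHaarMeasure]
    (L : Submodule ℤ E) [DiscreteTopology L] [IsZLattice ℝ L] {F : Set E}
    (hF : IsAddFundamentalDomain L F μ) {S : Set E} (hS : MeasurableSet S) :
    ∫⁻ v in F, (({p : L | (p : E) - v ∈ S}.encard : ℕ∞) : ℝ≥0∞) ∂μ = μ S := by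
  have : MeasurableVAdd L E := (inferInstance : MeasurableVAdd L.toAddSubgroup E)
  have : VAddInvariantMeasure L E μ := (inferInstance : VAddInvariantMeasure L.toAddSubgroup E μ)
  have h1 : ∀ v : E, (({p : L | (p : E) - v ∈ S}.encard : ℕ∞) : ℝ≥0∞) =
      ∑' p : L, ((fun v : E => (p : E) - v) ⁻¹' S).indicator (fun _ => (1 : ℝ≥0∞)) v := by
    intro v
    rw [← ENNReal.tsum_set_one]
    exact tsum_subtype {p : L | (p : E) - v ∈ S} (fun _ => (1 : ℝ≥0∞))
  have hm : ∀ p : L, MeasurableSet ((fun v : E => (p : E) - v) ⁻¹' S) := fun p =>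
    hS.preimage (by fun_prop)
  simp_rw [h1]
  rw [lintegral_tsum (fun p => (measurable_const.indicator (hm p)).aemeasurable)]
  rw [← Measure.measure_neg μ S, hF.measure_eq_tsum]
  congr 1
  ext p
  rw [lintegral_indicator (hm p), setLIntegral_one, Measure.restrict_apply (hm p)]
  congr 2
  ext v
  simp only [Set.mem_preimage, Set.mem_vadd_set_iff_neg_vadd_mem, Set.mem_neg]
  have : -(-p +ᵥ v) = (p : E) - v := by
    rw [Submodule.vadd_def, vadd_eq_add]; simp; abel
  rw [this]

/-- Relative denseness: `L + B_R × B_δ` is everything. -/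
theorem aux_dense (d m : ℕ)
    (L : Submodule ℤ (EuclideanSpace ℝ (Fin d) × EuclideanSpace ℝ (Fin m)))
    [DiscreteTopology L] [IsZLattice ℝ L]
    (hdense2 : Dense (Prod.snd '' (L : Set (EuclideanSpace ℝ (Fin d) × EuclideanSpace ℝ (Fin m)))))
    (δ : ℝ) (hδ : 0 < δ) :
    ∃ R : ℝ, 0 ≤ R ∧ ∀ v : EuclideanSpace ℝ (Fin d) × EuclideanSpace ℝ (Fin m),
      ∃ p ∈ L, ‖v.1 - p.1‖ ≤ R ∧ ‖v.2 - p.2‖ ≤ δ := by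
  classical
  let b := Module.Free.chooseBasis ℤ L
  let b' := b.ofZLatticeBasis ℝ
  have hspan : Submodule.span ℤ (Set.range b') = L := b.ofZLatticeBasis_span ℝ
  set R0 : ℝ := ∑ i, ‖b' i‖ with hR0
  have hR0n : 0 ≤ R0 := Finset.sum_nonneg fun _ _ => norm_nonneg _
  have hK : IsCompact (closedBall (0 : EuclideanSpace ℝ (Fin m)) R0) := isCompact_closedBall _ _
  obtain ⟨t, ht⟩ := hK.elim_finite_subcover (fun p : L => ball p.1.2 δ)
    (fun _ => isOpen_ball) (by
      intro x _
      obtain ⟨y, ⟨p, hp, rfl⟩, hy⟩ := hdense2.exists_dist_lt x hδ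
      exact Set.mem_iUnion.2 ⟨⟨p, hp⟩, hy⟩)
  refine ⟨R0 + ∑ p ∈ t, ‖p.1.1‖, by exact add_nonneg hR0n (Finset.sum_nonneg fun _ _ => norm_nonneg _), fun v => ?_⟩
  have hf : ‖ZSpan.fract b' v‖ ≤ R0 := ZSpan.norm_fract_le b' v
  have hq : ((ZSpan.floor b' v : _ ) : EuclideanSpace ℝ (Fin d) × EuclideanSpace ℝ (Fin m)) ∈ L := by
    exact hspan.le (ZSpan.floor b' v).2
  set q := ((ZSpan.floor b' v : _ ) : EuclideanSpace ℝ (Fin d) × EuclideanSpace ℝ (Fin m)) with hqd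
  have hfr : ZSpan.fract b' v = v - q := rfl
  rw [hfr] at hf
  have hf1 : ‖v.1 - q.1‖ ≤ R0 := (norm_fst_le (v - q)).trans hf
  have hf2 : ‖v.2 - q.2‖ ≤ R0 := (norm_snd_le (v - q)).trans hf
  have := ht (show v.2 - q.2 ∈ closedBall 0 R0 by simpa using hf2)
  simp only [Set.mem_iUnion] at this
  obtain ⟨p, hpt, hp⟩ := this
  refine ⟨q + p.1, L.add_mem hq p.2, ?_, ?_⟩
  · have h1 : v.1 - (q + p.1).1 = (v.1 - q.1) - p.1.1 := by
      simp; abel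
    rw [h1]
    refine (norm_sub_le _ _).trans (add_le_add hf1 ?_)
    exact Finset.single_le_sum (f := fun p : L => ‖p.1.1‖)
      (fun _ _ => norm_nonneg _) hpt
  · have h1 : v.2 - (q + p.1).2 = (v.2 - q.2) - p.1.2 := by
      simp; abel
    rw [h1, ← dist_eq_norm]
    exact (mem_ball.1 hp).le

/-- Comparison of counts. -/
theorem aux_compare (d m : ℕ)
    (L : Submodule ℤ (EuclideanSpace ℝ (Fin d) × EuclideanSpace ℝ (Fin m)))
    (δ R r : ℝ) (hR : ∀ v : EuclideanSpace ℝ (Fin d) × EuclideanSpace ℝ (Fin m),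
      ∃ p ∈ L, ‖v.1 - p.1‖ ≤ R ∧ ‖v.2 - p.2‖ ≤ δ)
    (K : Set (EuclideanSpace ℝ (Fin m)))
    (v w : EuclideanSpace ℝ (Fin d) × EuclideanSpace ℝ (Fin m)) :
    {p : L | p.1 - v ∈ closedBall 0 r ×ˢ K}.encard ≤
    {p : L | p.1 - w ∈ closedBall 0 (r + R) ×ˢ cthickening δ K}.encard := by
  obtain ⟨q, hq, h1, h2⟩ := hR (w - v)
  have hinj : Function.Injective (fun p : L => p + ⟨q, hq⟩) := add_left_injective _
  rw [← hinj.encard_image]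
  apply Set.encard_le_encard
  rintro _ ⟨p, ⟨hp1, hp2⟩, rfl⟩
  refine ⟨?_, ?_⟩
  · rw [mem_closedBall_zero_iff] at hp1 ⊢
    have : ((p + (⟨q, hq⟩ : L) : L).1 - w).1 =
      (p.1 - v).1 - ((w - v).1 - q.1) := by simp; abel
    rw [this]
    exact (norm_sub_le _ _).trans (add_le_add hp1 h1)
  · refine mem_cthickening_of_dist_le _ _ _ _ hp2 ?_
    have : ((p + (⟨q, hq⟩ : L) : L).1 - w).2 =
      (p.1 - v).2 - ((w - v).2 - q.2) := by simp; abel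
    rw [this, dist_eq_norm, sub_sub_cancel_left, norm_neg]
    exact h2

theorem aux_count (d m : ℕ)
    (L : Submodule ℤ (EuclideanSpace ℝ (Fin d) × EuclideanSpace ℝ (Fin m)))
    (hinj1 : Set.InjOn Prod.fst (L : Set (EuclideanSpace ℝ (Fin d) × EuclideanSpace ℝ (Fin m))))
    (star : EuclideanSpace ℝ (Fin d) → EuclideanSpace ℝ (Fin m))
    (hstar : ∀ p ∈ L, star (Prod.fst p) = Prod.snd p)
    (W : Set (EuclideanSpace ℝ (Fin m))) (r : ℝ)
    (a : EuclideanSpace ℝ (Fin d)) (u : EuclideanSpace ℝ (Fin m)) :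
    ({x ∈ Prod.fst '' (L : Set (EuclideanSpace ℝ (Fin d) × EuclideanSpace ℝ (Fin m))) |
            star x ∈ (· + u) '' W} ∩ closedBall a r).encard =
    {p : L | p.1 - (a, u) ∈ closedBall 0 r ×ˢ W}.encard := by
  have hinj : Function.Injective (fun p : L => p.1.1) := fun p q h =>
    Subtype.ext (hinj1 p.2 q.2 h)
  rw [← hinj.encard_image]
  congr 1
  ext x
  constructor
  · rintro ⟨⟨⟨p, hp, rfl⟩, w, hw, hwu⟩, hx⟩
    refine ⟨⟨p, hp⟩, ⟨?_, ?_⟩, rfl⟩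
    · simpa [dist_eq_norm] using hx
    · rw [hstar p hp] at hwu
      have : p.2 - u = w := by rw [← hwu]; simp
      simpa [this] using hw
  · rintro ⟨p, ⟨h1, h2⟩, rfl⟩
    refine ⟨⟨⟨p, p.2, rfl⟩, p.1.2 - u, h2, ?_⟩, ?_⟩
    · rw [hstar p p.2]; simp
    · simpa [dist_eq_norm] using h1

theorem aux_ratio (d : ℕ) (R : ℝ) :
    Filter.Tendsto (fun r : ℝ => (volume (closedBall (0 : EuclideanSpace ℝ (Fin d)) (r + R))).toReal /
      (volume (closedBall (0 : EuclideanSpace ℝ (Fin d)) r)).toReal) Filter.atTop (nhds 1) := by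
  have hB : 0 < (volume (ball (0 : EuclideanSpace ℝ (Fin d)) 1)).toReal :=
    ENNReal.toReal_pos (measure_ball_pos _ _ one_pos).ne' measure_ball_lt_top.ne
  have h : Filter.Tendsto (fun r : ℝ => (1 + R / r) ^ d) Filter.atTop (nhds 1) := by
    have := ((tendsto_const_nhds (x := R)).div_atTop Filter.tendsto_id).const_add (1 : ℝ)
    simpa using this.pow d
  refine h.congr' ?_
  filter_upwards [Filter.eventually_gt_atTop 0, Filter.eventually_ge_atTop (-R)] with r hr hr2
  rw [Measure.addHaar_closedBall _ _ hr.le, Measure.addHaar_closedBall _ _ (by linarith),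
    ENNReal.toReal_mul, ENNReal.toReal_mul, ENNReal.toReal_ofReal (pow_nonneg hr.le _),
    ENNReal.toReal_ofReal (pow_nonneg (by linarith) _)]
  rw [mul_div_mul_right _ _ hB.ne', finrank_euclideanSpace_fin, ← div_pow]
  congr 1
  field_simp

/-- Density formula: for a regular model set, the normalized point
counts in balls converge to vol(W)/|det L̃|, uniformly in the center `a` and the
window translation `u`. -/
theorem density_formula (d m : ℕ)
    (L : Submodule ℤ (EuclideanSpace ℝ (Fin d) × EuclideanSpace ℝ (Fin m)))
    [DiscreteTopology L] [IsZLattice ℝ L]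
    (hinj1 : Set.InjOn Prod.fst (L : Set (EuclideanSpace ℝ (Fin d) × EuclideanSpace ℝ (Fin m))))
    (hdense2 : Dense (Prod.snd '' (L : Set (EuclideanSpace ℝ (Fin d) × EuclideanSpace ℝ (Fin m)))))
    (star : EuclideanSpace ℝ (Fin d) → EuclideanSpace ℝ (Fin m))
    (hstar : ∀ p ∈ L, star (Prod.fst p) = Prod.snd p)
    (W : Set (EuclideanSpace ℝ (Fin m)))
    (hWne : W.Nonempty) (hWc : IsCompact W)
    (hWreg : W = closure (interior W))
    (hWbd : volume (frontier W) = 0) :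
    ∀ ε : ℝ, 0 < ε → ∃ r₀ : ℝ, ∀ r : ℝ, r₀ ≤ r →
      ∀ (a : EuclideanSpace ℝ (Fin d)) (u : EuclideanSpace ℝ (Fin m)),
      |(({x ∈ Prod.fst '' (L : Set (EuclideanSpace ℝ (Fin d) × EuclideanSpace ℝ (Fin m))) |
            star x ∈ (· + u) '' W} ∩ closedBall a r).ncard : ℝ) /
          (volume (closedBall (0 : EuclideanSpace ℝ (Fin d)) r)).toReal -
        (volume W).toReal / ZLattice.covolume L volume| ≤ ε := by
  intro ε hε
  have hHaar : (volume : Measure (EuclideanSpace ℝ (Fin d) ×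
      EuclideanSpace ℝ (Fin m))).IsAddHaarMeasure := by
    rw [Measure.volume_eq_prod]; infer_instance
  have hFd := ZLattice.isAddFundamentalDomain (L := L) (Module.Free.chooseBasis ℤ L) volume
  set F := ZSpan.fundamentalDomain ((Module.Free.chooseBasis ℤ L).ofZLatticeBasis ℝ) with hF
  have hcov : ZLattice.covolume L volume = (volume F).toReal :=
    ZLattice.covolume_eq_measure_fundamentalDomain L volume hFd
  have hc := ZLattice.covolume_pos L volume
  set c := ZLattice.covolume L volume with hcdef
  have hFtop : volume F ≠ ⊤ := (ZSpan.fundamentalDomain_isBounded _).measure_lt_top.ne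
  have hF0 : volume F ≠ 0 := by
    intro h; rw [h] at hcov; simp at hcov; exact hc.ne' hcov
  obtain ⟨δ₁, hδ₁, hW1, hW1top⟩ : ∃ δ : ℝ, 0 < δ ∧
      (volume (cthickening δ W)).toReal < (volume W).toReal + ε * c ∧
      volume (cthickening δ W) ≠ ⊤ := by
    have ht := tendsto_measure_cthickening_of_isCompact (μ := volume) hWc
    have ht2 := (ENNReal.tendsto_toReal hWc.measure_lt_top.ne).comp ht
    have he := ht2.eventually_lt_const (u := (volume W).toReal + ε * c)
      (by have := mul_pos hε hc; linarith)
    have he' := (nhdsWithin_le_nhds (s := Set.Ioi (0:ℝ)) he)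
    obtain ⟨δ, h1, h2⟩ := (Filter.Eventually.and he' self_mem_nhdsWithin).exists
    exact ⟨δ, h2, h1, hWc.cthickening.measure_lt_top.ne⟩
  obtain ⟨K, δ₂, hKc, hδ₂, hKW, hKvol⟩ : ∃ (K : Set (EuclideanSpace ℝ (Fin m))) (δ : ℝ),
      IsCompact K ∧ 0 < δ ∧ cthickening δ K ⊆ W ∧
      (volume W).toReal - ε * c < (volume K).toReal := by
    have hint : volume (interior W) = volume W := by
      apply le_antisymm (measure_mono interior_subset)
      have : W ⊆ interior W ∪ frontier W := by
        rw [← closure_eq_interior_union_frontier]; exact subset_closure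
      calc volume W ≤ volume (interior W ∪ frontier W) := measure_mono this
        _ ≤ volume (interior W) + volume (frontier W) := measure_union_le _ _
        _ = _ := by rw [hWbd, add_zero]
    by_cases hneg : (volume W).toReal - ε * c < 0
    · exact ⟨∅, 1, isCompact_empty, one_pos, by simp, by simpa using hneg⟩
    have hlt : ENNReal.ofReal ((volume W).toReal - ε * c) < volume (interior W) := by
      rw [hint, ENNReal.ofReal_lt_iff_lt_toReal (not_lt.1 hneg) hWc.measure_lt_top.ne]
      have := mul_pos hε hc; linarith
    obtain ⟨K, hKi, hKc, hK⟩ := isOpen_interior.exists_lt_isCompact hlt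
    obtain ⟨δ, hδ, hsub⟩ := hKc.exists_cthickening_subset_open isOpen_interior hKi
    refine ⟨K, δ, hKc, hδ, hsub.trans interior_subset, ?_⟩
    rwa [ENNReal.ofReal_lt_iff_lt_toReal (not_lt.1 hneg) hKc.measure_lt_top.ne] at hK
  obtain ⟨R₁, hR₁0, hR₁⟩ := aux_dense d m L hdense2 δ₁ hδ₁
  obtain ⟨R₂, hR₂0, hR₂⟩ := aux_dense d m L hdense2 δ₂ hδ₂
  have hev1 := ((aux_ratio d R₁).mul_const (volume (cthickening δ₁ W)).toReal).eventually_lt_const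
    (u := (volume W).toReal + ε * c) (by simpa using hW1)
  have hev2 := ((aux_ratio d (-R₂)).mul_const (volume K).toReal).eventually_const_lt
    (u := (volume W).toReal - ε * c) (by simpa using hKvol)
  obtain ⟨r₀, hr₀⟩ := Filter.eventually_atTop.1
    ((hev1.and hev2).and (Filter.eventually_gt_atTop 0))
  refine ⟨r₀, fun r hr a u => ?_⟩
  obtain ⟨⟨h1, h2⟩, hrpos⟩ := hr₀ r hr
  have hV : 0 < (volume (closedBall (0 : EuclideanSpace ℝ (Fin d)) r)).toReal :=
    ENNReal.toReal_pos (measure_closedBall_pos _ _ hrpos).ne' measure_closedBall_lt_top.ne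
  set V := (volume (closedBall (0 : EuclideanSpace ℝ (Fin d)) r)).toReal with hVdef
  rw [Set.ncard_def, aux_count d m L hinj1 star hstar W r a u]
  set N := {p : L | (p : _ × _) - (a, u) ∈ closedBall 0 r ×ˢ W}.encard with hN
  have hvol : ∀ (s : ℝ) (A : Set (EuclideanSpace ℝ (Fin m))), 
      volume ((closedBall (0 : EuclideanSpace ℝ (Fin d)) s) ×ˢ A) =
      volume (closedBall (0 : EuclideanSpace ℝ (Fin d)) s) * volume A := fun s A => by
    rw [Measure.volume_eq_prod, Measure.prod_prod]
  have hup : (N : ENNReal) * volume F ≤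
      volume (closedBall (0 : EuclideanSpace ℝ (Fin d)) (r + R₁)) *
        volume (cthickening δ₁ W) := by
    rw [← hvol, ← aux_unfold volume L hFd
      (measurableSet_closedBall.prod isClosed_cthickening.measurableSet),
      ← setLIntegral_const]
    refine lintegral_mono fun w => ?_
    exact ENat.toENNReal_le.2 (aux_compare d m L δ₁ R₁ r hR₁ W (a, u) w)
  have hlo : volume (closedBall (0 : EuclideanSpace ℝ (Fin d)) (r + -R₂)) * volume K ≤
      (N : ENNReal) * volume F := by
    rw [← hvol, ← aux_unfold volume L hFd
      (measurableSet_closedBall.prod hKc.isClosed.measurableSet),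
      ← setLIntegral_const]
    refine lintegral_mono fun w => ?_
    refine ENat.toENNReal_le.2
      ((aux_compare d m L δ₂ R₂ (r + -R₂) hR₂ K w (a, u)).trans (Set.encard_le_encard ?_))
    rintro p ⟨hp1, hp2⟩
    refine ⟨?_, hKW hp2⟩
    simpa using hp1
  have hNF : (N : ENNReal) * volume F ≠ ⊤ :=
    (hup.trans_lt (ENNReal.mul_lt_top measure_closedBall_lt_top hW1top.lt_top)).ne
  have hNtop : N ≠ ⊤ := by
    intro h
    rw [h] at hNF
    simp [ENNReal.top_mul hF0] at hNF
  have hNr : ((N : ENNReal) * volume F).toReal = (N.toNat : ℝ) * c := by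
    rw [ENNReal.toReal_mul, hcov]
    congr 1
    obtain ⟨n, hn⟩ := ENat.ne_top_iff_exists.1 hNtop
    rw [← hn]
    simp
  have hup' := ENNReal.toReal_mono
    (ENNReal.mul_lt_top measure_closedBall_lt_top hW1top.lt_top).ne hup
  have hlo' := ENNReal.toReal_mono hNF hlo
  rw [hNr, ENNReal.toReal_mul] at hup' hlo'
  rw [div_mul_eq_mul_div, div_lt_iff₀ hV] at h1
  rw [div_mul_eq_mul_div, lt_div_iff₀ hV] at h2
  have e : (N.toNat : ℝ) / V - (volume W).toReal / c =
    ((N.toNat : ℝ) * c - (volume W).toReal * V) / (V * c) := by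
    field_simp
  rw [e, abs_div, abs_of_pos (mul_pos hV hc), div_le_iff₀ (mul_pos hV hc), abs_le]
  constructor <;> nlinarith
end

section
/- Weyl's theorem for regular model sets: let Λ(W) be a regular model set with compact Riemann-measurable window W ⊂ ℝ^m, and let f : ℝ^m → ℂ be continuous with support contained in W. Then for every a ∈ ℝ^d, (1/vol(B_r(0))) ∑_{x ∈ Λ(W) ∩ B_r(a)} f(x*) → (1/|det(L̃)|) ∫_W f(y) dy as r → ∞, uniformly in a. -/
open MeasureTheory Metric

set_option linter.unusedSectionVars false

namespace WeylModel

open scoped Pointwise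

variable {E F : Type*} [NormedAddCommGroup E] [NormedSpace ℝ E] [FiniteDimensional ℝ E]
  [MeasureSpace E] [BorelSpace E] [Measure.IsAddHaarMeasure (volume : Measure E)]
  [NormedAddCommGroup F] [NormedSpace ℝ F] [FiniteDimensional ℝ F]
  [MeasureSpace F] [BorelSpace F] [Measure.IsAddHaarMeasure (volume : Measure F)]

/-- A bounded fundamental domain. -/
lemma exists_dom (L : Submodule ℤ (E × F)) [DiscreteTopology L] [IsZLattice ℝ L] :
    ∃ D : Set (E × F), IsAddFundamentalDomain L D volume ∧ MeasurableSet D ∧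
      ∃ R : ℝ, 0 < R ∧ ∀ u ∈ D, ‖u‖ ≤ R := by
  let b := Module.Free.chooseBasis ℤ L
  refine ⟨ZSpan.fundamentalDomain (b.ofZLatticeBasis ℝ), ZLattice.isAddFundamentalDomain b _,
    ZSpan.fundamentalDomain_measurableSet _, ?_⟩
  obtain ⟨R, hR, h⟩ := (ZSpan.fundamentalDomain_isBounded (b.ofZLatticeBasis ℝ)).exists_pos_norm_le
  exact ⟨R, hR, h⟩

instance haar_prod : Measure.IsAddHaarMeasure (volume : Measure (E × F)) :=
  inferInstanceAs (Measure.IsAddHaarMeasure ((volume : Measure E).prod (volume : Measure F)))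

/-- Counting lattice points by volume. -/
lemma count_le (L : Submodule ℤ (E × F)) [DiscreteTopology L] [IsZLattice ℝ L]
    {D : Set (E × F)} (hD : IsAddFundamentalDomain L D volume)
    (T : Finset L) (A : Set E) (B : Set F) (hA : volume A ≠ ⊤) (hB : volume B ≠ ⊤)
    (h : ∀ l ∈ T, ∀ u ∈ D, (l : E × F) + u ∈ A ×ˢ B) :
    (T.card : ℝ) * ZLattice.covolume L volume ≤ volume.real A * volume.real B := by
  have : MeasurableVAdd L (E × F) := (inferInstance : MeasurableVAdd L.toAddSubgroup (E × F))
  have : VAddInvariantMeasure L (E × F) volume :=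
    (inferInstance : VAddInvariantMeasure L.toAddSubgroup (E × F) volume)
  have hAB : volume (A ×ˢ B) = volume A * volume B := Measure.prod_prod _ _
  have h1 : volume (⋃ l ∈ T, l +ᵥ D) = ∑ l ∈ T, volume (l +ᵥ D) :=
    measure_biUnion_finset₀ (fun i _ j _ hij => hD.aedisjoint hij)
      (fun l _ => hD.nullMeasurableSet_vadd l)
  have h2 : (⋃ l ∈ T, l +ᵥ D) ⊆ A ×ˢ B := by
    intro x hx
    simp only [Set.mem_iUnion] at hx
    obtain ⟨l, hl, u, hu, rfl⟩ := hx
    exact h l hl u hu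
  have h3 := measure_mono (μ := volume) h2
  rw [h1, hAB] at h3
  simp only [measure_vadd, Finset.sum_const, nsmul_eq_mul] at h3
  have h4 := ENNReal.toReal_mono (ENNReal.mul_ne_top hA hB) h3
  rw [ENNReal.toReal_mul, ENNReal.toReal_mul] at h4
  rw [ZLattice.covolume_eq_measure_fundamentalDomain L volume hD]
  simpa [Measure.real] using h4

/-- The function on the total space. -/
noncomputable def hh (f : F → ℂ) (a : E) (r : ℝ) (p : E × F) : ℂ :=
  (closedBall a r).indicator (fun _ => f p.2) p.1

lemma finite_set (L : Submodule ℤ (E × F)) [DiscreteTopology L] (a : E) (r s : ℝ) :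
    {l : L | (l : E × F).1 ∈ closedBall a r ∧ ‖(l : E × F).2‖ ≤ s}.Finite := by
  have : IsClosed (L : Set (E × F)) := by
    have := AddSubgroup.isClosed_of_discrete (H := L.toAddSubgroup)
    exact this
  have h := Metric.finite_isBounded_inter_isClosed (s := (L : Set (E × F))) DiscreteTopology.isDiscrete
    (isBounded_closedBall (x := a) (r := r) |>.prod (isBounded_closedBall (x := (0 : F)) (r := s)))
    this
  refine (h.preimage_embedding (.subtype _)).subset ?_
  rintro l ⟨h1, h2⟩
  exact ⟨⟨h1, by simpa using h2⟩, l.2⟩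

lemma hh_zero {f : F → ℂ} {ρ : ℝ} (hf : ∀ y, ρ < ‖y‖ → f y = 0) {a : E} {r : ℝ} {u : E × F}
    {C s : ℝ} (h1 : ‖u.1‖ ≤ C) (h2 : ρ + ‖u.2‖ ≤ s) (l : E × F)
    (hl : ¬ (l.1 ∈ closedBall a (r + C) ∧ ‖l.2‖ ≤ s)) : hh f a r (l + u) = 0 := by
  unfold hh
  by_cases h : (l + u).1 ∈ closedBall a r
  · rw [Set.indicator_of_mem h]
    apply hf
    by_contra! h'
    apply hl
    constructor
    · rw [mem_closedBall, dist_eq_norm] at *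
      have : l.1 - a = ((l + u).1 - a) - u.1 := by simp; abel
      rw [this]
      exact (norm_sub_le _ _).trans (by linarith)
    · have : l.2 = (l + u).2 - u.2 := by simp
      rw [this]
      exact (norm_sub_le _ _).trans (by linarith)
  · rw [Set.indicator_of_notMem h]

lemma hh_summable (L : Submodule ℤ (E × F)) [DiscreteTopology L]
    {f : F → ℂ} {ρ : ℝ} (hf : ∀ y, ρ < ‖y‖ → f y = 0) (a : E) (r : ℝ) (u : E × F) :
    Summable (fun l : L => hh f a r (l + u)) := by
  apply summable_of_hasFiniteSupport
  refine (finite_set L a (r + ‖u.1‖) (ρ + ‖u.2‖)).subset ?_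
  intro l hl
  by_contra h
  exact hl (hh_zero hf le_rfl le_rfl _ h)

lemma hh_integrable {f : F → ℂ} (hf : Continuous f) (hc : HasCompactSupport f) (a : E) (r : ℝ) :
    Integrable (hh f a r) volume ∧ ∫ p, hh f a r p = volume.real (closedBall a r) • ∫ y, f y := by
  have e : hh f a r = fun p : E × F => (closedBall a r).indicator (fun _ => (1 : ℂ)) p.1 * f p.2 := by
    ext p
    unfold hh
    by_cases h : p.1 ∈ closedBall a r <;> simp [h]
  rw [e]
  constructor
  · exact Integrable.mul_prod ((integrable_indicator_iff measurableSet_closedBall).2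
      (integrableOn_const measure_closedBall_lt_top.ne)) (hf.integrable_of_hasCompactSupport hc)
  · have := integral_prod_mul (μ := (volume : Measure E)) (ν := (volume : Measure F))
      ((closedBall a r).indicator (fun _ => (1 : ℂ))) f
    refine this.trans ?_
    rw [integral_indicator measurableSet_closedBall]
    simp

/-- Unfolding. -/
lemma unfold_int (L : Submodule ℤ (E × F)) [DiscreteTopology L] [IsZLattice ℝ L]
    {D : Set (E × F)} (hD : IsAddFundamentalDomain L D volume) {R : ℝ} (hR : ∀ u ∈ D, ‖u‖ ≤ R)
    (hDm : MeasurableSet D)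
    {f : F → ℂ} {ρ : ℝ} (hf0 : ∀ y, ρ < ‖y‖ → f y = 0)
    (hf : Continuous f) (hc : HasCompactSupport f) (a : E) (r : ℝ) :
    IntegrableOn (fun u => ∑' l : L, hh f a r (l + u)) D ∧
    ∫ u in D, ∑' l : L, hh f a r (l + u) = volume.real (closedBall a r) • ∫ y, f y := by
  have : MeasurableVAdd L (E × F) := (inferInstance : MeasurableVAdd L.toAddSubgroup (E × F))
  have : VAddInvariantMeasure L (E × F) volume :=
    (inferInstance : VAddInvariantMeasure L.toAddSubgroup (E × F) volume)
  obtain ⟨hi, hI⟩ := hh_integrable hf hc a r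
  let T := (finite_set L a (r + R) (ρ + R)).toFinset
  have hz : ∀ u ∈ D, ∀ l ∉ T, hh f a r ((l : E × F) + u) = 0 := by
    intro u hu l hl
    apply hh_zero hf0 ((norm_fst_le u).trans (hR u hu))
      (by have := (norm_snd_le u).trans (hR u hu); linarith : ρ + ‖u.2‖ ≤ ρ + R)
    simpa [T] using hl
  have hE : Set.EqOn (fun u => ∑' l : L, hh f a r (l + u))
      (fun u => ∑ l ∈ T, hh f a r ((l : E × F) + u)) D := by
    intro u hu
    exact tsum_eq_sum (fun l hl => hz u hu l hl)
  have hint : ∀ l : L, IntegrableOn (fun u => hh f a r ((l : E × F) + u)) D := fun l =>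
    (hi.comp_add_left (l : E × F)).integrableOn
  constructor
  · rw [integrableOn_congr_fun hE hDm]
    exact integrable_finsetSum _ (fun l _ => hint l)
  · rw [setIntegral_congr_fun hDm hE, integral_finsetSum _ (fun l _ => hint l), ← hI,
      hD.integral_eq_tsum'' _ hi]
    symm
    refine tsum_eq_sum (fun l hl => ?_)
    refine (setIntegral_congr_fun hDm (g := fun _ => (0:ℂ)) ?_).trans (by simp)
    intro u hu
    exact hz u hu l hl


/-- Comparison of shifted sums. -/
lemma shift_bound (L : Submodule ℤ (E × F)) [DiscreteTopology L] [IsZLattice ℝ L]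
    {D : Set (E × F)} (hD : IsAddFundamentalDomain L D volume) {R : ℝ} (hR : ∀ u ∈ D, ‖u‖ ≤ R)
    {f : F → ℂ} {ρ : ℝ} (hf0 : ∀ y, ρ < ‖y‖ → f y = 0)
    {M : ℝ} (hM0 : 0 ≤ M) (hM : ∀ y, ‖f y‖ ≤ M) {η C : ℝ} (hη : 0 ≤ η)
    (u : E × F) (k : L) (hR0 : 0 < R) (hu1 : ‖u.1‖ ≤ C) (hk1 : ‖(k : E × F).1‖ ≤ C)
    (hu2 : ‖u.2‖ ≤ R + 1) (hk2 : ‖(k : E × F).2‖ ≤ R + 1)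
    (huk : ∀ y, ‖f (y + u.2) - f (y + (k : E × F).2)‖ ≤ η) (a : E) (r : ℝ) :
    ‖∑' l : L, hh f a r (l + u) - ∑' l : L, hh f a r l‖ * ZLattice.covolume L volume ≤
      η * (volume.real (closedBall a (r + (C + R))) *
        volume.real (closedBall (0 : F) (ρ + (R + 1) + R))) +
      2 * M * ((volume.real (closedBall a (r + (C + R))) - volume.real (ball a (r - (C + R)))) *
        volume.real (closedBall (0 : F) (ρ + (R + 1) + R))) := by
  classical
  have hcov := ZLattice.covolume_pos L (volume : Measure (E × F))
  set B := closedBall (0 : F) (ρ + (R + 1) + R)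
  have hB : volume B ≠ ⊤ := measure_closedBall_lt_top.ne
  let T := (finite_set L a (r + C) (ρ + (R + 1))).toFinset
  let T' : Finset L := Finset.filter (fun l : L => (l : E × F).1 ∉ ball a (r - C)) T
  have hTm : ∀ l : L, l ∈ T ↔ ((l : E × F).1 ∈ closedBall a (r + C) ∧
      ‖(l : E × F).2‖ ≤ ρ + (R + 1)) := by intro l; simp [T]
  have e1 : ∑' l : L, hh f a r l = ∑' l : L, hh f a r (l + (k : E × F)) := by
    rw [← (Equiv.addRight k).tsum_eq (fun l : L => hh f a r l)]
    simp
  rw [e1, ← (hh_summable L hf0 a r u).tsum_sub (hh_summable L hf0 a r (k : E × F)),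
    tsum_eq_sum (s := T)]
  swap
  · intro l hl
    rw [hTm] at hl
    rw [hh_zero hf0 hu1 (by linarith) _ hl, hh_zero hf0 hk1 (by linarith) _ hl, sub_zero]
  have hpt : ∀ l ∈ T, ‖hh f a r ((l : E × F) + u) - hh f a r ((l : E × F) + k)‖ ≤
      η + if (l : E × F).1 ∉ ball a (r - C) then 2 * M else 0 := by
    intro l _
    by_cases h : (l : E × F).1 ∈ ball a (r - C)
    rotate_left
    · have hb : ∀ p : E × F, ‖hh f a r p‖ ≤ M := fun p => by
        unfold hh
        exact (norm_indicator_le_norm_self (fun _ => f p.2) p.1).trans (hM _)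
      calc _ ≤ M + M := (norm_sub_le _ _).trans (add_le_add (hb _) (hb _))
        _ ≤ _ := by rw [if_pos h]; linarith
    · rw [if_neg (not_not.2 h)]
      rw [mem_ball, dist_eq_norm] at h
      have hin : ∀ v : E × F, ‖v.1‖ ≤ C → hh f a r ((l : E × F) + v) = f ((l : E × F).2 + v.2) := by
        intro v hv
        unfold hh
        rw [Set.indicator_of_mem]
        · simp
        · rw [mem_closedBall, dist_eq_norm]
          have : ((l : E × F) + v).1 - a = ((l : E × F).1 - a) + v.1 := by simp; abel
          rw [this]
          exact (norm_add_le _ _).trans (by linarith)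
      rw [hin u hu1, hin k hk1, add_zero]
      exact huk _
  have hsum : ‖∑ l ∈ T, (hh f a r ((l : E × F) + u) - hh f a r ((l : E × F) + k))‖ ≤
      T.card * η + T'.card * (2 * M) := by
    refine (norm_sum_le_of_le T hpt).trans ?_
    rw [Finset.sum_add_distrib, ← Finset.sum_filter]
    simp [T']
  have hmemB : ∀ l ∈ T, ∀ u ∈ D, ((l : E × F) + u).2 ∈ B := by
    intro l hl v hv
    have h1 := ((hTm l).1 hl).2
    have h2 := (norm_snd_le v).trans (hR v hv)
    simp only [B, mem_closedBall_zero_iff]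
    exact (norm_add_le _ _).trans (by linarith)
  have hmemA : ∀ l ∈ T, ∀ u ∈ D, ((l : E × F) + u).1 ∈ closedBall a (r + (C + R)) := by
    intro l hl v hv
    have h1 := ((hTm l).1 hl).1
    have h2 := (norm_fst_le v).trans (hR v hv)
    rw [mem_closedBall, dist_eq_norm] at h1 ⊢
    have : ((l : E × F) + v).1 - a = ((l : E × F).1 - a) + v.1 := by simp; abel
    rw [this]
    exact (norm_add_le _ _).trans (by linarith)
  have hc1 := count_le L hD T (closedBall a (r + (C + R))) B measure_closedBall_lt_top.ne hB
    (fun l hl v hv => ⟨hmemA l hl v hv, hmemB l hl v hv⟩)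
  have hc2 := count_le L hD T' (closedBall a (r + (C + R)) \ ball a (r - (C + R))) B
    (ne_top_of_le_ne_top measure_closedBall_lt_top.ne (measure_mono Set.sdiff_subset)) hB
    (by
      intro l hl v hv
      rw [Finset.mem_filter] at hl
      refine ⟨⟨hmemA l hl.1 v hv, ?_⟩, hmemB l hl.1 v hv⟩
      intro h
      apply hl.2
      have h2 := (norm_fst_le v).trans (hR v hv)
      rw [mem_ball, dist_eq_norm] at h ⊢
      have : (l : E × F).1 - a = (((l : E × F) + v).1 - a) - v.1 := by simp; abel
      rw [this]
      exact lt_of_le_of_lt (norm_sub_le _ _) (by linarith))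
  have hsub : ball a (r - (C + R)) ⊆ closedBall a (r + (C + R)) := by
    have := norm_nonneg u.1
    exact (ball_subset_ball (by linarith)).trans ball_subset_closedBall
  rw [measureReal_sdiff hsub measurableSet_ball measure_closedBall_lt_top.ne] at hc2
  calc _ ≤ (T.card * η + T'.card * (2 * M)) * ZLattice.covolume L volume := by gcongr
    _ = η * (T.card * ZLattice.covolume L volume) + 2 * M * (T'.card * ZLattice.covolume L volume) := by ring
    _ ≤ _ := by gcongr


lemma vol_asymp (C κ : ℝ) (hC : 0 ≤ C) (hκ : 0 < κ) :
    ∃ r₀ : ℝ, 0 < r₀ ∧ ∀ r, r₀ ≤ r → ∀ a : E,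
      volume.real (closedBall a (r + C)) ≤ (1 + κ) * volume.real (closedBall (0 : E) r) ∧
      volume.real (closedBall a (r + C)) - volume.real (ball a (r - C)) ≤
        κ * volume.real (closedBall (0 : E) r) := by
  set n := Module.finrank ℝ E
  set v := volume.real (ball (0 : E) 1)
  have hv : 0 ≤ v := measureReal_nonneg
  have hcb : ∀ (a : E) (r : ℝ), 0 ≤ r → volume.real (closedBall a r) = r ^ n * v := by
    intro a r hr
    rw [Measure.real, Measure.addHaar_closedBall _ _ hr, ENNReal.toReal_mul,
      ENNReal.toReal_ofReal (by positivity)]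
    rfl
  have hb : ∀ (a : E) (r : ℝ), 0 < r → volume.real (ball a r) = r ^ n * v := by
    intro a r hr
    rw [Measure.real, Measure.addHaar_ball_of_pos _ _ hr, ENNReal.toReal_mul,
      ENNReal.toReal_ofReal (by positivity)]
    rfl
  have ht : ∀ c : ℝ, Filter.Tendsto (fun r : ℝ => (1 + c / r) ^ n) Filter.atTop (nhds 1) := by
    intro c
    have h1 : Filter.Tendsto (fun r : ℝ => c / r) Filter.atTop (nhds 0) :=
      Filter.Tendsto.div_atTop tendsto_const_nhds Filter.tendsto_id
    have := (h1.const_add 1).pow n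
    simpa using this
  have e1 := (ht C).eventually (gt_mem_nhds (show (1 : ℝ) < 1 + κ / 2 by linarith))
  have e2 := (ht (-C)).eventually (lt_mem_nhds (show 1 - κ / 2 < (1 : ℝ) by linarith))
  obtain ⟨r₁, hr₁⟩ := Filter.eventually_atTop.1 (e1.and e2)
  refine ⟨max r₁ (C + 1), lt_max_of_lt_right (by linarith), ?_⟩
  intro r hr a
  have hrC : C + 1 ≤ r := (le_max_right _ _).trans hr
  have hr0 : 0 < r := by linarith
  obtain ⟨h1, h2⟩ := hr₁ r ((le_max_left _ _).trans hr)
  have k1 : (r + C) ^ n = (1 + C / r) ^ n * r ^ n := by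
    rw [← mul_pow]; congr 1; field_simp
  have k2 : (r - C) ^ n = (1 + -C / r) ^ n * r ^ n := by
    rw [← mul_pow]; congr 1; field_simp; ring
  rw [hcb a _ (by linarith), hcb 0 r hr0.le, hb a _ (by linarith), k1, k2]
  have hw : 0 ≤ r ^ n * v := by positivity
  constructor
  · nlinarith
  · nlinarith

lemma weyl_main (L : Submodule ℤ (E × F)) [DiscreteTopology L] [IsZLattice ℝ L]
    (hdense2 : Dense (Prod.snd '' (L : Set (E × F))))
    {f : F → ℂ} (hf : Continuous f) (hc : HasCompactSupport f) (ε : ℝ) (hε : 0 < ε) :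
    ∃ r₀ : ℝ, ∀ r : ℝ, r₀ ≤ r → ∀ a : E,
      ‖(volume.real (closedBall (0 : E) r))⁻¹ • (∑' l : L, hh f a r l) -
        (ZLattice.covolume L volume)⁻¹ • ∫ y, f y‖ ≤ ε := by
  obtain ⟨D, hD, hDm, R, hR0, hR⟩ := exists_dom L
  have hcov := ZLattice.covolume_pos L (volume : Measure (E × F))
  set cv := ZLattice.covolume L (volume : Measure (E × F)) with hcv
  -- bounds on f
  obtain ⟨ρ, hρ⟩ : ∃ ρ : ℝ, ∀ y, ρ < ‖y‖ → f y = 0 := by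
    obtain ⟨ρ, h⟩ := hc.isCompact.isBounded.exists_norm_le
    refine ⟨ρ, fun y hy => ?_⟩
    by_contra h0
    exact absurd (h y (subset_tsupport f h0)) (not_le.2 hy)
  obtain ⟨M, hM⟩ := hc.exists_bound_of_continuous hf
  have hM0 : 0 ≤ M := (norm_nonneg _).trans (hM 0)
  set β := volume.real (closedBall (0 : F) (ρ + (R + 1) + R)) with hβ
  have hβ0 : 0 ≤ β := measureReal_nonneg
  obtain ⟨η, hη, hη1⟩ : ∃ η : ℝ, 0 < η ∧ η * (2 * β) ≤ cv * ε / 2 := by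
    refine ⟨cv * ε / (4 * (β + 1)), by positivity, ?_⟩
    rw [div_mul_eq_mul_div, div_le_div_iff₀ (by positivity) (by positivity)]
    nlinarith [mul_pos hcov hε]
  obtain ⟨κ, hκ, hκ1, hκ2⟩ : ∃ κ : ℝ, 0 < κ ∧ κ ≤ 1 ∧ 2 * M * (κ * β) ≤ cv * ε / 2 := by
    refine ⟨min 1 (cv * ε / (4 * ((M + 1) * (β + 1)))), by positivity, min_le_left _ _, ?_⟩
    calc 2 * M * (min 1 (cv * ε / (4 * ((M + 1) * (β + 1)))) * β)
        ≤ 2 * M * ((cv * ε / (4 * ((M + 1) * (β + 1)))) * β) := by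
          gcongr; exact min_le_right _ _
      _ = (2 * M * β) * (cv * ε) / (4 * ((M + 1) * (β + 1))) := by ring
      _ ≤ cv * ε / 2 := by
        rw [div_le_div_iff₀ (by positivity) (by positivity)]
        have : M * β ≤ (M + 1) * (β + 1) := by nlinarith
        nlinarith [mul_pos hcov hε]
  have huc := hc.uniformContinuous_of_continuous hf
  obtain ⟨δ, hδ, hδf⟩ := Metric.uniformContinuous_iff.1 huc η hη
  -- finite net
  obtain ⟨C, hC0, hC⟩ : ∃ C : ℝ, R ≤ C ∧ ∀ u ∈ D, ∃ k : L, ‖(k : E × F).1‖ ≤ C ∧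
      dist u.2 (k : E × F).2 < min δ 1 := by
    have hcomp := isCompact_closedBall (0 : F) R
    obtain ⟨t, ht⟩ := hcomp.elim_finite_subcover
      (fun k : L => ball (k : E × F).2 (min δ 1)) (fun _ => isOpen_ball) (by
        intro y _
        obtain ⟨z, ⟨p, hp, rfl⟩, hz⟩ := hdense2.exists_mem_open (isOpen_ball (x := y) (ε := min δ 1))
          ⟨y, mem_ball_self (by positivity)⟩
        exact Set.mem_iUnion.2 ⟨⟨p, hp⟩, by rwa [mem_ball_comm] at hz⟩)
    refine ⟨R + ∑ k ∈ t, ‖(k : E × F).1‖, ?_, ?_⟩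
    · have : 0 ≤ ∑ k ∈ t, ‖(k : E × F).1‖ := by positivity
      linarith
    · intro u hu
      have hu2 : u.2 ∈ closedBall (0 : F) R := by
        simpa using (norm_snd_le u).trans (hR u hu)
      have := ht hu2
      simp only [Set.mem_iUnion] at this
      obtain ⟨k, hk, hk'⟩ := this
      refine ⟨k, ?_, hk'⟩
      have := Finset.single_le_sum (f := fun k : L => ‖(k : E × F).1‖)
        (fun _ _ => norm_nonneg _) hk
      linarith
  obtain ⟨r₀, hr₀, hV⟩ := vol_asymp (E := E) (C + R) κ (by linarith) hκ
  refine ⟨r₀, fun r hr a => ?_⟩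
  obtain ⟨hV1, hV2⟩ := hV r hr a
  set V := volume.real (closedBall (0 : E) r) with hVdef
  have hVpos : 0 < V := by
    refine ENNReal.toReal_pos (measure_closedBall_pos _ _ (by linarith)).ne'
      measure_closedBall_lt_top.ne
  set S : E × F → ℂ := fun u => ∑' l : L, hh f a r (l + u) with hS
  set S0 := ∑' l : L, hh f a r l with hS0
  have key : ∀ u ∈ D, ‖S u - S0‖ ≤ ε * V := by
    intro u hu
    obtain ⟨k, hk1, hk2⟩ := hC u hu
    have hu' := hR u hu
    have hu2 := (norm_snd_le u).trans hu'
    have hk2' : ‖(k : E × F).2‖ ≤ R + 1 := by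
      have h1 : dist u.2 (k : E × F).2 < 1 := hk2.trans_le (min_le_right _ _)
      rw [dist_eq_norm, norm_sub_rev] at h1
      have := norm_le_norm_add_norm_sub' (k : E × F).2 u.2
      linarith
    have hb := shift_bound L hD hR hρ hM0 hM hη.le u k hR0
      (((norm_fst_le u).trans hu').trans hC0) hk1 (by linarith) hk2'
      (fun y => by
        have : dist (y + u.2) (y + (k : E × F).2) < δ := by
          rw [dist_add_left]; exact hk2.trans_le (min_le_left _ _)
        have := hδf this
        rw [dist_eq_norm] at this
        exact this.le) a r
    rw [← hβ, ← hcv] at hb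
    refine le_of_mul_le_mul_right (hb.trans ?_) hcov
    calc _ ≤ η * (((1 + κ) * V) * β) + 2 * M * ((κ * V) * β) := by gcongr
      _ ≤ η * ((2 * V) * β) + 2 * M * ((κ * V) * β) := by gcongr; linarith
      _ = (η * (2 * β) + 2 * M * (κ * β)) * V := by ring
      _ ≤ (cv * ε / 2 + cv * ε / 2) * V := by gcongr
      _ = ε * V * cv := by ring
  obtain ⟨hi, hI⟩ := unfold_int L hD hR hDm hρ hf hc a r
  have hDfin : volume D ≠ ⊤ := by
    refine ne_top_of_le_ne_top (measure_closedBall_lt_top (x := (0 : E × F)) (r := R)).ne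
      (measure_mono fun u hu => ?_)
    simpa using hR u hu
  have hcvD : cv = volume.real D := ZLattice.covolume_eq_measure_fundamentalDomain L volume hD
  have hVa : volume.real (closedBall a r) = V := by
    rw [hVdef, Measure.real, Measure.addHaar_closedBall_center]; rfl
  have hdiff : ∫ u in D, (S u - S0) = V • (∫ y, f y) - cv • S0 := by
    rw [integral_sub hi (integrableOn_const hDfin), hI, hVa, setIntegral_const, hcvD]
  have hbound : ‖V • (∫ y, f y) - cv • S0‖ ≤ ε * V * cv := by
    rw [← hdiff, hcvD]
    exact norm_setIntegral_le_of_norm_le_const (lt_top_iff_ne_top.2 hDfin) key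
  have e : V⁻¹ • S0 - cv⁻¹ • ∫ y, f y = -((V * cv)⁻¹ • (V • (∫ y, f y) - cv • S0)) := by
    rw [smul_sub, smul_smul, smul_smul, neg_sub]
    congr 2 <;> field_simp
  rw [e, norm_neg, norm_smul, Real.norm_of_nonneg (by positivity)]
  calc _ ≤ (V * cv)⁻¹ * (ε * V * cv) := by gcongr
    _ = ε := by field_simp

end WeylModel

/-- Weyl's theorem for regular model sets: averages of f(x*) over the
model set points in balls converge to the normalized integral of f over the window,
uniformly in the ball center `a`. -/
theorem weyl_regular_model_set (d m : ℕ)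
    (L : Submodule ℤ (EuclideanSpace ℝ (Fin d) × EuclideanSpace ℝ (Fin m)))
    [DiscreteTopology L] [IsZLattice ℝ L]
    (hinj1 : Set.InjOn Prod.fst (L : Set (EuclideanSpace ℝ (Fin d) × EuclideanSpace ℝ (Fin m))))
    (hdense2 : Dense (Prod.snd '' (L : Set (EuclideanSpace ℝ (Fin d) × EuclideanSpace ℝ (Fin m)))))
    (star : EuclideanSpace ℝ (Fin d) → EuclideanSpace ℝ (Fin m))
    (hstar : ∀ p ∈ L, star (Prod.fst p) = Prod.snd p)
    (W : Set (EuclideanSpace ℝ (Fin m)))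
    (hWne : W.Nonempty) (hWc : IsCompact W)
    (hWreg : W = closure (interior W))
    (hWbd : volume (frontier W) = 0)
    (f : EuclideanSpace ℝ (Fin m) → ℂ) (hf : Continuous f)
    (hsupp : Function.support f ⊆ W) :
    ∀ ε : ℝ, 0 < ε → ∃ r₀ : ℝ, ∀ r : ℝ, r₀ ≤ r → ∀ a : EuclideanSpace ℝ (Fin d),
      ‖(volume (closedBall (0 : EuclideanSpace ℝ (Fin d)) r)).toReal⁻¹ •
          (∑' x : (({x ∈ Prod.fst '' (L : Set (EuclideanSpace ℝ (Fin d) × EuclideanSpace ℝ (Fin m))) |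
              star x ∈ W} ∩ closedBall a r : Set (EuclideanSpace ℝ (Fin d)))),
            f (star (x : EuclideanSpace ℝ (Fin d)))) -
        (ZLattice.covolume L volume)⁻¹ • ∫ y in W, f y‖ ≤ ε := by
  intro ε hε
  have hcs : HasCompactSupport f := HasCompactSupport.intro hWc (fun x hx => by
    by_contra h
    exact hx (hsupp h))
  obtain ⟨r₀, h⟩ := WeylModel.weyl_main L hdense2 hf hcs ε hε
  refine ⟨r₀, fun r hr a => ?_⟩
  have hint : ∫ y in W, f y = ∫ y, f y :=
    setIntegral_eq_integral_of_forall_compl_eq_zero (fun x hx => by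
      by_contra h
      exact hx (hsupp h))
  have hinj : Function.Injective (fun l : L => (l : EuclideanSpace ℝ (Fin d) ×
      EuclideanSpace ℝ (Fin m)).1) := fun l l' hl => Subtype.ext (hinj1 l.2 l'.2 hl)
  rw [hint]
  convert h r hr a using 4
  · rfl
  rw [tsum_subtype _ (fun x => f (star x)), ← hinj.tsum_eq]
  · refine tsum_congr fun l => ?_
    unfold WeylModel.hh
    by_cases hb : (l : EuclideanSpace ℝ (Fin d) × EuclideanSpace ℝ (Fin m)).1 ∈ closedBall a r
    · rw [Set.indicator_of_mem hb]
      by_cases hw : star (l : EuclideanSpace ℝ (Fin d) × EuclideanSpace ℝ (Fin m)).1 ∈ W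
      · rw [Set.indicator_of_mem, hstar _ l.2]
        exact ⟨⟨⟨l, l.2, rfl⟩, hw⟩, hb⟩
      · rw [Set.indicator_of_notMem (fun hx => hw hx.1.2)]
        rw [hstar _ l.2] at hw
        by_contra h0
        exact hw (hsupp (Ne.symm h0))
    · rw [Set.indicator_of_notMem hb, Set.indicator_of_notMem (fun hx => hb hx.2)]
  · intro x hx
    obtain ⟨⟨⟨p, hp, rfl⟩, -⟩, -⟩ := Set.mem_of_indicator_ne_zero hx
    exact ⟨⟨p, hp⟩, rfl⟩
end

section
/- Weyl's theorem for dense point sets: assume a cut-and-project scheme with both projections injective on L̃ and both images dense. Let f : ℝ^m → ℂ be continuous with |x|^{m+1+α}|f(x)| ≤ C for constants C, α > 0. Then (1/vol(B_r(0))) ∑_{x ∈ L ∩ B_r(a)} f(x*) → (1/|det(L̃)|) ∫_{ℝ^m} f(u) du as r → ∞, uniformly in a ∈ ℝ^d. -/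
open MeasureTheory Metric

/-- The projection of the lattice to direct space. -/
def physL (d m : ℕ) (L : Submodule ℤ (EuclideanSpace ℝ (Fin d) × EuclideanSpace ℝ (Fin m))) :
    Set (EuclideanSpace ℝ (Fin d)) :=
  Prod.fst '' (L : Set (EuclideanSpace ℝ (Fin d) × EuclideanSpace ℝ (Fin m)))


lemma cp_ball_vol (d : ℕ) : ∃ V : ℝ, 0 < V ∧ ∀ r : ℝ, 0 ≤ r →
    (volume (closedBall (0 : EuclideanSpace ℝ (Fin d)) r)).toReal = r ^ d * V := by
  refine ⟨(volume (ball (0 : EuclideanSpace ℝ (Fin d)) 1)).toReal, ?_, ?_⟩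
  · exact ENNReal.toReal_pos (measure_ball_pos _ _ one_pos).ne' measure_ball_lt_top.ne
  · intro r hr
    rw [Measure.addHaar_closedBall _ _ hr, ENNReal.toReal_mul, ENNReal.toReal_ofReal (by positivity)]
    simp

/-- weight comparison -/
lemma cp_weight {B : Type*} [NormedAddCommGroup B] (β : ℝ) (hβ : 0 ≤ β) (y y' : B)
    (h : ‖y - y'‖ ≤ 1) : (1 + ‖y‖) ^ (-β) ≤ 2 ^ β * (1 + ‖y'‖) ^ (-β) := by
  have h1 : ‖y'‖ ≤ ‖y‖ + 1 := by
    have := norm_sub_norm_le y' y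
    rw [norm_sub_rev] at this; linarith
  have h2 : (1 + ‖y'‖) / 2 ≤ 1 + ‖y‖ := by linarith [norm_nonneg y]
  have p1 : 0 < 1 + ‖y'‖ := by positivity
  calc (1 + ‖y‖) ^ (-β) ≤ ((1 + ‖y'‖) / 2) ^ (-β) :=
        Real.rpow_le_rpow_of_nonpos (by positivity) h2 (by linarith)
    _ = _ := by
        rw [Real.div_rpow p1.le (by norm_num), Real.rpow_neg (x := 2) (by norm_num)]
        field_simp

lemma cp_sep {E : Type*} [NormedAddCommGroup E] (L : Submodule ℤ E) [DiscreteTopology L] :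
    ∃ δ : ℝ, 0 < δ ∧ δ ≤ 1 ∧ ∀ z : E,
      Pairwise (Function.onFun Disjoint (fun p : L => ball ((p : E) + z) δ)) := by
  obtain ⟨ε, hε, h⟩ := Metric.exists_ball_inter_eq_singleton_of_mem_discrete
    (isDiscrete_iff_discreteTopology.2 ‹DiscreteTopology L›) (L.zero_mem)
  refine ⟨min (ε / 2) 1, by positivity, min_le_right _ _, fun z p q hpq => ?_⟩
  apply Metric.ball_disjoint_ball
  by_contra hc
  push Not at hc
  apply hpq
  have : ((p - q : L) : E) ∈ ball (0 : E) ε ∩ (L : Set E) := by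
    refine ⟨?_, (p - q).2⟩
    rw [mem_ball_zero_iff]
    have h1 := min_le_left (ε / 2) 1
    rw [dist_add_right, dist_eq_norm] at hc
    push_cast
    linarith
  rw [h] at this
  have h0 : (p - q : L) = 0 := Subtype.ext this
  exact sub_eq_zero.1 h0

lemma cp_haar (d m : ℕ) : (volume : Measure (EuclideanSpace ℝ (Fin d) ×
    EuclideanSpace ℝ (Fin m))).IsAddHaarMeasure :=
  Measure.prod.instIsAddHaarMeasure _ _

lemma cp_sum_bound (d m : ℕ)
    (L : Submodule ℤ (EuclideanSpace ℝ (Fin d) × EuclideanSpace ℝ (Fin m)))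
    [DiscreteTopology L] :
    ∃ K : ℝ, 0 ≤ K ∧ ∀ S T : Set (EuclideanSpace ℝ (Fin d)), MeasurableSet T → volume T ≠ ⊤ →
      (∀ x ∈ S, closedBall x 1 ⊆ T) →
      ∀ z : EuclideanSpace ℝ (Fin d) × EuclideanSpace ℝ (Fin m),
        Summable (fun p : L => S.indicator (fun _ => (1:ℝ)) (p.1.1 + z.1) *
          (1 + ‖p.1.2 + z.2‖) ^ (-((m:ℝ) + 1))) ∧
        ∑' p : L, S.indicator (fun _ => (1:ℝ)) (p.1.1 + z.1) *
          (1 + ‖p.1.2 + z.2‖) ^ (-((m:ℝ) + 1)) ≤ K * (volume T).toReal := by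
  have := cp_haar d m
  obtain ⟨δ, hδ, hδ1, hdisj⟩ := cp_sep L
  set I : ℝ := ∫ y : EuclideanSpace ℝ (Fin m), (1 + ‖y‖) ^ (-((m:ℝ) + 1)) with hI
  have hHint : Integrable (fun y : EuclideanSpace ℝ (Fin m) => (1 + ‖y‖) ^ (-((m:ℝ) + 1))) := by
    apply integrable_one_add_norm
    simp
  have hI0 : 0 ≤ I := integral_nonneg (fun y => by positivity)
  set v : ℝ := (volume (ball (0 : EuclideanSpace ℝ (Fin d) × EuclideanSpace ℝ (Fin m)) δ)).toReal
    with hv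
  have hv0 : 0 < v := ENNReal.toReal_pos (measure_ball_pos _ _ hδ).ne' measure_ball_lt_top.ne
  set c : ℝ := 2 ^ ((m:ℝ) + 1) with hc
  have hc0 : 0 < c := by positivity
  refine ⟨c / v * I, by positivity, fun S T hT hTfin hST z => ?_⟩
  set φ : EuclideanSpace ℝ (Fin d) × EuclideanSpace ℝ (Fin m) → ℝ :=
    fun w => T.indicator (fun _ => (1:ℝ)) w.1 * (1 + ‖w.2‖) ^ (-((m:ℝ) + 1)) with hφ
  have hTi : Integrable (T.indicator (fun _ => (1:ℝ))) volume := by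
    rw [integrable_indicator_iff hT]
    exact integrableOn_const hTfin
  have hφi : Integrable φ volume := hTi.mul_prod hHint
  have hφint : ∫ w, φ w = (volume T).toReal * I := by
    have := integral_prod_mul (μ := (volume : Measure (EuclideanSpace ℝ (Fin d))))
      (ν := (volume : Measure (EuclideanSpace ℝ (Fin m)))) (T.indicator (fun _ => (1:ℝ)))
      (fun y => (1 + ‖y‖) ^ (-((m:ℝ) + 1)))
    rw [← Measure.volume_eq_prod] at this
    rw [hφ, this, integral_indicator hT]
    simp [Measure.real, hI]
  have hφ0 : ∀ w, 0 ≤ φ w := fun w =>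
    mul_nonneg (Set.indicator_nonneg (fun _ _ => zero_le_one) _) (by positivity)
  have hterm : ∀ p : L, S.indicator (fun _ => (1:ℝ)) (p.1.1 + z.1) *
          (1 + ‖p.1.2 + z.2‖) ^ (-((m:ℝ) + 1)) ≤
          c / v * ∫ w in ball (p.1 + z) δ, φ w := by
    intro p
    have hnn : 0 ≤ ∫ w in ball (p.1 + z) δ, φ w := integral_nonneg hφ0
    by_cases hp : p.1.1 + z.1 ∈ S
    · rw [Set.indicator_of_mem hp, one_mul]
      have hvb : volume.real (ball (p.1 + z) δ) = v := by
        rw [hv, Measure.real, Measure.addHaar_ball_center]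
      have key : c⁻¹ * (1 + ‖p.1.2 + z.2‖) ^ (-((m:ℝ) + 1)) * v ≤
          ∫ w in ball (p.1 + z) δ, φ w := by
        rw [← hvb]
        refine setIntegral_ge_of_const_le_real measurableSet_ball measure_ball_lt_top.ne
          (fun w hw => ?_) hφi.integrableOn
        rw [mem_ball, Prod.dist_eq, max_lt_iff] at hw
        have hw1 : w.1 ∈ T := hST _ hp (mem_closedBall.2 (by
          have := hw.1; simp only [Prod.fst_add] at this; linarith))
        simp only [hφ, Set.indicator_of_mem hw1, one_mul]
        rw [inv_mul_le_iff₀ hc0]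
        apply cp_weight _ (by positivity)
        rw [← dist_eq_norm, dist_comm]
        have := hw.2; simp only [Prod.snd_add] at this; linarith
      rw [div_mul_eq_mul_div, le_div_iff₀ hv0]
      rw [mul_assoc, inv_mul_le_iff₀ hc0] at key
      exact key
    · rw [Set.indicator_of_notMem hp, zero_mul]
      positivity
  have hnn : ∀ p : L, 0 ≤ S.indicator (fun _ => (1:ℝ)) (p.1.1 + z.1) *
          (1 + ‖p.1.2 + z.2‖) ^ (-((m:ℝ) + 1)) := fun p =>
    mul_nonneg (Set.indicator_nonneg (fun _ _ => zero_le_one) _) (by positivity)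
  have hsum : ∀ s : Finset L, ∑ p ∈ s, S.indicator (fun _ => (1:ℝ)) (p.1.1 + z.1) *
          (1 + ‖p.1.2 + z.2‖) ^ (-((m:ℝ) + 1)) ≤ c / v * I * (volume T).toReal := by
    intro s
    calc _ ≤ ∑ p ∈ s, c / v * ∫ w in ball (p.1 + z) δ, φ w :=
          Finset.sum_le_sum (fun p _ => hterm p)
      _ = c / v * ∫ w in ⋃ p ∈ s, ball (p.1 + z) δ, φ w := by
          rw [← Finset.mul_sum, integral_biUnion_finset s (fun _ _ => measurableSet_ball)
            (fun p _ q _ h => hdisj z h) (fun _ _ => hφi.integrableOn)]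
      _ ≤ c / v * ∫ w, φ w := by
          apply mul_le_mul_of_nonneg_left _ (by positivity)
          exact setIntegral_le_integral hφi (ae_of_all _ hφ0)
      _ = _ := by rw [hφint]; ring
  exact ⟨summable_of_sum_le hnn hsum, Real.tsum_le_of_sum_le hnn hsum⟩

lemma cp_cover (d m : ℕ)
    (L : Submodule ℤ (EuclideanSpace ℝ (Fin d) × EuclideanSpace ℝ (Fin m)))
    [DiscreteTopology L] [IsZLattice ℝ L]
    (hdense2 : Dense (Prod.snd '' (L : Set (EuclideanSpace ℝ (Fin d) × EuclideanSpace ℝ (Fin m)))))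
    (δ : ℝ) (hδ : 0 < δ) :
    ∃ S : ℝ, 0 ≤ S ∧ ∀ w : EuclideanSpace ℝ (Fin d) × EuclideanSpace ℝ (Fin m),
      ∃ q : L, ‖w.1 - q.1.1‖ ≤ S ∧ ‖w.2 - q.1.2‖ ≤ δ := by
  let b := Module.Free.chooseBasis ℤ L
  set F := ZSpan.fundamentalDomain (b.ofZLatticeBasis ℝ L) with hF
  have hFb : Bornology.IsBounded F := ZSpan.fundamentalDomain_isBounded _
  obtain ⟨R, hR⟩ := hFb.subset_closedBall 0
  have hcov : closedBall (0 : EuclideanSpace ℝ (Fin m)) R ⊆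
      ⋃ q : L, ball (q.1.2) δ := by
    intro y _
    obtain ⟨_, ⟨q, hq, rfl⟩, h⟩ := hdense2.exists_dist_lt y hδ
    exact Set.mem_iUnion.2 ⟨⟨q, hq⟩, h⟩
  obtain ⟨t, ht⟩ := (isCompact_closedBall (0 : EuclideanSpace ℝ (Fin m)) R).elim_finite_subcover
    _ (fun q => isOpen_ball) hcov
  refine ⟨|R| + ∑ q ∈ t, ‖q.1.1‖, by positivity, fun w => ?_⟩
  obtain ⟨⟨v, hvm⟩, hv, -⟩ := ZSpan.exist_unique_vadd_mem_fundamentalDomain (b.ofZLatticeBasis ℝ L) w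
  have hvL : v ∈ L := by
    rw [b.ofZLatticeBasis_span (K := ℝ)] at hvm
    exact hvm
  have hv2 := hR hv
  have hvw : (⟨v, hvm⟩ : Submodule.span ℤ (Set.range (b.ofZLatticeBasis ℝ L))) +ᵥ w = v + w := rfl
  rw [hvw, mem_closedBall_zero_iff, Prod.norm_def, max_le_iff] at hv2
  obtain ⟨q, hqt, hq⟩ := Set.mem_iUnion₂.1 (ht (mem_closedBall_zero_iff.2 hv2.2))
  refine ⟨q - ⟨v, hvL⟩, ?_, ?_⟩
  · have e : w.1 - (q - ⟨v, hvL⟩ : L).1.1 = (v + w).1 - q.1.1 := by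
      simp; abel
    rw [e]
    calc _ ≤ ‖(v + w).1‖ + ‖q.1.1‖ := norm_sub_le _ _
      _ ≤ _ := by
        gcongr
        · exact hv2.1.trans (le_abs_self R)
        · exact Finset.single_le_sum (f := fun q : L => ‖q.1.1‖) (fun _ _ => norm_nonneg _) hqt
  · have e : w.2 - (q - ⟨v, hvL⟩ : L).1.2 = (v + w).2 - q.1.2 := by
      simp; abel
    rw [e, ← dist_eq_norm]
    exact (mem_ball.1 hq).le

lemma cp_decay {B : Type*} [NormedAddCommGroup B] [ProperSpace B] (f : B → ℂ) (hf : Continuous f)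
    (C β : ℝ) (hC : 0 < C) (hβ : 0 ≤ β)
    (hdecay : ∀ x, ‖x‖ ^ β * ‖f x‖ ≤ C) :
    ∃ D : ℝ, 0 < D ∧ ∀ y, ‖f y‖ ≤ D * (1 + ‖y‖) ^ (-β) := by
  obtain ⟨M, hM⟩ := (isCompact_closedBall (0:B) 1).exists_bound_of_continuousOn hf.continuousOn
  refine ⟨2 ^ β * max M C, mul_pos (by positivity) (lt_max_of_lt_right hC), fun y => ?_⟩
  have p : 0 < 1 + ‖y‖ := by positivity
  rw [Real.rpow_neg p.le, ← div_eq_mul_inv, le_div_iff₀ (by positivity)]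
  by_cases hy : ‖y‖ ≤ 1
  · have h1 : (1 + ‖y‖) ^ β ≤ 2 ^ β := Real.rpow_le_rpow p.le (by linarith) hβ
    have h2 := hM y (mem_closedBall_zero_iff.2 hy)
    rw [mul_comm]
    exact mul_le_mul h1 (h2.trans (le_max_left _ _)) (norm_nonneg _) (by positivity)
  · push Not at hy
    have h1 : (1 + ‖y‖) ^ β ≤ 2 ^ β * ‖y‖ ^ β := by
      rw [← Real.mul_rpow (by norm_num) (norm_nonneg _)]
      exact Real.rpow_le_rpow p.le (by linarith) hβ
    calc ‖f y‖ * (1 + ‖y‖) ^ β ≤ ‖f y‖ * (2 ^ β * ‖y‖ ^ β) := by gcongr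
      _ = 2 ^ β * (‖y‖ ^ β * ‖f y‖) := by ring
      _ ≤ _ := by gcongr; exact (hdecay y).trans (le_max_right _ _)

lemma cp_modulus {B : Type*} [NormedAddCommGroup B] [ProperSpace B] (f : B → ℂ) (hf : Continuous f)
    (D κ α : ℝ) (hD : 0 < D) (hκ : 0 ≤ κ) (hα : 0 < α)
    (hfD : ∀ y, ‖f y‖ ≤ D * (1 + ‖y‖) ^ (-(κ + α))) (ε : ℝ) (hε : 0 < ε) :
    ∃ δ : ℝ, 0 < δ ∧ δ ≤ 1 ∧ ∀ y y', ‖y' - y‖ ≤ δ → ‖f y' - f y‖ ≤ ε * (1 + ‖y‖) ^ (-κ) := by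
  set D' := D * 2 ^ (κ + α) + D with hD'
  have hD'0 : 0 < D' := by positivity
  have hlim : Filter.Tendsto (fun R : ℝ => D' * (1 + R) ^ (-α)) Filter.atTop (nhds (D' * 0)) := by
    apply Filter.Tendsto.const_mul
    exact (tendsto_rpow_neg_atTop hα).comp (Filter.tendsto_atTop_add_const_left _ 1 Filter.tendsto_id)
  rw [mul_zero] at hlim
  obtain ⟨R, hR, hR0⟩ := ((hlim.eventually_le_const hε).and (Filter.eventually_ge_atTop 0)).exists
  have hu := (isCompact_closedBall (0:B) (R + 1)).uniformContinuousOn_of_continuous hf.continuousOn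
  rw [Metric.uniformContinuousOn_iff] at hu
  obtain ⟨δ, hδ, h⟩ := hu (ε * (1 + R) ^ (-κ)) (by positivity)
  refine ⟨min (δ / 2) 1, by positivity, min_le_right _ _, fun y y' hy => ?_⟩
  have hy1 : ‖y' - y‖ ≤ 1 := hy.trans (min_le_right _ _)
  have p : 0 < 1 + ‖y‖ := by positivity
  by_cases hyR : ‖y‖ ≤ R
  · have hy' : ‖y'‖ ≤ R + 1 := by
      have := norm_sub_norm_le y' y
      linarith
    have := h y' (mem_closedBall_zero_iff.2 hy') y (mem_closedBall_zero_iff.2 (by linarith)) (by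
      rw [dist_eq_norm]
      have := min_le_left (δ / 2) 1
      linarith)
    rw [dist_eq_norm] at this
    refine this.le.trans ?_
    gcongr ?_ * ?_
    exact Real.rpow_le_rpow_of_nonpos p (by linarith) (by linarith)
  · push Not at hyR
    have hw := cp_weight (κ + α) (by positivity) y' y hy1
    calc ‖f y' - f y‖ ≤ ‖f y'‖ + ‖f y‖ := norm_sub_le _ _
      _ ≤ D * (2 ^ (κ + α) * (1 + ‖y‖) ^ (-(κ + α))) + D * (1 + ‖y‖) ^ (-(κ + α)) := by
          gcongr
          · exact (hfD y').trans (by gcongr)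
          · exact hfD y
      _ = D' * (1 + ‖y‖) ^ (-α) * (1 + ‖y‖) ^ (-κ) := by
          rw [neg_add, Real.rpow_add p]; ring
      _ ≤ D' * (1 + R) ^ (-α) * (1 + ‖y‖) ^ (-κ) := by
          gcongr D' * ?_ * _
          exact Real.rpow_le_rpow_of_nonpos (by positivity) (by linarith) (by linarith)
      _ ≤ _ := by gcongr

lemma cp_shell (d : ℕ) (s η : ℝ) (hη : 0 < η) :
    ∃ r₀ : ℝ, ∀ r : ℝ, r₀ ≤ r → (r + s) ^ d - (r - s) ^ d ≤ η * r ^ d := by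
  have h0 : Filter.Tendsto (fun r : ℝ => s / r) Filter.atTop (nhds 0) :=
    Filter.Tendsto.div_atTop tendsto_const_nhds Filter.tendsto_id
  have h1 : Filter.Tendsto (fun r : ℝ => (1 + s / r) ^ d - (1 - s / r) ^ d) Filter.atTop
      (nhds ((1 + 0) ^ d - (1 - 0) ^ d)) :=
    ((h0.const_add 1).pow d).sub ((h0.const_sub 1).pow d)
  have h2 : ((1:ℝ) + 0) ^ d - (1 - 0) ^ d = 0 := by simp
  rw [h2] at h1
  obtain ⟨r₀, hr₀⟩ := Filter.eventually_atTop.1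
    ((h1.eventually_le_const hη).and (Filter.eventually_gt_atTop 0))
  refine ⟨r₀, fun r hr => ?_⟩
  obtain ⟨h3, h4⟩ := hr₀ r hr
  have e1 : r + s = r * (1 + s / r) := by field_simp
  have e2 : r - s = r * (1 - s / r) := by field_simp
  rw [e1, e2, mul_pow, mul_pow, ← mul_sub, mul_comm η]
  gcongr

lemma cp_mean (d m : ℕ)
    (L : Submodule ℤ (EuclideanSpace ℝ (Fin d) × EuclideanSpace ℝ (Fin m)))
    [DiscreteTopology L] [IsZLattice ℝ L]
    (h : EuclideanSpace ℝ (Fin d) × EuclideanSpace ℝ (Fin m) → ℂ) (hm : Measurable h)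
    (hi : Integrable h) (Bd η : ℝ)
    (hBd : ∀ z, ‖∑' p : L, h (p.1 + z)‖ ≤ Bd)
    (hη : ∀ z w, ‖∑' p : L, h (p.1 + w) - ∑' p : L, h (p.1 + z)‖ ≤ η)
    (z : EuclideanSpace ℝ (Fin d) × EuclideanSpace ℝ (Fin m)) :
    ‖(ZLattice.covolume L volume) • (∑' p : L, h (p.1 + z)) - ∫ w, h w‖ ≤
      ZLattice.covolume L volume * η := by
  have := cp_haar d m
  let b := Module.Free.chooseBasis ℤ L
  set F := ZSpan.fundamentalDomain (b.ofZLatticeBasis ℝ L) with hF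
  have hFb : Bornology.IsBounded F := ZSpan.fundamentalDomain_isBounded _
  have hFfin : volume F < ⊤ := hFb.measure_lt_top
  have hFd : IsAddFundamentalDomain L F volume := ZLattice.isAddFundamentalDomain b volume
  rw [ZLattice.covolume_eq_measure_fundamentalDomain L volume hFd]
  have : MeasurableVAdd L (EuclideanSpace ℝ (Fin d) × EuclideanSpace ℝ (Fin m)) :=
    (inferInstance : MeasurableVAdd L.toAddSubgroup _)
  have : VAddInvariantMeasure L (EuclideanSpace ℝ (Fin d) × EuclideanSpace ℝ (Fin m)) volume :=
    (inferInstance : VAddInvariantMeasure L.toAddSubgroup _ volume)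
  have hmp : ∀ p : L, Measurable (fun w => h (p.1 + w)) := fun p =>
    hm.comp (measurable_const_add _)
  have hint : ∫ w, h w = ∫ w in F, ∑' p : L, h (p.1 + w) := by
    rw [integral_tsum (fun p => (hmp p).aestronglyMeasurable), hFd.integral_eq_tsum'' h hi]
    · rfl
    · have h2 := hFd.lintegral_eq_tsum'' (fun w => ‖h w‖ₑ)
      have h3 : ∫⁻ w, ‖h w‖ₑ ≠ ⊤ := hi.2.ne
      rw [h2] at h3
      exact h3
  have hMm : Measurable (fun w => ∑' p : L, h (p.1 + w)) := Measurable.tsum hmp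
  have : IsFiniteMeasure (volume.restrict F) := ⟨by simpa using hFfin⟩
  have hMi : IntegrableOn (fun w => ∑' p : L, h (p.1 + w)) F :=
    Integrable.of_bound hMm.aestronglyMeasurable Bd (ae_of_all _ hBd)
  have hconst : volume.real F • (∑' p : L, h (p.1 + z)) =
      ∫ w in F, ∑' p : L, h (p.1 + z) := by
    rw [setIntegral_const]
  rw [hconst, hint, ← integral_sub (integrable_const _) hMi, mul_comm]
  exact norm_setIntegral_le_of_norm_le_const hFfin (fun w _ => hη w z)

lemma cp_osc (d m : ℕ)
    (L : Submodule ℤ (EuclideanSpace ℝ (Fin d) × EuclideanSpace ℝ (Fin m)))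
    [DiscreteTopology L] [IsZLattice ℝ L]
    (hdense2 : Dense (Prod.snd '' (L : Set (EuclideanSpace ℝ (Fin d) × EuclideanSpace ℝ (Fin m)))))
    (f : EuclideanSpace ℝ (Fin m) → ℂ) (hf : Continuous f)
    (D α : ℝ) (hD : 0 < D) (hα : 0 < α)
    (hfD : ∀ y, ‖f y‖ ≤ D * (1 + ‖y‖) ^ (-((m:ℝ) + 1 + α))) (ε : ℝ) (hε : 0 < ε) :
    ∃ r₀ : ℝ, 1 ≤ r₀ ∧ ∀ r : ℝ, r₀ ≤ r → ∃ Bd : ℝ, 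
      (∀ z, ‖∑' p : L, (closedBall (0 : EuclideanSpace ℝ (Fin d)) r).indicator (fun _ => (1:ℂ))
        (p.1 + z).1 * f (p.1 + z).2‖ ≤ Bd) ∧
      ∀ z w, ‖∑' p : L, (closedBall (0 : EuclideanSpace ℝ (Fin d)) r).indicator (fun _ => (1:ℂ))
        (p.1 + w).1 * f (p.1 + w).2 - 
        ∑' p : L, (closedBall (0 : EuclideanSpace ℝ (Fin d)) r).indicator (fun _ => (1:ℂ))
        (p.1 + z).1 * f (p.1 + z).2‖ ≤ 
        ε * (volume (closedBall (0 : EuclideanSpace ℝ (Fin d)) r)).toReal := by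
  obtain ⟨V, hV, hvol⟩ := cp_ball_vol d
  obtain ⟨K, hK, hsum⟩ := cp_sum_bound d m L
  obtain ⟨δ, hδ, hδ1, hmod⟩ := cp_modulus f hf D ((m:ℝ) + 1) α hD (by positivity) hα hfD
    (ε / (2 * 2 ^ d * (K + 1))) (by positivity)
  obtain ⟨S, hS, hcov⟩ := cp_cover d m L hdense2 δ hδ
  set D' : ℝ := D * 2 ^ ((m:ℝ) + 1) with hD'
  have hD'0 : 0 < D' := by positivity
  obtain ⟨r₁, hr₁⟩ := cp_shell d (S + 1) (ε / (2 * (D' * K + 1))) (by positivity)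
  have hfH : ∀ y, ‖f y‖ ≤ D * (1 + ‖y‖) ^ (-((m:ℝ) + 1)) := fun y =>
    (hfD y).trans (by
      gcongr D * ?_
      exact Real.rpow_le_rpow_of_exponent_le (by linarith [norm_nonneg y]) (by linarith))
  refine ⟨max r₁ (S + 2), le_max_of_le_right (by linarith), fun r hr => ?_⟩
  have hrr : r₁ ≤ r := (le_max_left _ _).trans hr
  have hrS : S + 2 ≤ r := (le_max_right _ _).trans hr
  have hball := hsum (closedBall 0 r) (closedBall 0 (r + 1)) measurableSet_closedBall
    measure_closedBall_lt_top.ne (fun x hx => closedBall_subset_closedBall' (by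
      rw [mem_closedBall] at hx; linarith))
  have hshell := hsum (closedBall 0 (r + S) \ closedBall 0 (r - S))
    (closedBall 0 (r + S + 1) \ closedBall 0 (r - S - 1))
    (measurableSet_closedBall.diff measurableSet_closedBall)
    (ne_top_of_le_ne_top measure_closedBall_lt_top.ne (measure_mono Set.sdiff_subset))
    (fun x hx y hy => by
      simp only [Set.mem_sdiff, mem_closedBall, not_le, dist_zero_right] at hx hy ⊢
      have h1 := norm_sub_norm_le x y
      have h2 := norm_sub_norm_le y x
      rw [dist_eq_norm] at hy
      rw [norm_sub_rev] at h1
      constructor <;> linarith)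
  have hshellvol : (volume (closedBall (0 : EuclideanSpace ℝ (Fin d)) (r + S + 1) \
      closedBall 0 (r - S - 1))).toReal = ((r + (S + 1)) ^ d - (r - (S + 1)) ^ d) * V := by
    have := measureReal_sdiff (μ := (volume : Measure (EuclideanSpace ℝ (Fin d))))
      (closedBall_subset_closedBall (x := (0 : EuclideanSpace ℝ (Fin d)))
        (show r - S - 1 ≤ r + S + 1 by linarith)) measurableSet_closedBall
      measure_closedBall_lt_top.ne
    rw [← Measure.real, this, Measure.real, Measure.real, hvol _ (by linarith),
      hvol _ (by linarith)]
    ring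
  have hterm : ∀ z, ∀ p : L, ‖(closedBall (0 : EuclideanSpace ℝ (Fin d)) r).indicator
      (fun _ => (1:ℂ)) (p.1 + z).1 * f (p.1 + z).2‖ ≤ D *
      ((closedBall (0 : EuclideanSpace ℝ (Fin d)) r).indicator
      (fun _ => (1:ℝ)) (p.1.1 + z.1) * (1 + ‖p.1.2 + z.2‖) ^ (-((m:ℝ) + 1))) := by
    intro z p
    by_cases hp : p.1.1 + z.1 ∈ closedBall (0 : EuclideanSpace ℝ (Fin d)) r
    · simp only [Prod.fst_add, Prod.snd_add, Set.indicator_of_mem hp, one_mul]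
      exact hfH _
    · simp [Prod.fst_add, Prod.snd_add, Set.indicator_of_notMem hp]
  have hsummable : ∀ z, Summable (fun p : L =>
      (closedBall (0 : EuclideanSpace ℝ (Fin d)) r).indicator
      (fun _ => (1:ℂ)) (p.1 + z).1 * f (p.1 + z).2) := fun z =>
    Summable.of_norm_bounded ((hball z).1.mul_left D) (hterm z)
  refine ⟨D * (K * (volume (closedBall (0 : EuclideanSpace ℝ (Fin d)) (r + 1))).toReal),
    fun z => ?_, fun z w => ?_⟩
  · refine (tsum_of_norm_bounded ((hball z).1.mul_left D).hasSum (hterm z)).trans ?_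
    rw [tsum_mul_left]
    exact mul_le_mul_of_nonneg_left (hball z).2 hD.le
  · obtain ⟨q, hq1, hq2⟩ := hcov (w - z)
    set w' := w - q.1 with hw'
    have hper : ∑' p : L, (closedBall (0 : EuclideanSpace ℝ (Fin d)) r).indicator (fun _ => (1:ℂ))
        (p.1 + w).1 * f (p.1 + w).2 = 
        ∑' p : L, (closedBall (0 : EuclideanSpace ℝ (Fin d)) r).indicator (fun _ => (1:ℂ))
        (p.1 + w').1 * f (p.1 + w').2 := by
      rw [← (Equiv.addRight q).tsum_eq (fun p : L =>
        (closedBall (0 : EuclideanSpace ℝ (Fin d)) r).indicator (fun _ => (1:ℂ))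
        (p.1 + w').1 * f (p.1 + w').2)]
      refine tsum_congr (fun p => ?_)
      have e : ((Equiv.addRight q) p).1 + w' = p.1 + w := by
        simp only [Equiv.coe_addRight, hw', Submodule.coe_add]
        abel
      rw [e]
    have h1 : ‖w'.1 - z.1‖ ≤ S := by
      have e : w'.1 - z.1 = (w - z).1 - q.1.1 := by simp [hw']; abel
      rw [e]; exact hq1
    have h2 : ‖w'.2 - z.2‖ ≤ δ := by
      have e : w'.2 - z.2 = (w - z).2 - q.1.2 := by simp [hw']; abel
      rw [e]; exact hq2
    rw [hper, ← (hsummable w').tsum_sub (hsummable z)]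
    set ε₁ := ε / (2 * 2 ^ d * (K + 1)) with hε₁
    have hε₁0 : 0 < ε₁ := by positivity
    have hb := ((hball z).1.mul_left ε₁).add ((hshell z).1.mul_left D')
    refine (tsum_of_norm_bounded hb.hasSum (fun p => ?_)).trans ?_
    · simp only [Prod.fst_add, Prod.snd_add]
      have hd2 : ‖(p.1.2 + w'.2) - (p.1.2 + z.2)‖ ≤ δ := by
        rwa [add_sub_add_left_eq_sub]
      have hd1 : ‖(p.1.1 + w'.1) - (p.1.1 + z.1)‖ ≤ S := by
        rwa [add_sub_add_left_eq_sub]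
      generalize p.1.1 + w'.1 = x' at *
      generalize p.1.1 + z.1 = x at *
      generalize p.1.2 + w'.2 = y' at *
      generalize p.1.2 + z.2 = y at *
      have hm := hmod y y' hd2
      have hfy' : ‖f y'‖ ≤ D' * (1 + ‖y‖) ^ (-((m:ℝ) + 1)) := by
        refine (hfH y').trans ?_
        rw [hD', mul_assoc]
        gcongr
        exact cp_weight _ (by positivity) _ _ (hd2.trans hδ1)
      have hfy : ‖f y‖ ≤ D' * (1 + ‖y‖) ^ (-((m:ℝ) + 1)) := by
        refine (hfH y).trans ?_
        gcongr ?_ * _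
        rw [hD']
        refine le_mul_of_one_le_right hD.le (Real.one_le_rpow (by norm_num) (by positivity))
      have hpos : 0 ≤ (1 + ‖y‖) ^ (-((m:ℝ) + 1)) := by positivity
      have n1 := norm_sub_norm_le x' x
      have n2 := norm_sub_norm_le x x'
      rw [norm_sub_rev] at n2
      by_cases hx : x ∈ closedBall (0 : EuclideanSpace ℝ (Fin d)) r <;>
      by_cases hx' : x' ∈ closedBall (0 : EuclideanSpace ℝ (Fin d)) r
      · rw [Set.indicator_of_mem hx, Set.indicator_of_mem hx, Set.indicator_of_mem hx', one_mul,
          one_mul, one_mul]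
        have : 0 ≤ D' * ((closedBall (0 : EuclideanSpace ℝ (Fin d)) (r + S) \
            closedBall 0 (r - S)).indicator (fun _ => (1:ℝ)) x *
            (1 + ‖y‖) ^ (-((m:ℝ) + 1))) :=
          mul_nonneg hD'0.le (mul_nonneg (Set.indicator_nonneg (fun _ _ => zero_le_one) _) hpos)
        linarith
      · have hxs : x ∈ closedBall (0 : EuclideanSpace ℝ (Fin d)) (r + S) \
            closedBall 0 (r - S) := by
          simp only [Set.mem_sdiff, mem_closedBall, not_le, dist_zero_right] at hx hx' ⊢
          constructor <;> linarith
        rw [Set.indicator_of_mem hx, Set.indicator_of_mem hx, Set.indicator_of_notMem hx',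
          Set.indicator_of_mem hxs, one_mul, one_mul, zero_mul, zero_sub, norm_neg]
        nlinarith [mul_nonneg hε₁0.le hpos]
      · have hxs : x ∈ closedBall (0 : EuclideanSpace ℝ (Fin d)) (r + S) \
            closedBall 0 (r - S) := by
          simp only [Set.mem_sdiff, mem_closedBall, not_le, dist_zero_right] at hx hx' ⊢
          constructor <;> linarith
        rw [Set.indicator_of_notMem hx, Set.indicator_of_notMem hx, Set.indicator_of_mem hx',
          Set.indicator_of_mem hxs, one_mul, one_mul, zero_mul, zero_mul, sub_zero]
        linarith
      · rw [Set.indicator_of_notMem hx, Set.indicator_of_notMem hx, Set.indicator_of_notMem hx']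
        have : 0 ≤ D' * ((closedBall (0 : EuclideanSpace ℝ (Fin d)) (r + S) \
            closedBall 0 (r - S)).indicator (fun _ => (1:ℝ)) x *
            (1 + ‖y‖) ^ (-((m:ℝ) + 1))) :=
          mul_nonneg hD'0.le (mul_nonneg (Set.indicator_nonneg (fun _ _ => zero_le_one) _) hpos)
        simpa using this
    · rw [((hball z).1.mul_left ε₁).tsum_add ((hshell z).1.mul_left D'), tsum_mul_left,
        tsum_mul_left]
      have b1 := (hball z).2
      have b2 := (hshell z).2
      rw [hvol _ (by linarith)] at b1
      rw [hshellvol] at b2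
      rw [hvol r (by linarith)]
      have hr0 : 0 < r := by linarith
      have c1 : (r + 1) ^ d ≤ 2 ^ d * r ^ d := by
        rw [← mul_pow]
        gcongr
        linarith
      have c2 := hr₁ r hrr
      have f1 : ε₁ * (K * ((r + 1) ^ d * V)) ≤ ε / 2 * (r ^ d * V) := by
        calc ε₁ * (K * ((r + 1) ^ d * V)) ≤ ε₁ * ((K + 1) * ((2 ^ d * r ^ d) * V)) := by
              gcongr; linarith
          _ = _ := by rw [hε₁]; field_simp
      have f2 : D' * (K * (((r + (S + 1)) ^ d - (r - (S + 1)) ^ d) * V)) ≤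
          ε / 2 * (r ^ d * V) := by
        calc D' * (K * (((r + (S + 1)) ^ d - (r - (S + 1)) ^ d) * V)) 
            ≤ D' * (K * ((ε / (2 * (D' * K + 1)) * r ^ d) * V)) := by gcongr
          _ = (D' * K) * (ε / (2 * (D' * K + 1)) * r ^ d * V) := by ring
          _ ≤ (D' * K + 1) * (ε / (2 * (D' * K + 1)) * r ^ d * V) := by
              gcongr; linarith
          _ = _ := by
              have : 0 < D' * K + 1 := by positivity
              field_simp
      have g1 := mul_le_mul_of_nonneg_left b1 hε₁0.le
      have g2 := mul_le_mul_of_nonneg_left b2 hD'0.le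
      linarith

/-- Weyl's theorem for dense point sets: the ball averages of f(x*)
over the dense projected module L converge, uniformly in the ball center a, to the
normalized integral of f over all of internal space. -/
theorem weyl_dense_point_sets (d m : ℕ)
    (L : Submodule ℤ (EuclideanSpace ℝ (Fin d) × EuclideanSpace ℝ (Fin m)))
    [DiscreteTopology L] [IsZLattice ℝ L]
    (hinj1 : Set.InjOn Prod.fst (L : Set (EuclideanSpace ℝ (Fin d) × EuclideanSpace ℝ (Fin m))))
    (hdense1 : Dense (physL d m L))
    (hinj2 : Set.InjOn Prod.snd (L : Set (EuclideanSpace ℝ (Fin d) × EuclideanSpace ℝ (Fin m))))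
    (hdense2 : Dense (Prod.snd '' (L : Set (EuclideanSpace ℝ (Fin d) × EuclideanSpace ℝ (Fin m)))))
    (star : EuclideanSpace ℝ (Fin d) → EuclideanSpace ℝ (Fin m))
    (hstar : ∀ p ∈ L, star (Prod.fst p) = Prod.snd p)
    (f : EuclideanSpace ℝ (Fin m) → ℂ) (hf : Continuous f)
    (C α : ℝ) (hC : 0 < C) (hα : 0 < α)
    (hdecay : ∀ x : EuclideanSpace ℝ (Fin m), ‖x‖ ^ ((m : ℝ) + 1 + α) * ‖f x‖ ≤ C) :
    ∀ ε : ℝ, 0 < ε → ∃ r₀ : ℝ, ∀ r : ℝ, r₀ ≤ r → ∀ a : EuclideanSpace ℝ (Fin d),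
      ‖(volume (closedBall (0 : EuclideanSpace ℝ (Fin d)) r)).toReal⁻¹ •
          (∑' x : ((physL d m L ∩ closedBall a r : Set (EuclideanSpace ℝ (Fin d)))),
            f (star (x : EuclideanSpace ℝ (Fin d)))) -
        (ZLattice.covolume L volume)⁻¹ • ∫ u, f u‖ ≤ ε := by
  intro ε hε
  have := cp_haar d m
  obtain ⟨D, hD, hfD⟩ := cp_decay f hf C _ hC (by positivity) hdecay
  obtain ⟨r₀, hr₀, h⟩ := cp_osc d m L hdense2 f hf D α hD hα hfD ε hε
  refine ⟨r₀, fun r hr a => ?_⟩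
  obtain ⟨Bd, hBd, hosc⟩ := h r hr
  obtain ⟨V, hV, hvol⟩ := cp_ball_vol d
  set v := (volume (closedBall (0 : EuclideanSpace ℝ (Fin d)) r)).toReal with hv
  have hv0 : 0 < v := by
    have : 0 < r := by linarith
    rw [hv, hvol r this.le]; positivity
  set c := ZLattice.covolume L volume with hc
  have hc0 : 0 < c := ZLattice.covolume_pos L volume
  have hfi : Integrable f := by
    refine Integrable.mono' ((integrable_one_add_norm (r := (m:ℝ) + 1 + α) ?_).const_mul D)
      hf.aestronglyMeasurable (ae_of_all _ hfD)
    simp; linarith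
  have hTi : Integrable ((closedBall (0 : EuclideanSpace ℝ (Fin d)) r).indicator
      (fun _ => (1:ℂ))) volume := by
    rw [integrable_indicator_iff measurableSet_closedBall]
    exact integrableOn_const measure_closedBall_lt_top.ne
  set g : EuclideanSpace ℝ (Fin d) × EuclideanSpace ℝ (Fin m) → ℂ := fun w =>
    (closedBall (0 : EuclideanSpace ℝ (Fin d)) r).indicator (fun _ => (1:ℂ)) w.1 * f w.2 with hg
  have hgi : Integrable g volume := hTi.mul_prod hfi
  have hgm : Measurable g :=
    ((measurable_const.indicator measurableSet_closedBall).comp measurable_fst).mul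
      (hf.measurable.comp measurable_snd)
  have hgint : ∫ w, g w = v • ∫ u, f u := by
    have := integral_prod_mul (μ := (volume : Measure (EuclideanSpace ℝ (Fin d))))
      (ν := (volume : Measure (EuclideanSpace ℝ (Fin m))))
      ((closedBall (0 : EuclideanSpace ℝ (Fin d)) r).indicator (fun _ => (1:ℂ))) f
    rw [← Measure.volume_eq_prod] at this
    rw [hg, this, integral_indicator measurableSet_closedBall]
    simp [Measure.real, hv]
  have hmean := cp_mean d m L g hgm hgi Bd (ε * v) hBd hosc (-a, 0)
  have hsum : (∑' x : ((physL d m L ∩ closedBall a r : Set (EuclideanSpace ℝ (Fin d)))),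
      f (star (x : EuclideanSpace ℝ (Fin d)))) = ∑' p : L, g (p.1 + (-a, 0)) := by
    have hex : ∀ x : ((physL d m L ∩ closedBall a r : Set (EuclideanSpace ℝ (Fin d)))),
        ∃ p : L, p.1.1 = x.1 := fun x => by
      obtain ⟨p, hp, hpx⟩ := x.2.1
      exact ⟨⟨p, hp⟩, hpx⟩
    choose i hi using hex
    have hinj : Function.Injective i := fun x y hxy => by
      apply Subtype.ext
      rw [← hi x, ← hi y, hxy]
    rw [← hinj.tsum_eq (f := fun p : L => g (p.1 + (-a, 0)))]
    · refine tsum_congr (fun x => ?_)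
      have hmem : (i x).1.1 + -a ∈ closedBall (0 : EuclideanSpace ℝ (Fin d)) r := by
        rw [hi x, ← sub_eq_add_neg, mem_closedBall_zero_iff, ← dist_eq_norm]
        exact x.2.2
      simp only [hg, Prod.fst_add, Prod.snd_add, Set.indicator_of_mem hmem, one_mul, add_zero]
      rw [← hi x, hstar _ (i x).2]
    · intro p hp
      have hmem : p.1.1 + -a ∈ closedBall (0 : EuclideanSpace ℝ (Fin d)) r := by
        by_contra hcon
        apply hp
        simp only [hg, Prod.fst_add, Set.indicator_of_notMem hcon, zero_mul]
      have hx : p.1.1 ∈ physL d m L ∩ closedBall a r := by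
        refine ⟨⟨p.1, p.2, rfl⟩, ?_⟩
        rwa [← sub_eq_add_neg, mem_closedBall_zero_iff, ← dist_eq_norm] at hmem
      refine ⟨⟨_, hx⟩, Subtype.ext (hinj1 (i ⟨_, hx⟩).2 p.2 (hi ⟨_, hx⟩))⟩
  rw [hsum]
  rw [hgint] at hmean
  set M := ∑' p : L, g (p.1 + (-a, 0)) with hM
  have e : v⁻¹ • M - c⁻¹ • ∫ u, f u = (v⁻¹ * c⁻¹) • (c • M - v • ∫ u, f u) := by
    rw [smul_sub, smul_smul, smul_smul]
    congr 2 <;> field_simp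
  rw [e, norm_smul, Real.norm_of_nonneg (by positivity)]
  calc v⁻¹ * c⁻¹ * ‖c • M - v • ∫ u, f u‖ ≤ v⁻¹ * c⁻¹ * (c * (ε * v)) := by gcongr
    _ = ε := by field_simp
end

section
/- Existence of weighted density: under the dense cut-and-project hypotheses (both projections injective, both images dense), with f : ℝ^m → ℂ continuous and |x|^{m+1+α}|f(x)| ≤ C, the weighted density ρ = lim_{r→∞} ω(B_r)/vol(B_r) exists and equals (1/|det(L̃)|) ∫_{ℝ^m} f(u) du, where ω = ∑_{x∈L} f(x*) δ_x. -/
open MeasureTheory Metric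

namespace DCW

set_option linter.unusedSectionVars false

open Filter Topology

/-- the weight -/
noncomputable def w {F : Type*} [NormedAddCommGroup F] (n : ℕ) (y : F) : ℝ := ((1 + ‖y‖) ^ n)⁻¹

lemma w_pos {F : Type*} [NormedAddCommGroup F] (n : ℕ) (y : F) : 0 < w n y := by unfold w; positivity

lemma w_le {F : Type*} [NormedAddCommGroup F] (n : ℕ) (y z : F) (h : ‖z - y‖ ≤ 1) : w n y ≤ 2 ^ n * w n z := by
  unfold w
  rw [← div_eq_mul_inv, ← one_div, div_le_div_iff₀ (by positivity) (by positivity), one_mul,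
    ← mul_pow]
  have : ‖z‖ ≤ ‖y‖ + 1 := by
    have := norm_add_le y (z - y)
    rw [add_sub_cancel] at this
    linarith
  gcongr
  nlinarith [norm_nonneg y]

lemma w_cont {F : Type*} [NormedAddCommGroup F] (n : ℕ) : Continuous (w n : F → ℝ) := by
  unfold w
  refine Continuous.inv₀ (by fun_prop) (fun x => by positivity)

lemma sep {E : Type*} [NormedAddCommGroup E] (L : Submodule ℤ E) [DiscreteTopology L] :
    ∃ δ : ℝ, 0 < δ ∧ δ ≤ 1 ∧ ∀ p q : L, p ≠ q → 2 * δ ≤ dist (p : E) q := by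
  have h : ({0} : Set L) ∈ 𝓝 (0 : L) := by simp
  obtain ⟨ε, hε, h⟩ := Metric.mem_nhds_iff.1 h
  refine ⟨min 1 (ε / 2), by positivity, min_le_left _ _, fun p q hpq => ?_⟩
  by_contra hlt
  push Not at hlt
  have h2 : min 1 (ε / 2) ≤ ε / 2 := min_le_right _ _
  have : p - q ∈ ball (0 : L) ε := by
    rw [mem_ball, dist_zero_right]
    have : ‖p - q‖ = dist (p : E) q := by rw [dist_eq_norm]; rfl
    rw [this]; linarith
  have := h this
  simp [sub_eq_zero] at this
  exact hpq this

section

variable {E F : Type*} [NormedAddCommGroup E] [NormedSpace ℝ E] [FiniteDimensional ℝ E]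
  [MeasureSpace E] [BorelSpace E] [(volume : Measure E).IsAddHaarMeasure]
  [NormedAddCommGroup F] [NormedSpace ℝ F] [FiniteDimensional ℝ F]
  [MeasureSpace F] [BorelSpace F] [(volume : Measure F).IsAddHaarMeasure]

lemma w_int : Integrable (w (Module.finrank ℝ F + 1) : F → ℝ) := by
  have := integrable_one_add_norm (E := F) (μ := volume)
    (r := ((Module.finrank ℝ F + 1 : ℕ) : ℝ)) (by push_cast; linarith)
  refine this.congr (Eventually.of_forall fun x => ?_)
  have : 0 ≤ 1 + ‖x‖ := by positivity
  simp only [w]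
  rw [Real.rpow_neg this, Real.rpow_natCast]

lemma haar_prod : (volume : Measure (E × F)).IsAddHaarMeasure :=
  (inferInstance : ((volume : Measure E).prod (volume : Measure F)).IsAddHaarMeasure)

/-- Key counting bound (extended reals). -/
lemma keyE (L : Submodule ℤ (E × F)) [DiscreteTopology L] [Countable L] :
    ∃ K : ENNReal, K ≠ ⊤ ∧ ∀ (A B : Set E) (v : E × F), MeasurableSet B →
      (∀ x ∈ A, ∀ z, dist z x ≤ 1 → z ∈ B) →
      ∑' p : L, (A.indicator (fun _ => ENNReal.ofReal
        (w (Module.finrank ℝ F + 1) ((p : E × F).2 + v.2))) ((p : E × F).1 + v.1))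
        ≤ K * volume B := by
  have hhaar : (volume : Measure (E × F)).IsAddHaarMeasure := haar_prod
  set n := Module.finrank ℝ F + 1 with hn
  obtain ⟨δ, hδ, hδ1, hsep⟩ := sep L
  set W : F → ENNReal := fun y => ENNReal.ofReal (w n y) with hW
  have hWm : Measurable W := (w_cont n).measurable.ennreal_ofReal
  have hWfin : ∫⁻ y, W y ≠ ⊤ := by
    have h := (w_int (F := F)).lintegral_lt_top
    exact h.ne
  set V : ENNReal := volume (ball (0 : E × F) δ) with hV
  have hV0 : V ≠ 0 := (measure_ball_pos _ _ hδ).ne'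
  have hVt : V ≠ ⊤ := measure_ball_lt_top.ne
  refine ⟨V⁻¹ * (ENNReal.ofReal (2 ^ n) * ∫⁻ y, W y), ?_, ?_⟩
  · exact ENNReal.mul_ne_top (ENNReal.inv_ne_top.2 hV0)
      (ENNReal.mul_ne_top ENNReal.ofReal_ne_top hWfin)
  intro A B v hB hAB
  set H : E × F → ENNReal := fun z => ENNReal.ofReal (2 ^ n) *
    (B.indicator (fun _ => 1) z.1 * W z.2) with hH
  have hterm : ∀ p : L, V * (A.indicator (fun _ => W ((p : E × F).2 + v.2)) ((p : E × F).1 + v.1))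
      ≤ ∫⁻ z in ball ((p : E × F) + v) δ, H z := by
    intro p
    by_cases hp : (p : E × F).1 + v.1 ∈ A
    swap
    · simp [hp]
    rw [Set.indicator_of_mem hp]
    have hVp : V = volume (ball ((p : E × F) + v) δ) := by
      exact (Measure.addHaar_ball_center _ _ _).symm
    rw [hVp, mul_comm, ← setLIntegral_const]
    refine setLIntegral_mono' measurableSet_ball fun z hz => ?_
    rw [mem_ball, Prod.dist_eq, max_lt_iff] at hz
    have h1 : z.1 ∈ B := hAB _ hp _ (by have := hz.1; simp only [Prod.fst_add] at this; linarith)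
    have h2 := w_le n ((p : E × F).2 + v.2) z.2 (by
      have := hz.2; simp only [Prod.snd_add] at this; rw [← dist_eq_norm]; linarith)
    simp only [hH, hW, Set.indicator_of_mem h1, one_mul]
    rw [← ENNReal.ofReal_mul (by positivity)]
    exact ENNReal.ofReal_le_ofReal h2
  have hdisj : Pairwise (Function.onFun Disjoint (fun p : L => ball ((p : E × F) + v) δ)) := by
    intro p q hpq
    refine ball_disjoint_ball ?_
    rw [dist_add_right]
    linarith [hsep p q hpq]
  have hsum : V * ∑' p : L, (A.indicator (fun _ => W ((p : E × F).2 + v.2)) ((p : E × F).1 + v.1))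
      ≤ ENNReal.ofReal (2 ^ n) * (volume B * ∫⁻ y, W y) := by
    rw [← ENNReal.tsum_mul_left]
    calc _ ≤ ∑' p : L, ∫⁻ z in ball ((p : E × F) + v) δ, H z := ENNReal.tsum_le_tsum hterm
      _ = ∫⁻ z in ⋃ p : L, ball ((p : E × F) + v) δ, H z :=
          (lintegral_iUnion (fun _ => measurableSet_ball) hdisj _).symm
      _ ≤ ∫⁻ z, H z := setLIntegral_le_lintegral _ _
      _ = _ := by
        have hi : Measurable (B.indicator (fun _ => (1 : ENNReal))) := measurable_const.indicator hB
        simp only [hH]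
        rw [lintegral_const_mul' _ _ ENNReal.ofReal_ne_top]
        congr 1
        have := lintegral_prod_mul (μ := (volume : Measure E)) (ν := (volume : Measure F))
          hi.aemeasurable hWm.aemeasurable
        rw [← Measure.volume_eq_prod] at this
        rw [this, lintegral_indicator_const hB, one_mul]
  have := (ENNReal.mul_le_iff_le_inv hV0 hVt).1 hsum
  refine this.trans (le_of_eq ?_)
  ring

/-- Key counting bound (reals). -/
lemma key (L : Submodule ℤ (E × F)) [DiscreteTopology L] [Countable L] :
    ∃ K : ℝ, 0 < K ∧ ∀ (A B : Set E) (v : E × F) (c : ℝ) (h : L → ℂ), MeasurableSet B →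
      volume B ≠ ⊤ → 0 ≤ c →
      (∀ x ∈ A, ∀ z, dist z x ≤ 1 → z ∈ B) →
      (∀ p : L, (p : E × F).1 + v.1 ∉ A → h p = 0) →
      (∀ p : L, (p : E × F).1 + v.1 ∈ A →
        ‖h p‖ ≤ c * w (Module.finrank ℝ F + 1) ((p : E × F).2 + v.2)) →
      Summable h ∧ ‖∑' p, h p‖ ≤ c * K * volume.real B := by
  obtain ⟨K, hK, hkey⟩ := keyE L
  refine ⟨K.toReal + 1, by positivity, ?_⟩
  intro A B v c h hB hBt hc hAB h0 h1
  have := hkey A B v hB hAB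
  have h2 : ∑' p, ‖h p‖ₑ ≤ ENNReal.ofReal c * (K * volume B) := by
    refine le_trans ?_ (mul_le_mul_right this _)
    rw [← ENNReal.tsum_mul_left]
    refine ENNReal.tsum_le_tsum fun p => ?_
    by_cases hp : (p : E × F).1 + v.1 ∈ A
    · rw [Set.indicator_of_mem hp, ← ENNReal.ofReal_mul hc, ← ofReal_norm]
      exact ENNReal.ofReal_le_ofReal (h1 p hp)
    · simp [h0 p hp]
  have hfin : ENNReal.ofReal c * (K * volume B) ≠ ⊤ :=
    ENNReal.mul_ne_top ENNReal.ofReal_ne_top (ENNReal.mul_ne_top hK hBt)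
  have hs : Summable (fun p => ‖h p‖) := by
    have := ENNReal.summable_toReal (ne_top_of_le_ne_top hfin h2)
    simpa using this
  refine ⟨hs.of_norm, ?_⟩
  have h3 : ‖∑' p, h p‖ₑ ≤ ENNReal.ofReal c * (K * volume B) :=
    enorm_tsum_le_tsum_enorm.trans h2
  have h4 := ENNReal.toReal_mono hfin h3
  rw [toReal_enorm, ENNReal.toReal_mul, ENNReal.toReal_mul, ENNReal.toReal_ofReal hc] at h4
  refine h4.trans ?_
  rw [mul_assoc]
  change _ ≤ c * ((K.toReal + 1) * (volume B).toReal)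
  gcongr
  linarith

end

section decay

variable {F : Type*} [NormedAddCommGroup F] [ProperSpace F]

lemma f_tail (n : ℕ) (f : F → ℂ) (C α : ℝ) (hα : 0 < α)
    (hdecay : ∀ x : F, ‖x‖ ^ ((n : ℝ) + α) * ‖f x‖ ≤ C) (ε : ℝ) (hε : 0 < ε) :
    ∃ R : ℝ, 1 ≤ R ∧ ∀ y, R ≤ ‖y‖ → ‖f y‖ ≤ ε * w n y := by
  have h1 := (tendsto_rpow_atTop hα).eventually_ge_atTop (2 ^ n * C / ε)
  obtain ⟨R, hR⟩ := ((h1.and (eventually_ge_atTop 1)).exists_forall_of_atTop)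
  refine ⟨max R 1, le_max_right _ _, fun y hy => ?_⟩
  obtain ⟨h2, h3⟩ := hR ‖y‖ ((le_max_left _ _).trans hy)
  have hpos : 0 < ‖y‖ := by linarith
  have h4 := hdecay y
  rw [Real.rpow_add hpos, Real.rpow_natCast] at h4
  have h5 : 0 < ‖y‖ ^ α := Real.rpow_pos_of_pos hpos _
  rw [div_le_iff₀ hε] at h2
  unfold w
  rw [← div_eq_mul_inv, le_div_iff₀ (by positivity)]
  refine le_of_mul_le_mul_right ?_ h5
  have h6 : (1 + ‖y‖) ^ n ≤ 2 ^ n * ‖y‖ ^ n := by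
    rw [← mul_pow]; gcongr; linarith
  calc ‖f y‖ * (1 + ‖y‖) ^ n * ‖y‖ ^ α ≤ ‖f y‖ * (2 ^ n * ‖y‖ ^ n) * ‖y‖ ^ α := by gcongr
    _ = 2 ^ n * (‖y‖ ^ n * ‖y‖ ^ α * ‖f y‖) := by ring
    _ ≤ 2 ^ n * C := by gcongr
    _ ≤ ε * ‖y‖ ^ α := by linarith

lemma w_ge (n : ℕ) (R : ℝ) (y : F) (h : ‖y‖ ≤ R) : ((1 + R) ^ n)⁻¹ ≤ w n y := by
  unfold w
  gcongr

lemma f_bound (n : ℕ) (f : F → ℂ) (hf : Continuous f) (C α : ℝ) (hα : 0 < α)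
    (hdecay : ∀ x : F, ‖x‖ ^ ((n : ℝ) + α) * ‖f x‖ ≤ C) :
    ∃ M : ℝ, 0 < M ∧ ∀ y, ‖f y‖ ≤ M * w n y := by
  obtain ⟨R, hR1, hR⟩ := f_tail n f C α hα hdecay 1 one_pos
  obtain ⟨M, hM⟩ := (isCompact_closedBall (0 : F) R).exists_bound_of_continuousOn hf.continuousOn
  refine ⟨1 + |M| * (1 + R) ^ n, by positivity, fun y => ?_⟩
  have hw := w_pos n y
  rcases le_total R ‖y‖ with h | h
  · refine (hR y h).trans ?_
    gcongr
    have : 0 ≤ |M| * (1 + R) ^ n := by positivity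
    linarith
  · have h1 := hM y (by simpa using h)
    have h2 := w_ge n R y h
    calc ‖f y‖ ≤ |M| := h1.trans (le_abs_self _)
      _ = |M| * (1 + R) ^ n * ((1 + R) ^ n)⁻¹ := by
        have : (1 + R) ^ n ≠ 0 := by positivity
        field_simp
      _ ≤ |M| * (1 + R) ^ n * w n y := by gcongr
      _ ≤ _ := by linarith

lemma f_unif (n : ℕ) (f : F → ℂ) (hf : Continuous f) (C α : ℝ) (hα : 0 < α)
    (hdecay : ∀ x : F, ‖x‖ ^ ((n : ℝ) + α) * ‖f x‖ ≤ C) (ε : ℝ) (hε : 0 < ε) :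
    ∃ η : ℝ, 0 < η ∧ ∀ t y, ‖t‖ < η → ‖f (y + t) - f y‖ ≤ ε * w n y := by
  obtain ⟨R, hR1, hR⟩ := f_tail n f C α hα hdecay (ε / (2 ^ n + 1)) (by positivity)
  have hu := (isCompact_closedBall (0 : F) (R + 2)).uniformContinuousOn_of_continuous
    hf.continuousOn
  rw [Metric.uniformContinuousOn_iff] at hu
  obtain ⟨η, hη, hu⟩ := hu (ε * ((1 + (R + 1)) ^ n)⁻¹) (by positivity)
  refine ⟨min η 1, by positivity, fun t y ht => ?_⟩
  rw [lt_min_iff] at ht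
  have h1 := norm_add_le y t
  have h2 : ‖y‖ ≤ ‖y + t‖ + ‖t‖ := by simpa using norm_sub_le (y + t) t
  rcases le_total (R + 1) ‖y‖ with h | h
  · have h3 := hR y (by linarith)
    have h4 := hR (y + t) (by linarith)
    have h5 := w_le n (y + t) y (by simpa using ht.2.le)
    have hw := w_pos n y
    calc ‖f (y + t) - f y‖ ≤ ‖f (y + t)‖ + ‖f y‖ := norm_sub_le _ _
      _ ≤ ε / (2 ^ n + 1) * (2 ^ n * w n y) + ε / (2 ^ n + 1) * w n y := by
        refine add_le_add (h4.trans ?_) h3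
        gcongr
      _ = ε * w n y := by field_simp
  · have h3 := hu (y + t) (by simp; linarith) y (by simp; linarith) (by simpa using ht.1)
    rw [dist_eq_norm] at h3
    refine h3.le.trans ?_
    have := w_ge n (R + 1) y h
    gcongr

end decay

section main

variable {E F : Type*} [NormedAddCommGroup E] [NormedSpace ℝ E] [FiniteDimensional ℝ E]
  [MeasureSpace E] [BorelSpace E] [(volume : Measure E).IsAddHaarMeasure]
  [NormedAddCommGroup F] [NormedSpace ℝ F] [FiniteDimensional ℝ F]
  [MeasureSpace F] [BorelSpace F] [(volume : Measure F).IsAddHaarMeasure]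

/-- summand of the translated sum -/
noncomputable def G {E F : Type*} [NormedAddCommGroup E] (f : F → ℂ) (r : ℝ) (z : E × F) : ℂ :=
  (closedBall (0 : E) r).indicator (fun _ => f z.2) z.1

/-- The translated sum. -/
noncomputable def T {E F : Type*} [NormedAddCommGroup E] [NormedAddCommGroup F]
    (L : Submodule ℤ (E × F)) (f : F → ℂ) (r : ℝ) (v : E × F) : ℂ :=
  ∑' p : L, G f r ((p : E × F) + v)

lemma T_periodic {E F : Type*} [NormedAddCommGroup E] [NormedAddCommGroup F]
    (L : Submodule ℤ (E × F)) (f : F → ℂ) (r : ℝ) (v : E × F) (q : L) :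
    T L f r (v - q) = T L f r v := by
  unfold T
  rw [← (Equiv.addRight q).tsum_eq (fun p : L => G f r ((p : E × F) + (v - (q : E × F))))]
  refine tsum_congr fun p => ?_
  simp

/-- volume of balls -/
noncomputable def N (E : Type*) [NormedAddCommGroup E] [MeasureSpace E] (r : ℝ) : ℝ :=
  (volume : Measure E).real (closedBall (0 : E) r)

lemma N_ratio (b : ℝ) : Tendsto (fun r => (N E r)⁻¹ * N E (r + b)) atTop (𝓝 1) := by
  have h : Tendsto (fun r : ℝ => (1 + b / r) ^ Module.finrank ℝ E) atTop (𝓝 1) := by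
    have := ((tendsto_const_nhds (x := (1 : ℝ))).add
      ((tendsto_const_nhds (x := b)).div_atTop tendsto_id)).pow (Module.finrank ℝ E)
    simpa using this
  refine h.congr' ?_
  filter_upwards [eventually_gt_atTop 0, eventually_ge_atTop (-b)] with r hr hb
  unfold N
  rw [Measure.addHaar_real_closedBall _ _ hr.le,
    Measure.addHaar_real_closedBall _ _ (by linarith : 0 ≤ r + b)]
  have : 0 < (volume : Measure E).real (ball 0 1) :=
    ENNReal.toReal_pos (measure_ball_pos _ _ one_pos).ne' measure_ball_lt_top.ne
  have h2 : 1 + b / r = (r + b) / r := by field_simp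
  rw [h2, div_pow]
  field_simp

lemma N_pos {r : ℝ} (hr : 0 < r) : 0 < N E r :=
    ENNReal.toReal_pos (measure_closedBall_pos _ _ hr).ne' measure_closedBall_lt_top.ne

lemma G_norm_le (f : F → ℂ) (M : ℝ) (n : ℕ) (hM : 0 < M)
    (hf : ∀ y, ‖f y‖ ≤ M * w n y) (r : ℝ) (z : E × F) : ‖G f r z‖ ≤ M * w n z.2 := by
  have := mul_pos hM (w_pos n z.2)
  unfold G
  by_cases h : z.1 ∈ closedBall (0 : E) r
  · rw [Set.indicator_of_mem h]; exact hf _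
  · rw [Set.indicator_of_notMem h]; simpa using this.le

lemma T_bound (L : Submodule ℤ (E × F)) [DiscreteTopology L] [Countable L] (f : F → ℂ)
    (M : ℝ) (hM : 0 < M) (hf : ∀ y, ‖f y‖ ≤ M * w (Module.finrank ℝ F + 1) y) :
    ∃ K : ℝ, 0 < K ∧ ∀ r v, Summable (fun p : L => G f r ((p : E × F) + v)) ∧
      ‖T L f r v‖ ≤ M * K * N E (r + 1) := by
  obtain ⟨K, hK, hkey⟩ := key L
  refine ⟨K, hK, fun r v => ?_⟩
  refine hkey (closedBall 0 r) (closedBall 0 (r + 1)) v M _ measurableSet_closedBall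
    measure_closedBall_lt_top.ne hM.le ?_ ?_ ?_
  · intro x hx z hz
    rw [mem_closedBall] at hx ⊢
    linarith [dist_triangle z x 0]
  · intro p hp
    exact Set.indicator_of_notMem hp _
  · intro p _
    exact G_norm_le f M _ hM hf r _

set_option maxHeartbeats 1000000 in
lemma T_diff (L : Submodule ℤ (E × F)) [DiscreteTopology L] [Countable L]
    (hd : Dense (Prod.snd '' (L : Set (E × F)))) (f : F → ℂ)
    (M : ℝ) (hM : 0 < M) (hf : ∀ y, ‖f y‖ ≤ M * w (Module.finrank ℝ F + 1) y)
    (hu : ∀ ε > 0, ∃ η : ℝ, 0 < η ∧ ∀ t y, ‖t‖ < η →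
      ‖f (y + t) - f y‖ ≤ ε * w (Module.finrank ℝ F + 1) y) (v : E × F) :
    Tendsto (fun r => (N E r)⁻¹ • (T L f r v - T L f r 0)) atTop (𝓝 0) := by
  obtain ⟨K, hK, hkey⟩ := key L
  obtain ⟨K', hK', hT⟩ := T_bound L f M hM hf
  rw [Metric.tendsto_nhds]
  intro ε hε
  obtain ⟨η, hη, hu⟩ := hu (ε / (4 * K)) (by positivity)
  obtain ⟨_, ⟨q, hq, rfl⟩, hqv⟩ := hd.exists_dist_lt v.2 hη
  set v' : E × F := v - q with hv'
  have hTv : ∀ r, T L f r v = T L f r v' := fun r => (T_periodic L f r v ⟨q, hq⟩).symm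
  set a : ℝ := ‖v'.1‖ with ha
  have ha0 : 0 ≤ a := norm_nonneg _
  have ht : ‖v'.2‖ < η := by rw [dist_eq_norm] at hqv; exact hqv
  have hlim : Tendsto (fun r => M * K * ((N E r)⁻¹ * N E (r + (a + 1)) -
      (N E r)⁻¹ * N E (r + (-(a + 2)))) + (ε / (4 * K)) * K * ((N E r)⁻¹ * N E (r + 1)))
      atTop (𝓝 (M * K * (1 - 1) + (ε / (4 * K)) * K * 1)) :=
    (((N_ratio (a + 1)).sub (N_ratio _)).const_mul _).add ((N_ratio 1).const_mul _)
  have hlt : M * K * (1 - 1) + (ε / (4 * K)) * K * 1 < ε := by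
    have : M * K * (1 - 1) + (ε / (4 * K)) * K * 1 = ε / 4 := by field_simp; ring
    rw [this]; linarith
  filter_upwards [hlim.eventually_lt_const hlt, eventually_gt_atTop (a + 2)] with r hr hra
  have hNr : 0 < N E r := N_pos (by linarith)
  rw [dist_zero_right, norm_smul, norm_inv, Real.norm_of_nonneg hNr.le]
  refine lt_of_le_of_lt ?_ hr
  -- the two error terms
  set h1 : L → ℂ := fun p => (closedBall (0 : E) r).indicator
    (fun _ => f ((p : E × F).2 + v'.2)) ((p : E × F).1 + v'.1) -
    (closedBall (0 : E) r).indicator (fun _ => f ((p : E × F).2 + v'.2)) ((p : E × F).1) with hh1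
  set h2 : L → ℂ := fun p => (closedBall (0 : E) r).indicator
    (fun _ => f ((p : E × F).2 + v'.2) - f ((p : E × F).2)) ((p : E × F).1) with hh2
  obtain ⟨s1, b1⟩ := hkey (closedBall 0 (r + a) \ closedBall 0 (r - a - 1/2))
    (closedBall 0 (r + (a + 1)) \ closedBall 0 (r + (-(a + 2)))) (0, v'.2) M h1
    (measurableSet_closedBall.diff measurableSet_closedBall)
    (ne_top_of_le_ne_top measure_closedBall_lt_top.ne (measure_mono Set.sdiff_subset)) hM.le
    (by
      intro x hx z hz
      simp only [Set.mem_sdiff, mem_closedBall, not_le, dist_zero_right] at hx ⊢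
      rw [dist_eq_norm] at hz
      have e1 : ‖z‖ ≤ ‖x‖ + ‖z - x‖ := by simpa using norm_add_le x (z - x)
      have e2 : ‖x‖ ≤ ‖z‖ + ‖z - x‖ := by simpa using norm_sub_le z (z - x)
      constructor <;> linarith)
    (by
      intro p hp
      simp only [add_zero, Set.mem_sdiff, mem_closedBall, not_le, dist_zero_right, not_and,
        not_lt] at hp
      have e1 : ‖(p : E × F).1 + v'.1‖ ≤ ‖(p : E × F).1‖ + a := norm_add_le _ _
      have e2 : ‖(p : E × F).1‖ ≤ ‖(p : E × F).1 + v'.1‖ + a := by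
        simpa using norm_sub_le ((p : E × F).1 + v'.1) v'.1
      simp only [hh1]
      by_cases hc : ‖(p : E × F).1‖ ≤ r + a
      · have := hp hc
        rw [Set.indicator_of_mem, Set.indicator_of_mem, sub_self]
        · simp; linarith
        · simp only [mem_closedBall, dist_zero_right]; linarith
      · rw [Set.indicator_of_notMem, Set.indicator_of_notMem, sub_self]
        · simp; linarith
        · simp only [mem_closedBall, dist_zero_right]; linarith)
    (by
      intro p _
      have hb := hf ((p : E × F).2 + v'.2)
      have hb0 := (norm_nonneg _).trans hb
      simp only [hh1, Set.indicator]
      split_ifs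
      · rw [sub_self, norm_zero]; exact hb0
      · rw [sub_zero]; exact hb
      · rw [zero_sub, norm_neg]; exact hb
      · rw [sub_self, norm_zero]; exact hb0)
  obtain ⟨s2, b2⟩ := hkey (closedBall 0 r) (closedBall 0 (r + 1)) 0 (ε / (4 * K)) h2
    measurableSet_closedBall measure_closedBall_lt_top.ne (by positivity)
    (by
      intro x hx z hz
      rw [mem_closedBall] at hx ⊢
      linarith [dist_triangle z x 0])
    (by
      intro p hp
      refine Set.indicator_of_notMem ?_ _
      simpa using hp)
    (by
      intro p hp
      simp only [hh2]
      rw [Set.indicator_of_mem (by simpa using hp)]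
      simpa using hu v'.2 (p : E × F).2 ht)
  have hsplit : T L f r v - T L f r 0 = ∑' p, h1 p + ∑' p, h2 p := by
    rw [hTv]
    unfold T
    rw [← (hT r v').1.tsum_sub (hT r 0).1, ← s1.tsum_add s2]
    refine tsum_congr fun p => ?_
    rw [show (p : E × F) + 0 = p from add_zero _]
    simp only [G, hh1, hh2, Set.indicator, Prod.fst_add, Prod.snd_add]
    split_ifs <;> ring
  have hdiff : (volume : Measure E).real
      (closedBall 0 (r + (a + 1)) \ closedBall 0 (r + (-(a + 2)))) =
      N E (r + (a + 1)) - N E (r + (-(a + 2))) := by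
    unfold N
    exact measureReal_sdiff (closedBall_subset_closedBall (by linarith)) measurableSet_closedBall
      measure_closedBall_lt_top.ne
  rw [hdiff] at b1
  have hle : ‖T L f r v - T L f r 0‖ ≤ M * K * (N E (r + (a + 1)) - N E (r + (-(a + 2)))) +
      (ε / (4 * K)) * K * N E (r + 1) := by
    rw [hsplit]
    exact (norm_add_le _ _).trans (add_le_add b1 b2)
  calc (N E r)⁻¹ * ‖T L f r v - T L f r 0‖ ≤ (N E r)⁻¹ * _ :=
        mul_le_mul_of_nonneg_left hle (by positivity)
    _ = _ := by ring

lemma G_eq (f : F → ℂ) (r : ℝ) : (G f r : E × F → ℂ) =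
    fun z => (closedBall (0 : E) r).indicator (fun _ => (1 : ℂ)) z.1 * f z.2 := by
  ext z
  simp only [G, Set.indicator]
  split_ifs <;> simp

lemma main_limit (L : Submodule ℤ (E × F)) [DiscreteTopology L] [IsZLattice ℝ L]
    (hd : Dense (Prod.snd '' (L : Set (E × F)))) (f : F → ℂ) (hfc : Continuous f)
    (M : ℝ) (hM : 0 < M) (hf : ∀ y, ‖f y‖ ≤ M * w (Module.finrank ℝ F + 1) y)
    (hu : ∀ ε > 0, ∃ η : ℝ, 0 < η ∧ ∀ t y, ‖t‖ < η →
      ‖f (y + t) - f y‖ ≤ ε * w (Module.finrank ℝ F + 1) y) :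
    Tendsto (fun r => (N E r)⁻¹ • T L f r 0) atTop
      (𝓝 ((ZLattice.covolume L volume)⁻¹ • ∫ u, f u)) := by
  have hhaar : (volume : Measure (E × F)).IsAddHaarMeasure := haar_prod
  have hcount : Countable L := inferInstance
  have : MeasurableVAdd L (E × F) := (inferInstance : MeasurableVAdd L.toAddSubgroup (E × F))
  have : VAddInvariantMeasure L (E × F) volume :=
    (inferInstance : VAddInvariantMeasure L.toAddSubgroup (E × F) volume)
  obtain ⟨K, hK, hT⟩ := T_bound L f M hM hf
  set b := Module.Free.chooseBasis ℤ L
  set D := ZSpan.fundamentalDomain (Module.Basis.ofZLatticeBasis ℝ L b) with hD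
  have hDf : IsAddFundamentalDomain L D (volume : Measure (E × F)) :=
    ZLattice.isAddFundamentalDomain b volume
  have hcov : ZLattice.covolume L volume = (volume : Measure (E × F)).real D :=
    ZLattice.covolume_eq_measure_fundamentalDomain L volume hDf
  have hcov0 : ZLattice.covolume L (volume : Measure (E × F)) ≠ 0 :=
    ZLattice.covolume_ne_zero L volume
  have hDt : (volume : Measure (E × F)) D ≠ ⊤ :=
    (ZSpan.fundamentalDomain_isBounded _).measure_lt_top.ne
  have : IsFiniteMeasure ((volume : Measure (E × F)).restrict D) :=
    ⟨by rw [Measure.restrict_apply_univ]; exact hDt.lt_top⟩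
  have hfi : Integrable f := by
    refine ((w_int (F := F)).const_mul M).mono' hfc.aestronglyMeasurable ?_
    exact Eventually.of_forall hf
  have hindi : ∀ r, Integrable ((closedBall (0 : E) r).indicator (fun _ => (1 : ℂ))) := by
    intro r
    rw [integrable_indicator_iff measurableSet_closedBall]
    exact integrableOn_const measure_closedBall_lt_top.ne
  have hGi : ∀ r, Integrable (G f r : E × F → ℂ) := by
    intro r
    rw [G_eq]
    exact (hindi r).mul_prod hfi
  have hGint : ∀ r, ∫ z : E × F, G f r z = N E r • ∫ u, f u := by
    intro r
    rw [G_eq, Measure.volume_eq_prod, integral_prod_mul,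
      integral_indicator_const _ measurableSet_closedBall]
    simp [N]
  have hmeas : ∀ r (p : L), AEStronglyMeasurable (fun z : E × F => G f r ((p : E × F) + z))
      (volume.restrict D) := by
    intro r p
    exact ((hGi r).comp_add_left (p : E × F)).aestronglyMeasurable.restrict
  have hTint : ∀ r, ∫ z in D, T L f r z = N E r • ∫ u, f u := by
    intro r
    rw [← hGint, hDf.integral_eq_tsum'' _ (hGi r)]
    unfold T
    refine integral_tsum (hmeas r) ?_
    have h := hDf.lintegral_eq_tsum'' (fun z => ‖G f r z‖ₑ)
    have h2 := (hGi r).2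
    unfold HasFiniteIntegral at h2
    rw [h] at h2
    exact h2.ne
  have hTmeas : ∀ r, AEStronglyMeasurable (T L f r) (volume.restrict D) := by
    intro r
    refine aestronglyMeasurable_of_tendsto_ae (atTop : Filter (Finset L))
      (f := fun s z => ∑ p ∈ s, G f r ((p : E × F) + z)) (fun s => ?_)
      (Eventually.of_forall fun z => (hT r z).1.hasSum)
    exact Finset.aestronglyMeasurable_fun_sum s (fun p _ => hmeas r p)
  have hdc : Tendsto (fun r => ∫ z in D, (N E r)⁻¹ • (T L f r z - T L f r 0)) atTop
      (𝓝 (∫ z in D, (0 : ℂ))) := by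
    refine tendsto_integral_filter_of_dominated_convergence (fun _ => 2 * (M * K * 2))
      (Eventually.of_forall fun r =>
        ((hTmeas r).sub (aestronglyMeasurable_const (b := T L f r 0))).const_smul (N E r)⁻¹)
      ?_ (integrable_const _) (Eventually.of_forall fun z => T_diff L hd f M hM hf hu z)
    filter_upwards [(N_ratio (E := E) 1).eventually_lt_const one_lt_two,
      eventually_gt_atTop 0] with r hr hr0
    refine Eventually.of_forall fun z => ?_
    have hNr : 0 < N E r := N_pos hr0
    rw [norm_smul, norm_inv, Real.norm_of_nonneg hNr.le]
    have h1 : ‖T L f r z - T L f r 0‖ ≤ 2 * (M * K * N E (r + 1)) := by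
      have := norm_sub_le (T L f r z) (T L f r 0)
      linarith [(hT r z).2, (hT r 0).2]
    calc (N E r)⁻¹ * ‖T L f r z - T L f r 0‖ ≤ (N E r)⁻¹ * (2 * (M * K * N E (r + 1))) := by
          gcongr
      _ = 2 * (M * K * ((N E r)⁻¹ * N E (r + 1))) := by ring
      _ ≤ _ := by gcongr
  rw [integral_zero] at hdc
  have hTi : ∀ r, Integrable (T L f r) (volume.restrict D) := fun r =>
    (integrable_const (M * K * N E (r + 1))).mono' (hTmeas r)
      (Eventually.of_forall fun z => (hT r z).2)
  have hfin : Tendsto (fun r => (ZLattice.covolume L (volume : Measure (E × F)))⁻¹ •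
      ((∫ u, f u) - ∫ z in D, (N E r)⁻¹ • (T L f r z - T L f r 0))) atTop
      (𝓝 ((ZLattice.covolume L (volume : Measure (E × F)))⁻¹ • ((∫ u, f u) - 0))) :=
    (tendsto_const_nhds.sub hdc).const_smul _
  rw [sub_zero] at hfin
  refine hfin.congr' ?_
  filter_upwards [eventually_gt_atTop 0] with r hr0
  have hNr : N E r ≠ 0 := (N_pos hr0).ne'
  rw [integral_smul, integral_sub (hTi r) (integrable_const _), hTint, setIntegral_const, ← hcov]
  simp only [Complex.real_smul, Complex.ofReal_inv]
  have h1 : (N E r : ℂ) ≠ 0 := by exact_mod_cast hNr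
  have h2 : (ZLattice.covolume L (volume : Measure (E × F)) : ℂ) ≠ 0 := by exact_mod_cast hcov0
  field_simp
  ring

end main

end DCW

/-- existence of the weighted density ρ of the dense Dirac comb,
ρ = lim_r ω(B_r)/vol(B_r) = (1/|det L̃|) ∫ f. -/
theorem dense_comb_weighted_density (d m : ℕ)
    (L : Submodule ℤ (EuclideanSpace ℝ (Fin d) × EuclideanSpace ℝ (Fin m)))
    [DiscreteTopology L] [IsZLattice ℝ L]
    (hinj1 : Set.InjOn Prod.fst (L : Set (EuclideanSpace ℝ (Fin d) × EuclideanSpace ℝ (Fin m))))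
    (hdense1 : Dense (physL d m L))
    (hinj2 : Set.InjOn Prod.snd (L : Set (EuclideanSpace ℝ (Fin d) × EuclideanSpace ℝ (Fin m))))
    (hdense2 : Dense (Prod.snd '' (L : Set (EuclideanSpace ℝ (Fin d) × EuclideanSpace ℝ (Fin m)))))
    (star : EuclideanSpace ℝ (Fin d) → EuclideanSpace ℝ (Fin m))
    (hstar : ∀ p ∈ L, star (Prod.fst p) = Prod.snd p)
    (f : EuclideanSpace ℝ (Fin m) → ℂ) (hf : Continuous f)
    (C α : ℝ) (hC : 0 < C) (hα : 0 < α)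
    (hdecay : ∀ x : EuclideanSpace ℝ (Fin m), ‖x‖ ^ ((m : ℝ) + 1 + α) * ‖f x‖ ≤ C) :
    Filter.Tendsto
      (fun r : ℝ => (volume (closedBall (0 : EuclideanSpace ℝ (Fin d)) r)).toReal⁻¹ •
        (∑' x : ((physL d m L ∩ closedBall (0 : EuclideanSpace ℝ (Fin d)) r :
            Set (EuclideanSpace ℝ (Fin d)))), f (star (x : EuclideanSpace ℝ (Fin d)))))
      Filter.atTop
      (nhds ((ZLattice.covolume L volume)⁻¹ • ∫ u, f u)) := by
  have hdec : ∀ x : EuclideanSpace ℝ (Fin m),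
      ‖x‖ ^ (((m + 1 : ℕ) : ℝ) + α) * ‖f x‖ ≤ C := by
    intro x
    have := hdecay x
    push_cast
    exact this
  have hfr : Module.finrank ℝ (EuclideanSpace ℝ (Fin m)) = m := by simp
  obtain ⟨M, hM, hfM⟩ := DCW.f_bound (m + 1) f hf C α hα hdec
  have hu := DCW.f_unif (m + 1) f hf C α hα hdec
  have hmain := DCW.main_limit L hdense2 f hf M hM (by rw [hfr]; exact hfM) (by rw [hfr]; exact hu)
  refine hmain.congr fun r => ?_
  unfold DCW.N
  congr 1
  have hS := tsum_subtype (physL d m L ∩ closedBall (0 : EuclideanSpace ℝ (Fin d)) r)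
    (fun x => f (star x))
  rw [hS]
  have hinj : Function.Injective (fun p : L =>
      (p : EuclideanSpace ℝ (Fin d) × EuclideanSpace ℝ (Fin m)).1) := by
    intro p q hpq
    exact Subtype.ext (hinj1 p.2 q.2 hpq)
  rw [← hinj.tsum_eq]
  · unfold DCW.T
    refine tsum_congr fun p => ?_
    have hmem : (p : EuclideanSpace ℝ (Fin d) × EuclideanSpace ℝ (Fin m)).1 ∈ physL d m L :=
      ⟨p, p.2, rfl⟩
    rw [show (p : EuclideanSpace ℝ (Fin d) × EuclideanSpace ℝ (Fin m)) + 0 = p from add_zero _]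
    unfold DCW.G
    by_cases hr : (p : EuclideanSpace ℝ (Fin d) × EuclideanSpace ℝ (Fin m)).1 ∈
        closedBall (0 : EuclideanSpace ℝ (Fin d)) r
    · rw [Set.indicator_of_mem hr, Set.indicator_of_mem (Set.mem_inter hmem hr), hstar _ p.2]
    · rw [Set.indicator_of_notMem hr, Set.indicator_of_notMem (fun h => hr h.2)]
  · intro x hx
    obtain ⟨p, hp, rfl⟩ := (Set.mem_of_indicator_ne_zero hx).1
    exact ⟨⟨p, hp⟩, rfl⟩
end

section
/- Fourier–Bohr coefficients for dense point sets: under the dense cut-and-project hypotheses, with f : ℝ^m → ℂ continuous and |x|^{m+1+α}|f(x)| ≤ C, for every k ∈ ℝ^d the limit c(k) = lim_{r→∞} (1/vol(B_r(0))) ∑_{x ∈ L ∩ B_r(a)} f(x*) e^{−2πi k·x} exists and is independent of a. If k ∈ L* = π₁((L̃)*) then c(k) = (1/|det(L̃)|) ∫_{ℝ^m} e^{2πi k*·u} f(u) du = (1/|det(L̃)|) f̂(−k*); if k ∉ L* then c(k) = 0. -/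
open MeasureTheory Metric Complex
open scoped RealInnerProductSpace

/-- The dual lattice of L̃ in ℝ^d × ℝ^m, w.r.t. the Euclidean pairing of the product. -/
def dualL (d m : ℕ) (L : Submodule ℤ (EuclideanSpace ℝ (Fin d) × EuclideanSpace ℝ (Fin m))) :
    Set (EuclideanSpace ℝ (Fin d) × EuclideanSpace ℝ (Fin m)) :=
  {y | ∀ x ∈ L, ∃ n : ℤ, ⟪y.1, x.1⟫ + ⟪y.2, x.2⟫ = (n : ℝ)}

/-- The additive character `x ↦ exp(2πix)`. -/
noncomputable def ee (x : ℝ) : ℂ := Complex.exp (2 * Real.pi * Complex.I * (x : ℂ))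

lemma ee_add (x y : ℝ) : ee (x + y) = ee x * ee y := by
  unfold ee; rw [← Complex.exp_add]; push_cast; ring_nf

lemma ee_zero : ee 0 = 1 := by simp [ee]

lemma ee_eq (x : ℝ) : ee x = Complex.exp ((2 * Real.pi * x : ℝ) * Complex.I) := by
  unfold ee; push_cast; ring_nf

lemma norm_ee (x : ℝ) : ‖ee x‖ = 1 := by
  rw [ee_eq]; exact Complex.norm_exp_ofReal_mul_I _

lemma ee_neg_mul (x : ℝ) : ee (-x) * ee x = 1 := by
  rw [← ee_add]; simp [ee_zero]

lemma continuous_ee : Continuous ee := by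
  unfold ee; fun_prop

lemma ee_int (n : ℤ) : ee (n : ℝ) = 1 := by
  unfold ee
  rw [Complex.exp_eq_one_iff]
  exact ⟨n, by push_cast; ring⟩

lemma ee_eq_one {x : ℝ} (h : ee x = 1) : ∃ n : ℤ, x = n := by
  unfold ee at h
  rw [Complex.exp_eq_one_iff] at h
  obtain ⟨n, hn⟩ := h
  refine ⟨n, ?_⟩
  have h2 : (2 * Real.pi * Complex.I : ℂ) ≠ 0 := Complex.two_pi_I_ne_zero
  have : (2 * Real.pi * Complex.I : ℂ) * x = (2 * Real.pi * Complex.I) * n := by rw [hn]; ring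
  exact_mod_cast mul_left_cancel₀ h2 this

/-- Continuous one-parameter characters are exponentials. -/
lemma char_one (χ : ℝ → ℂ) (hc : Continuous χ) (h0 : χ 0 = 1)
    (hm : ∀ s t, χ (s + t) = χ s * χ t) : ∃ c : ℂ, ∀ t : ℝ, χ t = Complex.exp (c * t) := by
  set F : ℝ → ℂ := fun x => ∫ t in (0:ℝ)..x, χ t with hF
  have hFd : ∀ x, HasDerivAt F (χ x) x := fun x => hc.integral_hasStrictDerivAt 0 x |>.hasDerivAt
  obtain ⟨T, hT⟩ : ∃ T, F T ≠ 0 := by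
    by_contra! h
    have h1 := hFd 0
    have h2 : F = fun _ => 0 := funext h
    rw [h2] at h1
    have := h1.unique (hasDerivAt_const 0 (0:ℂ))
    rw [h0] at this
    exact one_ne_zero this
  have hχ : ∀ x, χ x = (F (x + T) - F x) / F T := by
    intro x
    rw [eq_div_iff hT]
    have h1 : F (x + T) - F x = ∫ t in x..(x+T), χ t := by
      rw [hF]; simp only
      rw [intervalIntegral.integral_interval_sub_left] <;> exact hc.intervalIntegrable _ _
    rw [h1, hF]; simp only
    rw [← intervalIntegral.integral_const_mul]
    simp_rw [← hm]
    rw [intervalIntegral.integral_comp_add_left (fun t => χ t)]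
    simp
  set c := (χ T - 1) / F T with hcdef
  have hd : ∀ x, HasDerivAt χ (c * χ x) x := by
    intro x
    have h1 : HasDerivAt (fun x => (F (x + T) - F x) / F T) ((χ (x + T) - χ x) / F T) x :=
      (((hFd (x + T)).comp_add_const x T).sub (hFd x)).div_const _
    have h2 : (fun x => (F (x + T) - F x) / F T) = χ := funext fun x => (hχ x).symm
    rw [h2] at h1
    convert h1 using 1
    rw [hm, hcdef]; ring
  refine ⟨c, ?_⟩
  have hG : ∀ x : ℝ, HasDerivAt (fun x : ℝ => χ x * Complex.exp (-(c * x))) 0 x := by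
    intro x
    have he : HasDerivAt (fun x : ℝ => Complex.exp (-(c * x))) (Complex.exp (-(c * x)) * (-(c * 1))) x := by
      have : HasDerivAt (fun x : ℝ => -(c * (x:ℂ))) (-(c * 1)) x :=
        ((Complex.ofRealCLM.hasDerivAt (x := x)).const_mul c).neg
      exact this.cexp
    have h3 := (hd x).mul he
    have e : c * χ x * Complex.exp (-(c * x)) + χ x * (Complex.exp (-(c * x)) * (-(c * 1))) = 0 := by
      ring
    rw [e] at h3
    exact h3
  intro t
  have := is_const_of_deriv_eq_zero (fun x => (hG x).differentiableAt) (fun x => (hG x).deriv) t 0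
  simp [h0] at this
  rw [Complex.exp_neg] at this
  field_simp at this
  exact this

abbrev Eu (n : ℕ) := EuclideanSpace ℝ (Fin n)

/-- Continuous unitary characters of Euclidean space. -/
lemma char_eu {m : ℕ} (η : Eu m → ℂ) (hc : Continuous η) (hn : ∀ u, ‖η u‖ = 1)
    (hm : ∀ u v, η (u + v) = η u * η v) : ∃ y : Eu m, ∀ u, η u = ee ⟪y, u⟫ := by
  have h0 : η 0 = 1 := by
    have h := hm 0 0
    have hz : η 0 ≠ 0 := by
      intro h; have := hn 0; rw [h] at this; simp at this
    rw [add_zero] at h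
    exact (mul_left_cancel₀ hz (by rw [mul_one]; exact h)).symm
  have h1 : ∀ v : Eu m, ∃ θ : ℝ, ∀ t : ℝ, η (t • v) = ee (θ * t) := by
    intro v
    obtain ⟨c, hcc⟩ := char_one (fun t : ℝ => η (t • v)) (by fun_prop) (by simp [h0])
      (fun s t => by simp [add_smul, hm])
    refine ⟨c.im / (2 * Real.pi), fun t => ?_⟩
    have hre : c.re = 0 := by
      have := hn ((1:ℝ) • v)
      rw [hcc 1, Complex.norm_exp] at this
      simpa using this
    rw [hcc t, ee_eq]
    have : c = (c.im : ℂ) * Complex.I := by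
      apply Complex.ext <;> simp [hre]
    rw [this]
    congr 1
    have hpi := Real.pi_ne_zero
    have : (2 * Real.pi * (c.im / (2 * Real.pi) * t) : ℝ) = c.im * t := by field_simp
    simp only [Complex.mul_im, Complex.ofReal_im, Complex.I_re, Complex.ofReal_re, Complex.I_im,
      mul_one, mul_zero, add_zero]
    rw [this]; push_cast; ring
  choose θ hθ using fun i => h1 (EuclideanSpace.single i (1:ℝ))
  refine ⟨WithLp.toLp 2 θ, fun u => ?_⟩
  have hu : u = ∑ i, u i • EuclideanSpace.single i (1:ℝ) := by
    ext j
    simp [Finset.sum_apply, Pi.single_apply]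
  have hsum : ∀ (s : Finset (Fin m)) (g : Fin m → Eu m), η (∑ i ∈ s, g i) = ∏ i ∈ s, η (g i) := by
    intro s g
    classical
    induction s using Finset.induction_on with
    | empty => simp [h0]
    | insert a s ha ih => rw [Finset.sum_insert ha, Finset.prod_insert ha, hm, ih]
  have hsum2 : ∀ (s : Finset (Fin m)) (g : Fin m → ℝ), ee (∑ i ∈ s, g i) = ∏ i ∈ s, ee (g i) := by
    intro s g
    classical
    induction s using Finset.induction_on with
    | empty => simp [ee_zero]
    | insert a s ha ih => rw [Finset.sum_insert ha, Finset.prod_insert ha, ee_add, ih]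
  conv_lhs => rw [hu]
  rw [hsum, PiLp.inner_apply, hsum2]
  refine Finset.prod_congr rfl fun i _ => ?_
  rw [hθ]; simp [mul_comm]

/-- Volume of the ball of radius `r`. -/
noncomputable def Vb (d : ℕ) (r : ℝ) : ℝ := (volume (closedBall (0 : Eu d) r)).toReal

lemma Vb_center {d : ℕ} (a : Eu d) (r : ℝ) : volume.real (closedBall a r) = Vb d r := by
  rw [Measure.addHaar_real_closedBall_center]; rfl

lemma Vb_eq {d : ℕ} {r : ℝ} (hr : 0 ≤ r) : Vb d r = r ^ d * Vb d 1 := by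
  have := Measure.addHaar_real_closedBall' (volume : Measure (Eu d)) 0 hr
  rw [Vb_center, Vb_center] at this
  simpa using this

lemma Vb_nonneg (d : ℕ) (r : ℝ) : 0 ≤ Vb d r := ENNReal.toReal_nonneg

lemma Vb_pos {d : ℕ} {r : ℝ} (hr : 0 < r) : 0 < Vb d r :=
  ENNReal.toReal_pos (measure_closedBall_pos _ _ hr).ne' measure_closedBall_lt_top.ne

lemma Vb_ratio (d : ℕ) (c : ℝ) :
    Filter.Tendsto (fun r => Vb d (r + c) / Vb d r) Filter.atTop (nhds 1) := by
  have h1 : Filter.Tendsto (fun r : ℝ => (1 + c * r⁻¹) ^ d) Filter.atTop (nhds 1) := by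
    have := ((tendsto_inv_atTop_zero (𝕜 := ℝ)).const_mul c).const_add 1 |>.pow d
    simpa using this
  refine h1.congr' ?_
  filter_upwards [Filter.eventually_gt_atTop 0, Filter.eventually_ge_atTop (-c)] with r hr hr2
  rw [Vb_eq (by linarith : 0 ≤ r + c), Vb_eq hr.le]
  have := (Vb_pos (d := d) one_pos).ne'
  rw [mul_div_mul_right _ _ this, ← div_pow]
  congr 1; field_simp

lemma norm_integral_diff_le {d : ℕ} (h : Eu d → ℂ) (hc : Continuous h) (C : ℝ)
    (hC : ∀ x, ‖h x‖ ≤ C) (a b : Eu d) (r R : ℝ) (hab : closedBall a r ⊆ closedBall b R) :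
    ‖(∫ t in closedBall b R, h t) - ∫ t in closedBall a r, h t‖ ≤ C * (Vb d R - Vb d r) := by
  have hi : ∀ (x : Eu d) (ρ : ℝ), IntegrableOn h (closedBall x ρ) := fun x ρ =>
    hc.continuousOn.integrableOn_compact (isCompact_closedBall x ρ)
  rw [← setIntegral_sdiff measurableSet_closedBall (hi b R) hab]
  refine (norm_setIntegral_le_of_norm_le_const ?_ (fun x _ => hC x)).trans ?_
  · exact (measure_mono Set.sdiff_subset).trans_lt measure_closedBall_lt_top
  · rw [measureReal_sdiff hab measurableSet_closedBall measure_closedBall_lt_top.ne, Vb_center, Vb_center]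

lemma folner {d : ℕ} (h : Eu d → ℂ) (hc : Continuous h) (C : ℝ)
    (hC : ∀ x, ‖h x‖ ≤ C) (a s : Eu d) :
    Filter.Tendsto (fun r => (Vb d r)⁻¹ • (∫ t in closedBall a r, h (t + s))
      - (Vb d r)⁻¹ • ∫ t in closedBall a r, h t) Filter.atTop (nhds 0) := by
  have hlim : Filter.Tendsto (fun r => 2 * C * (Vb d (r + ‖s‖) / Vb d r - 1))
      Filter.atTop (nhds 0) := by
    have := ((Vb_ratio d ‖s‖).sub_const 1).const_mul (2 * C)
    simpa using this
  refine squeeze_zero_norm' ?_ hlim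
  filter_upwards [Filter.eventually_gt_atTop 0] with r hr
  have e1 : ∫ t in closedBall a r, h (t + s) = ∫ t in closedBall (a + s) r, h t := by
    rw [← (measurePreserving_add_right volume s).setIntegral_preimage_emb
      (measurableEmbedding_addRight s) h (closedBall (a + s) r)]
    congr 2
    ext t; simp [dist_eq_norm]
  rw [e1, ← smul_sub, norm_smul, norm_inv, Real.norm_of_nonneg (Vb_nonneg d r)]
  have h1 := norm_integral_diff_le h hc C hC a a r (r + ‖s‖)
    (closedBall_subset_closedBall (by linarith [norm_nonneg s]))
  have h2 := norm_integral_diff_le h hc C hC (a + s) a r (r + ‖s‖)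
    (closedBall_subset_closedBall' (by simp [dist_eq_norm]))
  have h3 : ‖(∫ t in closedBall (a + s) r, h t) - ∫ t in closedBall a r, h t‖ ≤
      2 * (C * (Vb d (r + ‖s‖) - Vb d r)) := by
    rw [norm_sub_rev] at h2
    have := norm_sub_le_norm_sub_add_norm_sub (∫ t in closedBall (a + s) r, h t)
      (∫ t in closedBall a (r + ‖s‖), h t) (∫ t in closedBall a r, h t)
    linarith
  have hV := Vb_pos (d := d) hr
  calc (Vb d r)⁻¹ * _ ≤ (Vb d r)⁻¹ * (2 * (C * (Vb d (r + ‖s‖) - Vb d r))) := by gcongr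
    _ = _ := by field_simp

/-- Twisted ball averages along the direct space. -/
noncomputable def Mr {d m : ℕ} (k a : Eu d) (Ψ : Eu d × Eu m → ℂ) (r : ℝ) (z : Eu d × Eu m) : ℂ :=
  (Vb d r)⁻¹ • ∫ t in closedBall a r, ee (-⟪k, t⟫) * Ψ (z + (t, 0))

section
variable {d m : ℕ} (k a : Eu d) (Ψ : Eu d × Eu m → ℂ) (hc : Continuous Ψ)
include hc

lemma Mr_integrand_cont (z : Eu d × Eu m) :
    Continuous (fun t : Eu d => ee (-⟪k, t⟫) * Ψ (z + (t, 0))) := by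
  have := continuous_ee
  fun_prop

lemma Mr_sub_le (ε : ℝ) (hε : 0 ≤ ε) (z z' : Eu d × Eu m)
    (h : ∀ t : Eu d, ‖Ψ (z + (t, 0)) - Ψ (z' + (t, 0))‖ ≤ ε) (r : ℝ) :
    ‖Mr k a Ψ r z - Mr k a Ψ r z'‖ ≤ ε := by
  unfold Mr
  have hi : ∀ z, IntegrableOn (fun t : Eu d => ee (-⟪k, t⟫) * Ψ (z + (t, 0))) (closedBall a r) :=
    fun z => (Mr_integrand_cont k Ψ hc z).continuousOn.integrableOn_compact (isCompact_closedBall _ _)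
  rw [← smul_sub, ← integral_sub (hi z) (hi z'), norm_smul, norm_inv,
    Real.norm_of_nonneg (Vb_nonneg d r)]
  have := norm_setIntegral_le_of_norm_le_const (μ := volume) (s := closedBall a r)
    (f := fun t : Eu d => ee (-⟪k, t⟫) * Ψ (z + (t, 0)) - ee (-⟪k, t⟫) * Ψ (z' + (t, 0))) (C := ε)
    measure_closedBall_lt_top
    (fun t _ => by rw [← mul_sub, norm_mul, norm_ee, one_mul]; exact h t)
  rw [Vb_center] at this
  rcases (Vb_nonneg d r).eq_or_lt with h0 | h0
  · rw [← h0]; simpa using hε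
  · rw [inv_mul_le_iff₀ h0, mul_comm]; exact this

omit hc in
lemma Mr_le (C : ℝ) (hC : ∀ z, ‖Ψ z‖ ≤ C) (z : Eu d × Eu m) (r : ℝ) :
    ‖Mr k a Ψ r z‖ ≤ C := by
  unfold Mr
  rw [norm_smul, norm_inv, Real.norm_of_nonneg (Vb_nonneg d r)]
  have := norm_setIntegral_le_of_norm_le_const (μ := volume) (s := closedBall a r)
    (f := fun t : Eu d => ee (-⟪k, t⟫) * Ψ (z + (t, 0))) (C := C)
    measure_closedBall_lt_top
    (fun t _ => by rw [norm_mul, norm_ee, one_mul]; exact hC _)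
  rw [Vb_center] at this
  rcases (Vb_nonneg d r).eq_or_lt with h0 | h0
  · rw [← h0]; simpa using (norm_nonneg _).trans (hC 0)
  · rw [inv_mul_le_iff₀ h0, mul_comm]; exact this

lemma Mr_shift (C : ℝ) (hC : ∀ z, ‖Ψ z‖ ≤ C) (z : Eu d × Eu m) (s : Eu d) :
    Filter.Tendsto (fun r => Mr k a Ψ r (z + (s, 0)) - ee ⟪k, s⟫ * Mr k a Ψ r z)
      Filter.atTop (nhds 0) := by
  have h := folner _ (Mr_integrand_cont k Ψ hc z) C
    (fun t => by rw [norm_mul, norm_ee, one_mul]; exact hC _) a s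
  have h2 := h.const_mul (ee ⟪k, s⟫)
  rw [mul_zero] at h2
  refine h2.congr fun r => ?_
  unfold Mr
  rw [mul_sub]
  congr 1
  rw [mul_smul_comm, ← integral_const_mul]
  congr 2
  ext t
  rw [← mul_assoc, ← ee_add]
  congr 2
  · rw [inner_add_right]; ring
  · rw [add_assoc, add_comm t s]; simp

end

instance volProdHaar (d m : ℕ) : (volume : Measure (Eu d × Eu m)).IsAddHaarMeasure :=
  inferInstanceAs ((volume : Measure (Eu d)).prod (volume : Measure (Eu m))).IsAddHaarMeasure

instance vaddInvL {d m : ℕ} (L : Submodule ℤ (Eu d × Eu m)) :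
    VAddInvariantMeasure L (Eu d × Eu m) volume :=
  inferInstanceAs (VAddInvariantMeasure L.toAddSubgroup (Eu d × Eu m) volume)

lemma exists_fd {d m : ℕ} (L : Submodule ℤ (Eu d × Eu m)) [DiscreteTopology L] [IsZLattice ℝ L] :
    ∃ F : Set (Eu d × Eu m), MeasurableSet F ∧ Bornology.IsBounded F ∧
      IsAddFundamentalDomain L F volume ∧ (∀ z, ∃ p ∈ L, z + p ∈ F) ∧
      volume.real F = ZLattice.covolume L volume := by
  let b := Module.Free.chooseBasis ℤ L
  let B := b.ofZLatticeBasis ℝ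
  have hfd := ZLattice.isAddFundamentalDomain (L := L) b volume
  refine ⟨ZSpan.fundamentalDomain B, ZSpan.fundamentalDomain_measurableSet B,
    ZSpan.fundamentalDomain_isBounded B, hfd, ?_, ?_⟩
  · intro z
    obtain ⟨v, hv, -⟩ := ZSpan.exist_unique_vadd_mem_fundamentalDomain B z
    have hm : (v : Eu d × Eu m) ∈ L := by
      have h1 : (v : Eu d × Eu m) ∈ Submodule.span ℤ (Set.range B) := v.2
      have h2 : Submodule.span ℤ (Set.range B) = L := b.ofZLatticeBasis_span ℝ
      exact h2.le h1
    refine ⟨v, hm, ?_⟩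
    rw [add_comm]; exact hv
  · exact (ZLattice.covolume_eq_measure_fundamentalDomain L volume hfd).symm

open scoped Pointwise in
lemma integral_fd_shift {d m : ℕ} (L : Submodule ℤ (Eu d × Eu m)) [DiscreteTopology L] [IsZLattice ℝ L]
    (F : Set (Eu d × Eu m)) (hF : IsAddFundamentalDomain L F volume)
    (Ψ : Eu d × Eu m → ℂ) (hp : ∀ p ∈ L, ∀ z, Ψ (z + p) = Ψ z) (v : Eu d × Eu m) :
    ∫ z in F, Ψ (z + v) = ∫ z in F, Ψ z := by
  have hF2 : IsAddFundamentalDomain L (v +ᵥ F) volume := hF.vadd_of_comm v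
  have hp' : ∀ (g : L) z, Ψ (g +ᵥ z) = Ψ z := fun g z => by
    rw [← hp g g.2 z, add_comm]; rfl
  have h1 := hF2.setIntegral_eq hF hp'
  rw [← h1]
  rw [← (measurePreserving_add_right volume v).setIntegral_preimage_emb
      (measurableEmbedding_addRight v) Ψ (v +ᵥ F)]
  congr 2
  ext t; simp [Set.mem_vadd_set_iff_neg_vadd_mem]

section
variable {d m : ℕ} (L : Submodule ℤ (Eu d × Eu m)) [DiscreteTopology L] [IsZLattice ℝ L]
 (Ψ : Eu d × Eu m → ℂ) (hc : Continuous Ψ) (hp : ∀ p ∈ L, ∀ z, Ψ (z + p) = Ψ z)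
include hc hp

lemma per_bdd : ∃ C, ∀ z, ‖Ψ z‖ ≤ C := by
  obtain ⟨F, -, hb, -, hF, -⟩ := exists_fd L
  obtain ⟨C, hC⟩ := hb.isCompact_closure.exists_bound_of_continuousOn hc.continuousOn
  refine ⟨C, fun z => ?_⟩
  obtain ⟨p, hpL, hz⟩ := hF z
  rw [← hp p hpL z]
  exact hC _ (subset_closure hz)

lemma per_uc : UniformContinuous Ψ := by
  obtain ⟨F, -, hb, -, hF, -⟩ := exists_fd L
  obtain ⟨R, hR⟩ := hb.subset_closedBall 0
  have huc := (isCompact_closedBall (0 : Eu d × Eu m) (R + 1)).uniformContinuousOn_of_continuous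
    hc.continuousOn
  rw [Metric.uniformContinuousOn_iff] at huc
  rw [Metric.uniformContinuous_iff]
  intro ε hε
  obtain ⟨δ, hδ, h⟩ := huc ε hε
  refine ⟨min δ 1, by positivity, fun x y hxy => ?_⟩
  obtain ⟨p, hpL, hz⟩ := hF x
  rw [← hp p hpL x, ← hp p hpL y]
  have hd : dist (x + p) (y + p) = dist x y := dist_add_right _ _ _
  have hx := mem_closedBall.1 (hR hz)
  refine h _ ?_ _ ?_ ?_
  · rw [mem_closedBall]; linarith
  · rw [mem_closedBall]
    have := dist_triangle_left (y + p) 0 (x + p)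
    have h1 := min_le_right δ 1
    linarith
  · rw [hd]; exact hxy.trans_le (min_le_left _ _)

lemma Mr_equi (k a : Eu d) (ε : ℝ) (hε : 0 < ε) :
    ∃ δ > 0, ∀ z z', dist z z' < δ → ∀ r, ‖Mr k a Ψ r z - Mr k a Ψ r z'‖ ≤ ε := by
  have huc := per_uc L Ψ hc hp
  rw [Metric.uniformContinuous_iff] at huc
  obtain ⟨δ, hδ, h⟩ := huc ε hε
  refine ⟨δ, hδ, fun z z' hz r => Mr_sub_le k a Ψ hc ε hε.le z z' (fun t => ?_) r⟩
  rw [← dist_eq_norm]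
  exact (h (by rw [dist_add_right]; exact hz)).le

lemma Mr_cont (k a : Eu d) (r : ℝ) : Continuous (Mr k a Ψ r) := by
  rw [Metric.continuous_iff]
  intro z ε hε
  obtain ⟨δ, hδ, h⟩ := Mr_equi L Ψ hc hp k a (ε / 2) (by positivity)
  refine ⟨δ, hδ, fun z' hz => ?_⟩
  rw [dist_eq_norm]
  have := h z' z hz r
  linarith

omit [DiscreteTopology L] [IsZLattice ℝ L] hc in
lemma Mr_per (k a : Eu d) (r : ℝ) (p : Eu d × Eu m) (hpL : p ∈ L) (z : Eu d × Eu m) :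
    Mr k a Ψ r (z + p) = Mr k a Ψ r z := by
  unfold Mr
  congr 2
  ext t
  rw [add_right_comm, hp p hpL]

lemma Mr_shift2 (k a : Eu d) (p : Eu d × Eu m) (hpL : p ∈ L) :
    Filter.Tendsto (fun r => Mr k a Ψ r (0, p.2) - ee (-⟪k, p.1⟫) * Mr k a Ψ r 0)
      Filter.atTop (nhds 0) := by
  obtain ⟨C, hC⟩ := per_bdd L Ψ hc hp
  have := Mr_shift k a Ψ hc C hC 0 (-p.1)
  refine this.congr fun r => ?_
  rw [← Mr_per L Ψ hp k a r p hpL]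
  congr 2
  · ext <;> simp
  · simp

lemma Mr_invariant (hdense : Dense (Prod.snd '' (L : Set (Eu d × Eu m)))) (a : Eu d)
    (z : Eu d × Eu m) :
    Filter.Tendsto (fun r => Mr 0 a Ψ r z - Mr 0 a Ψ r 0) Filter.atTop (nhds 0) := by
  obtain ⟨C, hC⟩ := per_bdd L Ψ hc hp
  have h1 := Mr_shift 0 a Ψ hc C hC (0, z.2) z.1
  have h2 : Filter.Tendsto (fun r => Mr 0 a Ψ r (0, z.2) - Mr 0 a Ψ r 0) Filter.atTop (nhds 0) := by
    rw [Metric.tendsto_nhds]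
    intro ε hε
    obtain ⟨δ, hδ, h⟩ := Mr_equi L Ψ hc hp 0 a (ε / 2) (by positivity)
    obtain ⟨q, ⟨p, hpL, rfl⟩, hq⟩ := hdense.exists_dist_lt z.2 hδ
    have h3 := Mr_shift2 L Ψ hc hp 0 a p hpL
    rw [Metric.tendsto_nhds] at h3
    filter_upwards [h3 (ε / 2) (by positivity)] with r hr
    simp only [inner_zero_left, neg_zero, ee_zero, one_mul, dist_zero_right] at hr ⊢
    have h4 := h (0, z.2) (0, p.2) (by simpa [Prod.dist_eq] using hq) r
    have := norm_sub_le_norm_sub_add_norm_sub (Mr 0 a Ψ r (0, z.2)) (Mr 0 a Ψ r (0, p.2)) (Mr 0 a Ψ r 0)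
    linarith
  have h3 := h1.add h2
  rw [add_zero] at h3
  refine h3.congr fun r => ?_
  simp [ee_zero]

lemma Mr_tendsto_zero_freq (hdense : Dense (Prod.snd '' (L : Set (Eu d × Eu m)))) (a : Eu d)
    (F : Set (Eu d × Eu m)) (hF : IsAddFundamentalDomain L F volume)
    (hFb : Bornology.IsBounded F)
    (hv : volume.real F = ZLattice.covolume L volume) :
    Filter.Tendsto (fun r => Mr 0 a Ψ r 0) Filter.atTop
      (nhds ((ZLattice.covolume L volume)⁻¹ • ∫ z in F, Ψ z)) := by
  obtain ⟨C, hC⟩ := per_bdd L Ψ hc hp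
  have hfin : volume F < ⊤ := hFb.measure_lt_top
  have : IsFiniteMeasure (volume.restrict F) := ⟨by simpa using hfin⟩
  have hcov : 0 < ZLattice.covolume L volume := ZLattice.covolume_pos L volume
  have hInt : ∀ r, IntegrableOn (Mr 0 a Ψ r) F := fun r =>
    Integrable.of_bound (Mr_cont L Ψ hc hp 0 a r).aestronglyMeasurable C
      (Filter.Eventually.of_forall fun z => Mr_le 0 a Ψ C hC z r)
  have h1 : Filter.Tendsto (fun r => ∫ z in F, (Mr 0 a Ψ r z - Mr 0 a Ψ r 0)) Filter.atTop
      (nhds (∫ z in F, (0:ℂ))) := by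
    refine tendsto_integral_filter_of_dominated_convergence (fun _ => 2 * C) ?_ ?_ ?_ ?_
    · exact Filter.Eventually.of_forall fun r =>
        ((Mr_cont L Ψ hc hp 0 a r).sub continuous_const).aestronglyMeasurable
    · refine Filter.Eventually.of_forall fun r => Filter.Eventually.of_forall fun z => ?_
      have h1 := Mr_le 0 a Ψ C hC z r
      have h2 := Mr_le 0 a Ψ C hC 0 r
      exact (norm_sub_le _ _).trans (by linarith)
    · exact integrable_const _
    · exact Filter.Eventually.of_forall fun z => Mr_invariant L Ψ hc hp hdense a z
  have h2 : ∀ r > 0, ∫ z in F, Mr 0 a Ψ r z = ∫ z in F, Ψ z := by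
    intro r hr
    unfold Mr
    rw [integral_smul]
    have hsw := integral_integral_swap (μ := volume.restrict F) (ν := volume.restrict (closedBall a r))
      (f := fun (z : Eu d × Eu m) (t : Eu d) => ee (-⟪(0 : Eu d), t⟫) * Ψ (z + (t, 0))) (by
        have : IsFiniteMeasure (volume.restrict (closedBall a r)) :=
          ⟨by simpa using measure_closedBall_lt_top⟩
        refine Integrable.of_bound (Continuous.aestronglyMeasurable ?_) C
          (Filter.Eventually.of_forall fun z => ?_)
        · have := continuous_ee
          unfold Function.uncurry
          fun_prop
        · simp only [Function.uncurry]
          rw [norm_mul, norm_ee, one_mul]; exact hC _)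
    rw [hsw]
    simp only [inner_zero_left, neg_zero, ee_zero, one_mul]
    simp_rw [integral_fd_shift L F hF Ψ hp]
    rw [setIntegral_const, Vb_center, smul_smul, inv_mul_cancel₀ (Vb_pos hr).ne', one_smul]
  have h3 : Filter.Tendsto (fun r => (ZLattice.covolume L volume)⁻¹ • (∫ z in F, Ψ z) - Mr 0 a Ψ r 0)
      Filter.atTop (nhds 0) := by
    have h4 := h1.const_smul (ZLattice.covolume L volume)⁻¹
    simp only [integral_zero, smul_zero] at h4
    refine h4.congr' ?_
    filter_upwards [Filter.eventually_gt_atTop 0] with r hr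
    rw [integral_sub (hInt r) (integrable_const _), h2 r hr, setIntegral_const, hv, smul_sub,
      smul_smul, inv_mul_cancel₀ hcov.ne', one_smul]
  have h4 := h3.const_sub ((ZLattice.covolume L volume)⁻¹ • (∫ z in F, Ψ z))
  simpa using h4

/-- If the twisted averages do not vanish in the limit, then `k` lies in the projected dual. -/
lemma Mr_char (hdense : Dense (Prod.snd '' (L : Set (Eu d × Eu m)))) (k a : Eu d)
    (hnot : ¬ Filter.Tendsto (fun r => Mr k a Ψ r 0) Filter.atTop (nhds 0)) :
    ∃ y : Eu m, ∀ p ∈ L, ∃ n : ℤ, ⟪k, p.1⟫ + ⟪y, p.2⟫ = (n : ℝ) := by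
  obtain ⟨C, hC⟩ := per_bdd L Ψ hc hp
  rw [Metric.tendsto_nhds] at hnot
  push Not at hnot
  obtain ⟨ε, hε, hfreq⟩ := hnot
  have hne : (Filter.atTop ⊓ Filter.principal {r : ℝ | ε ≤ dist (Mr k a Ψ r 0) 0}).NeBot :=
    Filter.frequently_mem_iff_neBot.1 hfreq
  let U := Ultrafilter.of (Filter.atTop ⊓ Filter.principal {r : ℝ | ε ≤ dist (Mr k a Ψ r 0) 0})
  have hU := Ultrafilter.of_le (Filter.atTop ⊓ Filter.principal {r : ℝ | ε ≤ dist (Mr k a Ψ r 0) 0})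
  have hU1 : (U : Filter ℝ) ≤ Filter.atTop := hU.trans inf_le_left
  have hU2 : ∀ᶠ r in (U : Filter ℝ), ε ≤ dist (Mr k a Ψ r 0) 0 :=
    (hU.trans inf_le_right) (Filter.mem_principal_self _)
  have hA : ∀ z, ∃ A : ℂ, Filter.Tendsto (fun r => Mr k a Ψ r z) U (nhds A) := by
    intro z
    obtain ⟨A, -, hA⟩ := (isCompact_closedBall (0:ℂ) C).ultrafilter_le_nhds
      (U.map (fun r => Mr k a Ψ r z)) (by
        rw [Filter.le_principal_iff, Ultrafilter.coe_map, Filter.mem_map]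
        refine Filter.Eventually.of_forall fun r => ?_
        show Mr k a Ψ r z ∈ closedBall (0:ℂ) C
        simpa using Mr_le k a Ψ C hC z r)
    exact ⟨A, hA⟩
  choose A hA using hA
  have hA0 : A 0 ≠ 0 := by
    have h1 : ε ≤ dist (A 0) 0 := ge_of_tendsto ((hA 0).dist tendsto_const_nhds) hU2
    intro h
    rw [h, dist_self] at h1
    linarith
  have hAc : Continuous A := by
    rw [Metric.continuous_iff]
    intro z e he
    obtain ⟨δ, hδ, h⟩ := Mr_equi L Ψ hc hp k a (e / 2) (by positivity)
    refine ⟨δ, hδ, fun z' hz => ?_⟩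
    have h1 : dist (A z') (A z) ≤ e / 2 := by
      refine le_of_tendsto ((hA z').dist (hA z)) (Filter.Eventually.of_forall fun r => ?_)
      rw [dist_eq_norm]
      exact h z' z hz r
    linarith
  have hAp : ∀ p ∈ L, A (0, p.2) = ee (-⟪k, p.1⟫) * A 0 := by
    intro p hpL
    have h1 := (Mr_shift2 L Ψ hc hp k a p hpL).mono_left hU1
    have h2 := (hA (0, p.2)).sub ((hA 0).const_mul (ee (-⟪k, p.1⟫)))
    exact sub_eq_zero.1 (tendsto_nhds_unique h2 h1)
  set η : Eu m → ℂ := fun u => A (0, u) / A 0 with hη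
  have hηc : Continuous η := by
    have : Continuous fun u : Eu m => A (0, u) := by fun_prop
    exact this.div_const _
  have hηp : ∀ p ∈ L, η p.2 = ee (-⟪k, p.1⟫) := by
    intro p hpL
    simp only [hη]
    rw [hAp p hpL]; field_simp
  have hηn : (fun u => ‖η u‖) = fun _ => (1:ℝ) := by
    refine Continuous.ext_on hdense hηc.norm continuous_const ?_
    rintro _ ⟨p, hpL, rfl⟩
    simp only
    rw [hηp p hpL, norm_ee]
  have hηm : (fun w : Eu m × Eu m => η (w.1 + w.2)) = fun w => η w.1 * η w.2 := by
    refine Continuous.ext_on (hdense.prod hdense) (by fun_prop) (by fun_prop) ?_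
    rintro ⟨_, _⟩ ⟨⟨p, hpL, rfl⟩, ⟨q, hqL, rfl⟩⟩
    simp only
    rw [hηp p hpL, hηp q hqL, ← Prod.snd_add, hηp (p + q) (L.add_mem hpL hqL), ← ee_add]
    congr 1
    simp [inner_add_right]; ring
  obtain ⟨y, hy⟩ := char_eu η hηc (fun u => congrFun hηn u) (fun u v => congrFun hηm (u, v))
  refine ⟨y, fun p hpL => ee_eq_one ?_⟩
  rw [ee_add, ← hy, hηp p hpL, mul_comm, ee_neg_mul]

end

/-- Tent function. -/
noncomputable def tent {d : ℕ} (t : Eu d) : ℝ := max 0 (1 - ‖t‖)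

lemma tent_cont {d : ℕ} : Continuous (tent (d := d)) := by unfold tent; fun_prop
lemma tent_nonneg {d : ℕ} (t : Eu d) : 0 ≤ tent t := le_max_left _ _
lemma tent_le_one {d : ℕ} (t : Eu d) : tent t ≤ 1 :=
  max_le zero_le_one (by linarith [norm_nonneg t])
lemma tent_eq_zero {d : ℕ} {t : Eu d} (h : 1 ≤ ‖t‖) : tent t = 0 :=
  max_eq_left (by linarith)
lemma tent_compact {d : ℕ} : HasCompactSupport (tent (d := d)) := by
  refine HasCompactSupport.intro (isCompact_closedBall (0 : Eu d) 1) fun t ht => tent_eq_zero ?_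
  simp at ht; exact ht.le
lemma tent_integrable {d : ℕ} : Integrable (tent (d := d)) :=
  tent_cont.integrable_of_hasCompactSupport tent_compact
/-- Integral of the tent function. -/
noncomputable def tentI (d : ℕ) : ℝ := ∫ t : Eu d, tent t
lemma tentI_pos (d : ℕ) : 0 < tentI d :=
  tent_cont.integral_pos_of_hasCompactSupport_nonneg_nonzero tent_compact tent_nonneg
    (x := 0) (by simp [tent])

/-- Smoothed indicator of a ball. -/
noncomputable def Ph {d : ℕ} (a : Eu d) (r : ℝ) (x : Eu d) : ℝ :=
  ∫ t in closedBall a r, tent (t - x)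

lemma Ph_nonneg {d : ℕ} (a : Eu d) (r : ℝ) (x : Eu d) : 0 ≤ Ph a r x :=
  integral_nonneg fun t => tent_nonneg _

lemma tent_sub_integrable {d : ℕ} (x : Eu d) : Integrable (fun t : Eu d => tent (t - x)) :=
  tent_integrable.comp_sub_right x

lemma Ph_le {d : ℕ} (a : Eu d) (r : ℝ) (x : Eu d) : Ph a r x ≤ tentI d := by
  unfold Ph tentI
  rw [← integral_sub_right_eq_self (fun t : Eu d => tent t) x]
  exact setIntegral_le_integral (tent_sub_integrable x)
    (Filter.Eventually.of_forall fun t => tent_nonneg _)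

lemma Ph_mono {d : ℕ} (a : Eu d) {r R : ℝ} (h : r ≤ R) (x : Eu d) : Ph a r x ≤ Ph a R x := by
  unfold Ph
  exact setIntegral_mono_set (tent_sub_integrable x).integrableOn
    (Filter.Eventually.of_forall fun t => tent_nonneg _)
    (closedBall_subset_closedBall h).eventuallyLE

lemma Ph_eq {d : ℕ} (a : Eu d) (r : ℝ) (x : Eu d) (h : dist x a ≤ r - 1) : Ph a r x = tentI d := by
  unfold Ph tentI
  rw [← integral_sub_right_eq_self (fun t : Eu d => tent t) x]
  refine setIntegral_eq_integral_of_forall_compl_eq_zero fun t ht => tent_eq_zero ?_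
  rw [mem_closedBall, not_le] at ht
  rw [← dist_eq_norm]
  linarith [dist_triangle t x a]

lemma Ph_zero {d : ℕ} (a : Eu d) (r : ℝ) (x : Eu d) (h : r + 1 ≤ dist x a) : Ph a r x = 0 := by
  unfold Ph
  refine setIntegral_eq_zero_of_forall_eq_zero fun t ht => tent_eq_zero ?_
  rw [mem_closedBall] at ht
  rw [← dist_eq_norm]
  linarith [dist_triangle_left x a t]

lemma Ph_compare {d : ℕ} (a : Eu d) (r : ℝ) (x : Eu d) :
    |tentI d * (closedBall a r).indicator (fun _ => (1:ℝ)) x - Ph a r x| ≤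
      Ph a (r + 2) x - Ph a (r - 2) x := by
  have hm := Ph_mono a (show r - 2 ≤ r + 2 by linarith) x
  have hI := tentI_pos d
  by_cases h1 : dist x a ≤ r - 1
  · rw [Ph_eq a r x h1, Set.indicator_of_mem (by rw [mem_closedBall]; linarith)]
    simpa using hm
  · push Not at h1
    by_cases h2 : r + 1 < dist x a
    · rw [Ph_zero a r x h2.le, Set.indicator_of_notMem (by rw [mem_closedBall]; linarith)]
      simpa using hm
    · push Not at h2
      rw [Ph_eq a (r + 2) x (by linarith), Ph_zero a (r - 2) x (by linarith), sub_zero]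
      have := Ph_le a r x
      have := Ph_nonneg a r x
      rw [abs_le]
      by_cases h3 : x ∈ closedBall a r
      · rw [Set.indicator_of_mem h3]; constructor <;> linarith
      · rw [Set.indicator_of_notMem h3]; constructor <;> linarith

lemma japanese_integrable (m : ℕ) : Integrable (fun u : Eu m => ((1 + ‖u‖) ^ (m + 1))⁻¹) := by
  have := integrable_one_add_norm (E := Eu m) (μ := volume) (r := (m:ℝ) + 1) (by simp)
  refine this.congr (Filter.Eventually.of_forall fun u => ?_)
  simp only
  rw [Real.rpow_neg (by positivity)]
  congr 1
  exact_mod_cast Real.rpow_natCast (1 + ‖u‖) (m + 1)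

section
variable {d m : ℕ} (L : Submodule ℤ (Eu d × Eu m)) [DiscreteTopology L] [IsZLattice ℝ L]
  (f : Eu m → ℂ) (K : ℝ) (hK : ∀ u, (1 + ‖u‖) ^ (m + 1) * ‖f u‖ ≤ K)
include hK

lemma sum_bound (R : ℝ) (hR : 0 ≤ R) : ∃ u : L → ℝ, Summable u ∧ ∀ (p : L), ∀ z ∈ closedBall (0 : Eu d × Eu m) R,
    tent (z.1 - (p : Eu d × Eu m).1) * ‖f ((p : Eu d × Eu m).2 - z.2)‖ ≤ u p := by
  have hK0 : 0 ≤ K := le_trans (by positivity) (hK 0)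
  obtain ⟨F, hFm, hb, hF, -, hcov⟩ := exists_fd L
  obtain ⟨D, hD0, hD⟩ := hb.subset_closedBall_lt 0 0
  set W : Eu d × Eu m → ℝ := fun x => (closedBall (0 : Eu d) (R + D + 1)).indicator (fun _ => (1:ℝ)) x.1
    * ((1 + ‖x.2‖) ^ (m + 1))⁻¹ with hW
  have hWi : Integrable W := by
    refine Integrable.mul_prod ?_ (japanese_integrable m)
    exact (integrable_indicator_iff measurableSet_closedBall).2
      (integrableOn_const measure_closedBall_lt_top.ne)
  have hW0 : ∀ x, 0 ≤ W x := fun x =>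
    mul_nonneg (Set.indicator_nonneg (fun _ _ => zero_le_one) _) (by positivity)
  set c := K * (1 + R + D) ^ (m + 1) with hc
  have hc0 : 0 ≤ c := by positivity
  have hkey : ∀ (p : L), ∀ z ∈ closedBall (0 : Eu d × Eu m) R, ∀ w ∈ F,
      tent (z.1 - (p : Eu d × Eu m).1) * ‖f ((p : Eu d × Eu m).2 - z.2)‖ ≤ c * W (p + w) := by
    rintro ⟨p, hpL⟩ z hz w hw
    simp only
    by_cases h1 : 1 ≤ ‖z.1 - p.1‖
    · rw [tent_eq_zero h1, zero_mul]; exact mul_nonneg hc0 (hW0 _)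
    push Not at h1
    have hw' : ‖w‖ ≤ D := by simpa using hD hw
    have hz' : ‖z‖ ≤ R := by simpa using hz
    have hw1 := (norm_fst_le w).trans hw'
    have hw2 := (norm_snd_le w).trans hw'
    have hz1 := (norm_fst_le z).trans hz'
    have hz2 := (norm_snd_le z).trans hz'
    have hmem : (p + w).1 ∈ closedBall (0 : Eu d) (R + D + 1) := by
      rw [mem_closedBall, dist_zero_right, Prod.fst_add]
      have e : p.1 + w.1 = z.1 - (z.1 - p.1) + w.1 := by abel
      rw [e]
      have := norm_add_le (z.1 - (z.1 - p.1)) w.1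
      have := norm_sub_le z.1 (z.1 - p.1)
      linarith
    simp only [hW]
    rw [Set.indicator_of_mem hmem, one_mul]
    have h2 : 1 + ‖(p + w).2‖ ≤ (1 + R + D) * (1 + ‖p.2 - z.2‖) := by
      have e : (p + w).2 = (p.2 - z.2) + z.2 + w.2 := by rw [Prod.snd_add]; abel
      rw [e]
      have := norm_add_le ((p.2 - z.2) + z.2) w.2
      have := norm_add_le (p.2 - z.2) z.2
      nlinarith [norm_nonneg (p.2 - z.2)]
    have h3 : (1 + ‖(p + w).2‖) ^ (m + 1) ≤ (1 + R + D) ^ (m + 1) * (1 + ‖p.2 - z.2‖) ^ (m + 1) := by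
      rw [← mul_pow]
      exact pow_le_pow_left₀ (by positivity) h2 _
    rw [← div_eq_mul_inv, le_div_iff₀ (by positivity)]
    calc tent (z.1 - p.1) * ‖f (p.2 - z.2)‖ * (1 + ‖(p + w).2‖) ^ (m + 1)
        ≤ 1 * ‖f (p.2 - z.2)‖ * ((1 + R + D) ^ (m + 1) * (1 + ‖p.2 - z.2‖) ^ (m + 1)) := by
          gcongr; exact tent_le_one _
      _ = ((1 + ‖p.2 - z.2‖) ^ (m + 1) * ‖f (p.2 - z.2)‖) * (1 + R + D) ^ (m + 1) := by ring
      _ ≤ c := by rw [hc]; gcongr; exact hK _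
  have hGi : Integrable (fun x => c * W x) := hWi.const_mul c
  have hfin := hGi.lintegral_lt_top
  rw [hF.lintegral_eq_tsum''] at hfin
  have hsum := ENNReal.summable_toReal hfin.ne
  have hcovpos : 0 < volume.real F := by rw [hcov]; exact ZLattice.covolume_pos L volume
  have hFfin : volume F ≠ ⊤ := hb.measure_lt_top.ne
  refine ⟨_, hsum.mul_left (volume.real F)⁻¹, fun p z hz => ?_⟩
  rw [le_inv_mul_iff₀ hcovpos]
  set q := tent (z.1 - (p : Eu d × Eu m).1) * ‖f ((p : Eu d × Eu m).2 - z.2)‖ with hq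
  have hq0 : 0 ≤ q := mul_nonneg (tent_nonneg _) (norm_nonneg _)
  have h1 : ENNReal.ofReal q * volume F ≤ ∫⁻ x in F, ENNReal.ofReal (c * W (p +ᵥ x)) := by
    rw [← setLIntegral_const]
    exact setLIntegral_mono' hFm fun w hw => ENNReal.ofReal_le_ofReal (hkey p z hz w hw)
  have h2 := ENNReal.toReal_mono (ENNReal.ne_top_of_tsum_ne_top hfin.ne p) h1
  rw [ENNReal.toReal_mul, ENNReal.toReal_ofReal hq0, mul_comm] at h2
  exact h2

end

/-- Terms of the periodized function. -/
noncomputable def psiT {d m : ℕ} (f : Eu m → ℂ) (k : Eu d) (p z : Eu d × Eu m) : ℂ :=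
  (tent (z.1 - p.1) : ℂ) * ee ⟪k, z.1 - p.1⟫ * f (p.2 - z.2)

lemma norm_psiT {d m : ℕ} (f : Eu m → ℂ) (k : Eu d) (p z : Eu d × Eu m) :
    ‖psiT f k p z‖ = tent (z.1 - p.1) * ‖f (p.2 - z.2)‖ := by
  unfold psiT
  rw [norm_mul, norm_mul, norm_ee, mul_one, Complex.norm_real, Real.norm_of_nonneg (tent_nonneg _)]

lemma psiT_cont {d m : ℕ} (f : Eu m → ℂ) (hf : Continuous f) (k : Eu d) (p : Eu d × Eu m) :
    Continuous (psiT f k p) := by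
  unfold psiT
  have := continuous_ee
  have := tent_cont (d := d)
  fun_prop

/-- The periodized function. -/
noncomputable def Psi {d m : ℕ} (L : Submodule ℤ (Eu d × Eu m)) (f : Eu m → ℂ) (k : Eu d)
    (z : Eu d × Eu m) : ℂ := ∑' p : L, psiT f k p z

lemma Psi_per {d m : ℕ} (L : Submodule ℤ (Eu d × Eu m)) (f : Eu m → ℂ) (k : Eu d) :
    ∀ p ∈ L, ∀ z, Psi L f k (z + p) = Psi L f k z := by
  intro q hq z
  unfold Psi
  rw [← (Equiv.subRight (⟨q, hq⟩ : L)).tsum_eq (fun p : L => psiT f k p z)]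
  congr 1
  ext p
  simp only [psiT, Equiv.subRight_apply, Submodule.coe_sub, Prod.fst_add, Prod.snd_add,
    Prod.fst_sub, Prod.snd_sub]
  have e1 : z.1 + q.1 - (p : Eu d × Eu m).1 = z.1 - ((p : Eu d × Eu m).1 - q.1) := by abel
  have e2 : (p : Eu d × Eu m).2 - (z.2 + q.2) = (p : Eu d × Eu m).2 - q.2 - z.2 := by abel
  rw [e1, e2]

section
variable {d m : ℕ} (L : Submodule ℤ (Eu d × Eu m)) [DiscreteTopology L] [IsZLattice ℝ L]
  (f : Eu m → ℂ) (hf : Continuous f) (K : ℝ) (hK : ∀ u, (1 + ‖u‖) ^ (m + 1) * ‖f u‖ ≤ K)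
include hf hK

lemma Psi_cont (k : Eu d) : Continuous (Psi L f k) := by
  rw [continuous_iff_continuousAt]
  intro z
  obtain ⟨u, hu, hb⟩ := sum_bound L f K hK (‖z‖ + 1) (by positivity)
  have : ContinuousOn (Psi L f k) (closedBall 0 (‖z‖ + 1)) :=
    continuousOn_tsum (fun p => (psiT_cont f hf k p).continuousOn) hu
      (fun p z hz => by rw [norm_psiT]; exact hb p z hz)
  refine this.continuousAt (Filter.mem_of_superset (ball_mem_nhds z one_pos) ?_)
  refine ball_subset_closedBall.trans (closedBall_subset_closedBall' ?_)
  rw [dist_zero_right]; linarith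

lemma f_integrable : Integrable f := by
  refine ((japanese_integrable m).const_mul K).mono' hf.aestronglyMeasurable
    (Filter.Eventually.of_forall fun u => ?_)
  rw [← div_eq_mul_inv, le_div_iff₀ (by positivity), mul_comm]
  exact hK u

lemma hasSum_int (k : Eu d) (X : Type*) [MeasurableSpace X] (μ : Measure X) [IsFiniteMeasure μ]
    (T : X → Eu d × Eu m) (hT : Measurable T) (R : ℝ) (hR : 0 ≤ R)
    (hTR : ∀ᵐ x ∂μ, T x ∈ closedBall 0 R) (w : X → ℂ) (hw : Measurable w) (hw1 : ∀ x, ‖w x‖ = 1) :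
    HasSum (fun p : L => ∫ x, w x * psiT f k p (T x) ∂μ) (∫ x, w x * Psi L f k (T x) ∂μ) := by
  obtain ⟨u, hu, hb⟩ := sum_bound L f K hK R hR
  have hmeas : ∀ p : L, AEStronglyMeasurable (fun x => w x * psiT f k p (T x)) μ := fun p =>
    (hw.mul ((psiT_cont f hf k p).measurable.comp hT)).aestronglyMeasurable
  have hbd : ∀ p : L, ∀ᵐ x ∂μ, ‖w x * psiT f k p (T x)‖ ≤ u p := by
    intro p
    filter_upwards [hTR] with x hx
    rw [norm_mul, hw1, one_mul, norm_psiT]; exact hb p _ hx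
  have hInt : ∀ p : L, Integrable (fun x => w x * psiT f k p (T x)) μ := fun p =>
    Integrable.of_bound (hmeas p) (u p) (hbd p)
  have h := hasSum_integral_of_summable_integral_norm hInt (by
    refine Summable.of_nonneg_of_le (fun p => integral_nonneg fun x => norm_nonneg _) (fun p => ?_)
      (hu.mul_left (μ.real Set.univ))
    have := integral_mono_ae (hInt p).norm (integrable_const (u p)) (hbd p)
    simpa using this)
  simp_rw [tsum_mul_left] at h
  exact h

lemma Psi_integral (F : Set (Eu d × Eu m)) (hFm : MeasurableSet F) (hF : IsAddFundamentalDomain L F volume)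
    (hFb : Bornology.IsBounded F) : ∫ z in F, Psi L f 0 z = (tentI d : ℂ) * ∫ u, f u := by
  obtain ⟨D, hD0, hD⟩ := hFb.subset_closedBall_lt 0 0
  have hfin : volume F < ⊤ := hFb.measure_lt_top
  have : IsFiniteMeasure (volume.restrict F) := ⟨by simpa using hfin⟩
  have h := hasSum_int L f hf K hK 0 _ (volume.restrict F) id measurable_id D hD0.le
    (ae_restrict_of_forall_mem hFm fun x hx => hD hx)
    (fun _ => 1) measurable_const (by simp)
  simp only [one_mul, id] at h
  rw [← h.tsum_eq]
  set g : Eu d × Eu m → ℂ := fun z => (tent z.1 : ℂ) * f (-z.2) with hg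
  have hgi : Integrable g := by
    refine Integrable.mul_prod (f := fun t : Eu d => (tent t : ℂ)) (g := fun u => f (-u))
      tent_integrable.ofReal ?_
    exact (f_integrable f hf K hK).comp_neg
  have h2 := hF.integral_eq_tsum' g hgi
  have h3 : ∫ z, g z = (tentI d : ℂ) * ∫ u, f u := by
    have := integral_prod_mul (μ := (volume : Measure (Eu d))) (ν := (volume : Measure (Eu m)))
      (fun t : Eu d => (tent t : ℂ)) (fun u => f (-u))
    rw [integral_neg_eq_self f] at this
    rw [hg]
    refine this.trans ?_
    congr 1
    exact integral_ofReal
  rw [← h3, h2]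
  congr 1; ext p
  congr 1; ext z
  simp only [psiT, hg, inner_zero_left, ee_zero, mul_one]
  have e : -p +ᵥ z = z - (p : Eu d × Eu m) := by
    show ((-p : L) : Eu d × Eu m) + z = _
    rw [Submodule.coe_neg]; abel
  rw [e]; simp

lemma Mr_hasSum (k a : Eu d) (r : ℝ) :
    HasSum (fun p : L => f (p : Eu d × Eu m).2 * ee (-⟪k, (p : Eu d × Eu m).1⟫)
      * (Ph a r (p : Eu d × Eu m).1 : ℂ))
      (∫ t in closedBall a r, ee (-⟪k, t⟫) * Psi L f k (0 + (t, 0))) := by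
  have : IsFiniteMeasure (volume.restrict (closedBall a r)) :=
    ⟨by simpa using measure_closedBall_lt_top⟩
  have hee := continuous_ee
  have h := hasSum_int L f hf K hK k _ (volume.restrict (closedBall a r))
    (fun t : Eu d => 0 + (t, (0 : Eu m))) (by fun_prop) (‖a‖ + |r|) (by positivity)
    (ae_restrict_of_forall_mem measurableSet_closedBall fun t ht => by
      rw [mem_closedBall, dist_zero_right, zero_add, Prod.norm_mk, norm_zero]
      have h1 : ‖t‖ ≤ ‖t - a‖ + ‖a‖ := by simpa using norm_add_le (t - a) a
      rw [mem_closedBall, dist_eq_norm] at ht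
      refine max_le ?_ (by positivity)
      linarith [le_abs_self r])
    (fun t => ee (-⟪k, t⟫)) (by fun_prop) (fun _ => norm_ee _)
  convert h using 1
  ext p
  unfold Ph
  rw [← integral_complex_ofReal, ← integral_const_mul]
  congr 1; ext t
  simp only [psiT, zero_add, sub_zero]
  have : ee (-⟪k, (p : Eu d × Eu m).1⟫) = ee (-⟪k, t⟫) * ee ⟪k, t - (p : Eu d × Eu m).1⟫ := by
    rw [← ee_add, inner_sub_right]; congr 1; ring
  rw [this]; ring

end

section
variable {d m : ℕ} (L : Submodule ℤ (Eu d × Eu m)) [DiscreteTopology L] [IsZLattice ℝ L]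
  (f : Eu m → ℂ) (hf : Continuous f) (K : ℝ) (hK : ∀ u, (1 + ‖u‖) ^ (m + 1) * ‖f u‖ ≤ K)
include hf hK

lemma Mr_Psi_zero (hdense : Dense (Prod.snd '' (L : Set (Eu d × Eu m)))) (a : Eu d) :
    Filter.Tendsto (fun r => Mr 0 a (Psi L f 0) r 0) Filter.atTop
      (nhds ((ZLattice.covolume L volume)⁻¹ • ((tentI d : ℂ) * ∫ u, f u))) := by
  obtain ⟨F, hFm, hb, hF, -, hcov⟩ := exists_fd L
  rw [← Psi_integral L f hf K hK F hFm hF hb]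
  exact Mr_tendsto_zero_freq L _ (Psi_cont L f hf K hK 0) (Psi_per L f 0) hdense a F hF hb hcov

/-- Smoothed absolute sums. -/
lemma T_hasSum (a : Eu d) (r : ℝ) :
    Summable (fun p : L => ‖f (p : Eu d × Eu m).2‖ * Ph a r (p : Eu d × Eu m).1) ∧
    (∫ t in closedBall a r, ee (-⟪(0 : Eu d), t⟫) * Psi L (fun u => ((‖f u‖ : ℝ) : ℂ)) 0 (0 + (t, 0)))
      = ((∑' p : L, ‖f (p : Eu d × Eu m).2‖ * Ph a r (p : Eu d × Eu m).1 : ℝ) : ℂ) := by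
  have h := Mr_hasSum L (fun u => ((‖f u‖ : ℝ) : ℂ)) (by fun_prop) K (by
    intro u; simpa using hK u) 0 a r
  simp only [inner_zero_left, neg_zero, ee_zero, mul_one] at h
  have h2 : Summable (fun p : L => ‖f (p : Eu d × Eu m).2‖ * Ph a r (p : Eu d × Eu m).1) := by
    rw [← Complex.summable_ofReal]
    refine h.summable.congr fun p => ?_
    push_cast; rfl
  refine ⟨h2, ?_⟩
  simp only [inner_zero_left, neg_zero, ee_zero]
  rw [← h.tsum_eq, Complex.ofReal_tsum]
  push_cast; rfl

lemma T_tendsto (hdense : Dense (Prod.snd '' (L : Set (Eu d × Eu m)))) (a : Eu d) :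
    ∃ c : ℝ, Filter.Tendsto (fun r => (Vb d r)⁻¹ *
      ∑' p : L, ‖f (p : Eu d × Eu m).2‖ * Ph a r (p : Eu d × Eu m).1) Filter.atTop (nhds c) := by
  have h := Mr_Psi_zero L (fun u => ((‖f u‖ : ℝ) : ℂ)) (by fun_prop) K (by
    intro u; simpa using hK u) hdense a
  refine ⟨_, ((Complex.continuous_re.tendsto _).comp h).congr fun r => ?_⟩
  unfold Mr
  simp only [Function.comp]
  rw [(T_hasSum L f hf K hK a r).2, Complex.real_smul, ← Complex.ofReal_mul, Complex.ofReal_re]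

lemma S_compare (k a : Eu d) (r : ℝ) :
    ‖(tentI d : ℂ) * (∑' p : L, (((closedBall a r).indicator (fun _ => (1:ℝ)) (p : Eu d × Eu m).1 : ℝ) : ℂ)
        * (f (p : Eu d × Eu m).2 * ee (-⟪k, (p : Eu d × Eu m).1⟫)))
      - ∫ t in closedBall a r, ee (-⟪k, t⟫) * Psi L f k (0 + (t, 0))‖ ≤
    (∑' p : L, ‖f (p : Eu d × Eu m).2‖ * Ph a (r + 2) (p : Eu d × Eu m).1)
      - ∑' p : L, ‖f (p : Eu d × Eu m).2‖ * Ph a (r - 2) (p : Eu d × Eu m).1 := by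
  have hX := Mr_hasSum L f hf K hK k a r
  have hT1 := (T_hasSum L f hf K hK a (r + 2)).1
  have hT2 := (T_hasSum L f hf K hK a (r - 2)).1
  have hI := tentI_pos d
  have hdiff : ∀ p : L, ‖(tentI d : ℂ) * ((((closedBall a r).indicator (fun _ => (1:ℝ)) (p : Eu d × Eu m).1 : ℝ) : ℂ)
        * (f (p : Eu d × Eu m).2 * ee (-⟪k, (p : Eu d × Eu m).1⟫)))
      - f (p : Eu d × Eu m).2 * ee (-⟪k, (p : Eu d × Eu m).1⟫) * (Ph a r (p : Eu d × Eu m).1 : ℂ)‖ ≤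
      ‖f (p : Eu d × Eu m).2‖ * Ph a (r + 2) (p : Eu d × Eu m).1 -
      ‖f (p : Eu d × Eu m).2‖ * Ph a (r - 2) (p : Eu d × Eu m).1 := by
    intro p
    have e : (tentI d : ℂ) * ((((closedBall a r).indicator (fun _ => (1:ℝ)) (p : Eu d × Eu m).1 : ℝ) : ℂ)
        * (f (p : Eu d × Eu m).2 * ee (-⟪k, (p : Eu d × Eu m).1⟫)))
      - f (p : Eu d × Eu m).2 * ee (-⟪k, (p : Eu d × Eu m).1⟫) * (Ph a r (p : Eu d × Eu m).1 : ℂ)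
      = f (p : Eu d × Eu m).2 * ee (-⟪k, (p : Eu d × Eu m).1⟫) *
        ((tentI d * (closedBall a r).indicator (fun _ => (1:ℝ)) (p : Eu d × Eu m).1
          - Ph a r (p : Eu d × Eu m).1 : ℝ) : ℂ) := by
      push_cast; ring
    rw [e, norm_mul, norm_mul, norm_ee, mul_one, Complex.norm_real, Real.norm_eq_abs, ← mul_sub]
    exact mul_le_mul_of_nonneg_left (Ph_compare a r _) (norm_nonneg _)
  have hsum : Summable (fun p : L => (tentI d : ℂ) *
      ((((closedBall a r).indicator (fun _ => (1:ℝ)) (p : Eu d × Eu m).1 : ℝ) : ℂ)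
        * (f (p : Eu d × Eu m).2 * ee (-⟪k, (p : Eu d × Eu m).1⟫)))) := by
    have h1 := Summable.of_norm_bounded (hT1.sub hT2) hdiff
    simpa using h1.add hX.summable
  rw [← tsum_mul_left, ← hX.tsum_eq, ← hsum.tsum_sub hX.summable, ← hT1.tsum_sub hT2]
  exact tsum_of_norm_bounded (hT1.sub hT2).hasSum hdiff

lemma S_tendsto (hdense : Dense (Prod.snd '' (L : Set (Eu d × Eu m)))) (k a : Eu d) (c : ℂ)
    (hc : Filter.Tendsto (fun r => Mr k a (Psi L f k) r 0) Filter.atTop (nhds ((tentI d : ℂ) * c))) :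
    Filter.Tendsto (fun r => (Vb d r)⁻¹ •
      ∑' p : L, (((closedBall a r).indicator (fun _ => (1:ℝ)) (p : Eu d × Eu m).1 : ℝ) : ℂ)
        * (f (p : Eu d × Eu m).2 * ee (-⟪k, (p : Eu d × Eu m).1⟫))) Filter.atTop (nhds c) := by
  have hI := tentI_pos d
  have hI' : (tentI d : ℂ) ≠ 0 := by exact_mod_cast hI.ne'
  obtain ⟨c0, hc0⟩ := T_tendsto L f hf K hK hdense a
  set T : ℝ → ℝ := fun r => ∑' p : L, ‖f (p : Eu d × Eu m).2‖ * Ph a r (p : Eu d × Eu m).1 with hT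
  have hsh : ∀ s : ℝ, Filter.Tendsto (fun r => (Vb d r)⁻¹ * T (r + s)) Filter.atTop (nhds c0) := by
    intro s
    have h1 := (hc0.comp (Filter.tendsto_atTop_add_const_right _ s Filter.tendsto_id)).mul (Vb_ratio d s)
    rw [mul_one] at h1
    refine h1.congr' ?_
    filter_upwards [Filter.eventually_gt_atTop (-s)] with r hr
    have := (Vb_pos (d := d) (show 0 < r + s by linarith)).ne'
    simp only [Function.comp, id]
    field_simp
    rfl
  have hd : Filter.Tendsto (fun r => (Vb d r)⁻¹ * T (r + 2) - (Vb d r)⁻¹ * T (r - 2))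
      Filter.atTop (nhds 0) := by
    have := (hsh 2).sub (hsh (-2))
    rw [sub_self] at this
    exact this
  have h1 : Filter.Tendsto (fun r => (Vb d r)⁻¹ • ((tentI d : ℂ) *
      ∑' p : L, (((closedBall a r).indicator (fun _ => (1:ℝ)) (p : Eu d × Eu m).1 : ℝ) : ℂ)
        * (f (p : Eu d × Eu m).2 * ee (-⟪k, (p : Eu d × Eu m).1⟫))) - Mr k a (Psi L f k) r 0)
      Filter.atTop (nhds 0) := by
    refine squeeze_zero_norm (fun r => ?_) hd
    unfold Mr
    rw [← smul_sub, norm_smul, norm_inv, Real.norm_of_nonneg (Vb_nonneg d r), ← mul_sub]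
    exact mul_le_mul_of_nonneg_left (S_compare L f hf K hK k a r) (inv_nonneg.2 (Vb_nonneg d r))
  have h2 := (h1.add hc).const_mul (tentI d : ℂ)⁻¹
  rw [zero_add, inv_mul_cancel_left₀ hI'] at h2
  refine h2.congr fun r => ?_
  rw [sub_add_cancel, mul_smul_comm, inv_mul_cancel_left₀ hI']

lemma S_tendsto_zero_freq (hdense : Dense (Prod.snd '' (L : Set (Eu d × Eu m)))) (a : Eu d) :
    Filter.Tendsto (fun r => (Vb d r)⁻¹ •
      ∑' p : L, (((closedBall a r).indicator (fun _ => (1:ℝ)) (p : Eu d × Eu m).1 : ℝ) : ℂ)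
        * f (p : Eu d × Eu m).2) Filter.atTop
      (nhds ((ZLattice.covolume L volume)⁻¹ • ∫ u, f u)) := by
  have h := S_tendsto L f hf K hK hdense 0 a ((ZLattice.covolume L volume)⁻¹ • ∫ u, f u) (by
    have := Mr_Psi_zero L f hf K hK hdense a
    rwa [← mul_smul_comm] at this)
  simpa only [inner_zero_left, neg_zero, ee_zero, mul_one] using h

end

lemma decay_bound {m : ℕ} (f : Eu m → ℂ) (hf : Continuous f) (C α : ℝ) (hα : 0 < α)
    (hdecay : ∀ x, ‖x‖ ^ ((m : ℝ) + 1 + α) * ‖f x‖ ≤ C) :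
    ∃ K, ∀ u, (1 + ‖u‖) ^ (m + 1) * ‖f u‖ ≤ K := by
  obtain ⟨C1, hC1⟩ := (isCompact_closedBall (0 : Eu m) 1).exists_bound_of_continuousOn hf.continuousOn
  refine ⟨max (2 ^ (m + 1) * C1) (2 ^ (m + 1) * C), fun u => ?_⟩
  by_cases hu : ‖u‖ ≤ 1
  · refine le_max_of_le_left ?_
    have h1 := hC1 u (by simpa using hu)
    have h2 : (1 + ‖u‖) ^ (m + 1) ≤ 2 ^ (m + 1) :=
      pow_le_pow_left₀ (by positivity) (by linarith) _
    exact mul_le_mul h2 h1 (norm_nonneg _) (by positivity)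
  · push Not at hu
    refine le_max_of_le_right ?_
    have h2 : (1 + ‖u‖) ^ (m + 1) ≤ 2 ^ (m + 1) * ‖u‖ ^ (m + 1) := by
      rw [← mul_pow]
      exact pow_le_pow_left₀ (by positivity) (by linarith) _
    have h3 : ‖u‖ ^ (m + 1) ≤ ‖u‖ ^ ((m : ℝ) + 1 + α) := by
      rw [← Real.rpow_natCast]
      exact Real.rpow_le_rpow_of_exponent_le hu.le (by push_cast; linarith)
    calc (1 + ‖u‖) ^ (m + 1) * ‖f u‖ ≤ 2 ^ (m + 1) * ‖u‖ ^ ((m : ℝ) + 1 + α) * ‖f u‖ := by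
          gcongr; exact h2.trans (by gcongr)
      _ = 2 ^ (m + 1) * (‖u‖ ^ ((m : ℝ) + 1 + α) * ‖f u‖) := by ring
      _ ≤ _ := by gcongr; exact hdecay u

/-- Rewriting the sum over the projected points as a sum over the lattice. -/
lemma tsum_phys {d m : ℕ} (L : Submodule ℤ (Eu d × Eu m))
    (hinj1 : Set.InjOn Prod.fst (L : Set (Eu d × Eu m)))
    (star : Eu d → Eu m) (hstar : ∀ p ∈ L, star (Prod.fst p) = Prod.snd p)
    (f : Eu m → ℂ) (k a : Eu d) (r : ℝ) :
    (∑' x : ((Prod.fst '' (L : Set (Eu d × Eu m)) ∩ closedBall a r : Set (Eu d))),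
      f (star (x : Eu d)) * Complex.exp (-(2 * Real.pi * Complex.I * ((⟪k, (x : Eu d)⟫ : ℝ) : ℂ)))) =
    ∑' p : L, (((closedBall a r).indicator (fun _ => (1:ℝ)) (p : Eu d × Eu m).1 : ℝ) : ℂ)
        * (f (p : Eu d × Eu m).2 * ee (-⟪k, (p : Eu d × Eu m).1⟫)) := by
  set g : Eu d → ℂ := fun x => f (star x) *
    Complex.exp (-(2 * Real.pi * Complex.I * ((⟪k, x⟫ : ℝ) : ℂ))) with hg
  have e1 := tsum_subtype (Prod.fst '' (L : Set (Eu d × Eu m)) ∩ closedBall a r) g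
  have e2 := tsum_subtype (Prod.fst '' (L : Set (Eu d × Eu m))) ((closedBall a r).indicator g)
  rw [Set.indicator_indicator] at e2
  have e3 := tsum_image ((closedBall a r).indicator g) hinj1
  refine e1.trans (e2.symm.trans (e3.trans ?_))
  refine tsum_congr fun p => ?_
  have hp : star (p : Eu d × Eu m).1 = (p : Eu d × Eu m).2 := hstar p p.2
  by_cases h : (p : Eu d × Eu m).1 ∈ closedBall a r
  · rw [Set.indicator_of_mem h, Set.indicator_of_mem h, hg]
    simp only
    rw [hp]; simp [ee]
  · rw [Set.indicator_of_notMem h, Set.indicator_of_notMem h]; simp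

/-- Fourier–Bohr coefficients for dense point sets: the exponential
ball averages converge, independently of a, to (1/|det L̃|)·f̂(−k*) for k in the
projected dual module L*, and to 0 otherwise. -/
theorem fourier_bohr_dense_point_sets (d m : ℕ)
    (L : Submodule ℤ (EuclideanSpace ℝ (Fin d) × EuclideanSpace ℝ (Fin m)))
    [DiscreteTopology L] [IsZLattice ℝ L]
    (hinj1 : Set.InjOn Prod.fst (L : Set (EuclideanSpace ℝ (Fin d) × EuclideanSpace ℝ (Fin m))))
    (hdense1 : Dense (physL d m L))
    (hinj2 : Set.InjOn Prod.snd (L : Set (EuclideanSpace ℝ (Fin d) × EuclideanSpace ℝ (Fin m))))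
    (hdense2 : Dense (Prod.snd '' (L : Set (EuclideanSpace ℝ (Fin d) × EuclideanSpace ℝ (Fin m)))))
    (star : EuclideanSpace ℝ (Fin d) → EuclideanSpace ℝ (Fin m))
    (hstar : ∀ p ∈ L, star (Prod.fst p) = Prod.snd p)
    (starD : EuclideanSpace ℝ (Fin d) → EuclideanSpace ℝ (Fin m))
    (hinjD : Set.InjOn Prod.fst (dualL d m L))
    (hstarD : ∀ p ∈ dualL d m L, starD (Prod.fst p) = Prod.snd p)
    (f : EuclideanSpace ℝ (Fin m) → ℂ) (hf : Continuous f)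
    (C α : ℝ) (hC : 0 < C) (hα : 0 < α)
    (hdecay : ∀ x : EuclideanSpace ℝ (Fin m), ‖x‖ ^ ((m : ℝ) + 1 + α) * ‖f x‖ ≤ C) :
    ∃ cval : EuclideanSpace ℝ (Fin d) → ℂ,
      (∀ (k a : EuclideanSpace ℝ (Fin d)),
        Filter.Tendsto
          (fun r : ℝ => (volume (closedBall (0 : EuclideanSpace ℝ (Fin d)) r)).toReal⁻¹ •
            (∑' x : ((physL d m L ∩ closedBall a r : Set (EuclideanSpace ℝ (Fin d)))),
              f (star (x : EuclideanSpace ℝ (Fin d))) *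
                Complex.exp (-(2 * Real.pi * Complex.I *
                  ((⟪k, (x : EuclideanSpace ℝ (Fin d))⟫ : ℝ) : ℂ)))))
          Filter.atTop (nhds (cval k))) ∧
      (∀ k ∈ Prod.fst '' dualL d m L,
        cval k = (ZLattice.covolume L volume)⁻¹ •
          ∫ u, Complex.exp (2 * Real.pi * Complex.I * ((⟪starD k, u⟫ : ℝ) : ℂ)) * f u) ∧
      (∀ k ∉ Prod.fst '' dualL d m L, cval k = 0) := by
  classical
  obtain ⟨K, hK⟩ := decay_bound f hf C α hα hdecay
  refine ⟨fun k => if k ∈ Prod.fst '' dualL d m L then (ZLattice.covolume L volume)⁻¹ •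
          ∫ u, Complex.exp (2 * Real.pi * Complex.I * ((⟪starD k, u⟫ : ℝ) : ℂ)) * f u else 0,
    ?_, fun k hk => if_pos hk, fun k hk => if_neg hk⟩
  intro k a
  have key : (fun r : ℝ => (volume (closedBall (0 : EuclideanSpace ℝ (Fin d)) r)).toReal⁻¹ •
            (∑' x : ((physL d m L ∩ closedBall a r : Set (EuclideanSpace ℝ (Fin d)))),
              f (star (x : EuclideanSpace ℝ (Fin d))) *
                Complex.exp (-(2 * Real.pi * Complex.I *
                  ((⟪k, (x : EuclideanSpace ℝ (Fin d))⟫ : ℝ) : ℂ))))) =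
      fun r : ℝ => (Vb d r)⁻¹ • ∑' p : L,
        (((closedBall a r).indicator (fun _ => (1:ℝ)) (p : Eu d × Eu m).1 : ℝ) : ℂ)
        * (f (p : Eu d × Eu m).2 * ee (-⟪k, (p : Eu d × Eu m).1⟫)) := by
    funext r
    have := tsum_phys L hinj1 star hstar f k a r
    exact congrArg (fun z => (Vb d r)⁻¹ • z) this
  rw [key]
  by_cases hk : k ∈ Prod.fst '' dualL d m L
  · simp only [if_pos hk]
    obtain ⟨y, hy, rfl⟩ := hk
    rw [hstarD y hy]
    have h := S_tendsto_zero_freq L (fun u => ee ⟪y.2, u⟫ * f u)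
      (by unfold ee; fun_prop) K (by
        intro u
        rw [norm_mul, norm_ee, one_mul]; exact hK u) hdense2 a
    refine h.congr fun r => ?_
    congr 1
    refine tsum_congr fun p => ?_
    congr 1
    obtain ⟨n, hn⟩ := hy p p.2
    have e : ⟪y.2, (p : Eu d × Eu m).2⟫ = (n : ℝ) + -⟪y.1, (p : Eu d × Eu m).1⟫ := by
      rw [← hn]; ring
    simp only [e]
    rw [ee_add, ee_int, one_mul, mul_comm]
  · simp only [if_neg hk]
    refine S_tendsto L f hf K hK hdense2 k a 0 ?_
    rw [mul_zero]
    by_contra hnot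
    obtain ⟨y, hy⟩ := Mr_char L (Psi L f k) (Psi_cont L f hf K hK k) (Psi_per L f k) hdense2 k a hnot
    exact hk ⟨(k, y), fun p hp => hy p hp, rfl⟩
end
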